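/- arXiv:1805.03038 — 5 statements merged into one kernel-verified Lean document; each statement's English description precedes it below -/
import Mathlib

section
/- Every positive integer is a sum of at most 10 squares of odd integers. -/
/-- Shifting `b` by a multiple of `a > 0` brings it into the interval `[-a / 2, a / 2]`. -/
theorem exists_shift_two_mul_le (a b : ℤ) (ha : 0 < a) :
    ∃ t : ℤ, 2 * (a * t + b) ≤ a ∧ -a ≤ 2 * (a * t + b) := by
  refine ⟨-((2 * b + a) / (2 * a)), ?_, ?_⟩
  · have := Int.lt_mul_ediv_self_add (x := 2 * b + a) (k := 2 * a) (by omega)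
    linarith
  · have := Int.mul_ediv_self_le (x := 2 * b + a) (k := 2 * a) (by omega)
    linarith

/-- An integral positive definite binary form of determinant `a * c - b ^ 2 = d` is properly
equivalent to one whose leading coefficient `m` satisfies `3 * m ^ 2 ≤ 4 * d`. -/
theorem exists_unimodular_reduced_binary (a b c : ℤ) (ha : 0 < a) (hd : 0 < a * c - b ^ 2) :
    ∃ p q r s : ℤ, p * s - q * r = 1 ∧
      0 < a * p ^ 2 + 2 * b * p * r + c * r ^ 2 ∧
      3 * (a * p ^ 2 + 2 * b * p * r + c * r ^ 2) ^ 2 ≤ 4 * (a * c - b ^ 2) := by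
  induction hk : a.toNat using Nat.strong_induction_on generalizing a b c with
  | _ k ih =>
    obtain ⟨t, ht₁, ht₂⟩ := exists_shift_two_mul_le a b ha
    set e := a * t + b with he
    set c' := a * t ^ 2 + 2 * b * t + c with hc'
    have hdet : a * c' - e ^ 2 = a * c - b ^ 2 := by rw [he, hc']; ring
    have hc'0 : 0 < c' := by
      by_contra! h
      nlinarith [mul_nonneg ha.le (neg_nonneg.mpr h), sq_nonneg e]
    by_cases hlt : c' < a
    · obtain ⟨p, q, r, s, h1, h2, h3⟩ :=
        ih c'.toNat (by omega) c' (-e) a hc'0 (by linarith [hdet]) rfl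
      have key : a * (t * p - r) ^ 2 + 2 * b * (t * p - r) * p + c * p ^ 2 =
          c' * p ^ 2 + 2 * (-e) * p * r + a * r ^ 2 := by rw [he, hc']; ring
      refine ⟨t * p - r, t * q - s, p, q, by linear_combination h1, by rwa [key], ?_⟩
      rw [key]
      linarith [hdet]
    · refine ⟨1, 0, 0, 1, by ring, by simpa using ha, ?_⟩
      nlinarith [mul_nonneg ha.le (sub_nonneg.mpr (not_lt.mp hlt)),
        mul_nonneg (sub_nonneg.mpr ht₁) (sub_nonneg.mpr ht₂)]

/-- Integral positive definite binary forms of determinant one only take values that are sums of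
two squares. -/
theorem binary_eq_sum_two_sq (a b c : ℤ) (ha : 0 < a) (hd : a * c - b ^ 2 = 1) (x y : ℤ) :
    ∃ u v : ℤ, a * x ^ 2 + 2 * b * x * y + c * y ^ 2 = u ^ 2 + v ^ 2 := by
  obtain ⟨p, q, r, s, h1, h2, h3⟩ := exists_unimodular_reduced_binary a b c ha (by omega)
  have hm : a * p ^ 2 + 2 * b * p * r + c * r ^ 2 = 1 := by
    rw [hd] at h3
    nlinarith
  set X := s * x - q * y with hX
  set Y := p * y - r * x with hY
  have hx : x = p * X + q * Y := by rw [hX, hY]; linear_combination (-x) * h1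
  have hy : y = r * X + s * Y := by rw [hX, hY]; linear_combination (-y) * h1
  clear_value X Y
  set e := a * p * q + b * (p * s + q * r) + c * r * s with he
  have hc : a * q ^ 2 + 2 * b * q * s + c * s ^ 2 = e ^ 2 + 1 := by
    have : (a * p ^ 2 + 2 * b * p * r + c * r ^ 2) * (a * q ^ 2 + 2 * b * q * s + c * s ^ 2) -
        e ^ 2 = (a * c - b ^ 2) * (p * s - q * r) ^ 2 := by rw [he]; ring
    rw [hm, hd, h1] at this
    linarith
  refine ⟨X + e * Y, Y, ?_⟩
  subst hx hy
  linear_combination X ^ 2 * hm + Y ^ 2 * hc - 2 * X * Y * he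

/-- Integral positive definite ternary forms of determinant one only take values that are sums of
three squares. -/
theorem ternary_eq_sum_three_sq (a b c f g h : ℤ) (ha : 0 < a) (hab : 0 < a * b - h ^ 2)
    (hd : a * b * c + 2 * f * g * h - a * f ^ 2 - b * g ^ 2 - c * h ^ 2 = 1) (x y z : ℤ) :
    ∃ u v w : ℤ, a * x ^ 2 + b * y ^ 2 + c * z ^ 2 + 2 * f * y * z + 2 * g * x * z +
      2 * h * x * y = u ^ 2 + v ^ 2 + w ^ 2 := by
  induction hk : a.toNat using Nat.strong_induction_on generalizing a b c f g h x y z with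
  | _ k ih =>
    have hG : (a * b - h ^ 2) * (a * c - g ^ 2) - (a * f - g * h) ^ 2 = a := by
      linear_combination a * hd
    obtain ⟨p, q, r, s, h1, h2, h3⟩ :=
      exists_unimodular_reduced_binary _ (a * f - g * h) (a * c - g ^ 2) hab (by rwa [hG])
    rw [hG] at h3
    obtain ⟨t, ht₁, ht₂⟩ := exists_shift_two_mul_le a (h * p + g * r) ha
    set h' := a * t + (h * p + g * r) with hh'
    set b' := a * t ^ 2 + b * p ^ 2 + c * r ^ 2 + 2 * f * p * r + 2 * g * t * r +
      2 * h * t * p with hb'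
    set m := (a * b - h ^ 2) * p ^ 2 + 2 * (a * f - g * h) * p * r + (a * c - g ^ 2) * r ^ 2
      with hm
    have hdet : a * b' - h' ^ 2 = m := by rw [hh', hb', hm]; ring
    have hb'0 : 0 < b' := by
      by_contra! hle
      nlinarith [mul_nonneg ha.le (neg_nonneg.mpr hle), sq_nonneg h']
    by_cases hlt : b' < a
    · set Y := s * y - q * z with hY
      set Z := p * z - r * y with hZ
      obtain ⟨u, v, w, huvw⟩ := ih b'.toNat (by omega) b' a (b * q ^ 2 + c * s ^ 2 + 2 * f * q * s)
        (h * q + g * s) (b * p * q + f * (p * s + q * r) + c * r * s + t * (h * q + g * s)) h'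
        hb'0 (by linarith) (by
          rw [hh', hb']
          linear_combination (p * s - q * r) ^ 2 * hd + (p * s - q * r + 1) * h1)
        Y (x - t * Y) Z rfl
      have hy : y = p * Y + q * Z := by rw [hY, hZ]; linear_combination (-y) * h1
      have hz : z = r * Y + s * Z := by rw [hY, hZ]; linear_combination (-z) * h1
      clear_value Y Z
      refine ⟨u, v, w, ?_⟩
      rw [← huvw, hh', hb', hy, hz]
      ring
    · have hle : 3 * a ^ 2 ≤ 4 * m := by
        nlinarith [mul_nonneg ha.le (sub_nonneg.mpr (not_lt.mp hlt)),
          mul_nonneg (sub_nonneg.mpr ht₁) (sub_nonneg.mpr ht₂)]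
      have ha1 : a = 1 := by
        have h4 : (3 * a ^ 2) ^ 2 ≤ (4 * m) ^ 2 := pow_le_pow_left₀ (by positivity) hle 2
        have h5 : a * (27 * a ^ 3) ≤ a * 64 := by nlinarith
        have h6 : 27 * a ^ 3 ≤ 64 := le_of_mul_le_mul_left h5 ha
        by_contra hne
        have h7 : 2 ≤ a := by omega
        have h8 : (2 : ℤ) ^ 3 ≤ a ^ 3 := pow_le_pow_left₀ (by norm_num) h7 3
        omega
      subst ha1
      obtain ⟨v, w, hvw⟩ := binary_eq_sum_two_sq _ _ _ hab hG y z
      exact ⟨x + h * y + g * z, v, w, by linear_combination hvw⟩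

/-- If `d ≡ 1 [MOD 8]`, `p ≡ 1 [MOD 4]` is prime and `2 * p ≡ -1 [MOD d]`, then `-d` is a square
modulo `2 * p`. -/
theorem exists_two_mul_prime_dvd_sq_add {p d n : ℕ} (hp : p.Prime) (hp4 : p % 4 = 1)
    (hd : d % 8 = 1) (h : 2 * p + 1 = d * n) : ∃ k : ℤ, (2 * p : ℤ) ∣ k ^ 2 + d := by
  have : Fact p.Prime := ⟨hp⟩
  have hd_odd : Odd d := Nat.odd_iff.mpr (by omega)
  have hp_odd : Odd p := Nat.odd_iff.mpr (by omega)
  have h2 : jacobiSym 2 d = 1 := by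
    rw [jacobiSym.at_two hd_odd, ZMod.χ₈_nat_mod_eight, hd]; rfl
  have h2p : jacobiSym (2 * p) d = 1 := by
    have hz : (2 * p + 1 : ℤ) = d * n := by exact_mod_cast h
    have hmod : jacobiSym (2 * p) d = jacobiSym (-1) d :=
      jacobiSym.mod_left' (Int.emod_eq_emod_iff_emod_sub_eq_zero.mpr
        (Int.emod_eq_zero_of_dvd ⟨n, by linarith⟩))
    rw [hmod, jacobiSym.at_neg_one hd_odd, ZMod.χ₄_nat_one_mod_four (by omega)]
  have hpd : jacobiSym p d = 1 := by
    rwa [jacobiSym.mul_left, h2, one_mul] at h2p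
  have hJ : jacobiSym (-d) p = 1 := by
    rw [jacobiSym.neg _ hp_odd, ZMod.χ₄_nat_one_mod_four hp4, one_mul,
      jacobiSym.quadratic_reciprocity_one_mod_four' hd_odd hp4, hpd]
  obtain ⟨y, hy⟩ := ZMod.isSquare_of_jacobiSym_eq_one hJ
  obtain ⟨k, rfl⟩ := ZMod.intCast_surjective y
  have hk : (p : ℤ) ∣ k ^ 2 + d := by
    rw [← ZMod.intCast_zmod_eq_zero_iff_dvd]
    push_cast at hy ⊢
    linear_combination -hy
  have hcop : IsCoprime (2 : ℤ) p := by
    rw [Int.isCoprime_iff_gcd_eq_one]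
    exact_mod_cast (Nat.coprime_two_left.mpr hp_odd)
  have hd_odd' : Odd (d : ℤ) := by exact_mod_cast hd_odd
  have hp_odd' : Odd (p : ℤ) := by exact_mod_cast hp_odd
  rcases Int.even_or_odd k with hk2 | hk2
  · refine ⟨k + p, hcop.mul_dvd ?_ ?_⟩
    · exact (((hk2.add_odd hp_odd').pow).add_odd hd_odd').two_dvd
    · have : (k + p) ^ 2 + d = k ^ 2 + d + p * (2 * k + p) := by ring
      rw [this]
      exact dvd_add hk (dvd_mul_right _ _)
  · exact ⟨k, hcop.mul_dvd ((hk2.pow).add_odd hd_odd').two_dvd hk⟩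

/-- Every natural number congruent to `3` modulo `8` is a sum of three squares. -/
theorem eq_sum_three_sq_of_mod_eight_eq_three {n : ℕ} (hn : n % 8 = 3) :
    ∃ u v w : ℤ, (n : ℤ) = u ^ 2 + v ^ 2 + w ^ 2 := by
  obtain ⟨m, rfl⟩ : ∃ m, n = 8 * m + 3 := ⟨n / 8, by omega⟩
  have hcop : (4 * m + 1).Coprime (4 * (8 * m + 3)) := by
    apply Nat.Coprime.mul_right
    · simp
    · rw [show 8 * m + 3 = 1 + (4 * m + 1) * 2 by ring]
      simp
  obtain ⟨p, hgt, hp, hmod⟩ := Nat.forall_exists_prime_gt_and_modEq (4 * m + 1) (by omega) hcop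
  obtain ⟨j, hj⟩ := (Nat.modEq_iff_dvd' hgt.le).mp hmod.symm
  have hpj : p = 4 * ((8 * m + 3) * j) + (4 * m + 1) := by
    rw [← mul_assoc, ← hj]
    omega
  have hdn : 2 * p + 1 = (8 * j + 1) * (8 * m + 3) := by rw [hpj]; ring
  obtain ⟨k, a, hk⟩ := exists_two_mul_prime_dvd_sq_add hp (by omega) (by omega) hdn
  zify at hdn
  push_cast at hk
  have hp0 : (0 : ℤ) < p := by exact_mod_cast hp.pos
  have ha : 0 < a := by
    by_contra! hle
    nlinarith [mul_nonneg hp0.le (neg_nonneg.mpr hle), sq_nonneg k]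
  obtain ⟨u, v, w, huvw⟩ := ternary_eq_sum_three_sq a (2 * p) (8 * m + 3) 0 1 k ha
    (by linarith) (by linear_combination (-(8 * m + 3 : ℤ)) * hk - hdn) 0 0 1
  exact ⟨u, v, w, by push_cast; linarith⟩

/-- Every natural number congruent to `3` modulo `8` is a sum of three odd squares. -/
theorem eq_sum_three_odd_sq_of_mod_eight_eq_three {n : ℕ} (hn : n % 8 = 3) :
    ∃ u v w : ℤ, Odd u ∧ Odd v ∧ Odd w ∧ (n : ℤ) = u ^ 2 + v ^ 2 + w ^ 2 := by
  obtain ⟨u, v, w, h⟩ := eq_sum_three_sq_of_mod_eight_eq_three hn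
  have hsq (x : ℤ) : (Odd x ∧ x ^ 2 % 8 = 1) ∨ x ^ 2 % 8 = 0 ∨ x ^ 2 % 8 = 4 := by
    have : x % 8 = 0 ∨ x % 8 = 1 ∨ x % 8 = 2 ∨ x % 8 = 3 ∨ x % 8 = 4 ∨ x % 8 = 5 ∨ x % 8 = 6 ∨
      x % 8 = 7 := by omega
    rw [Int.odd_iff]
    rcases this with h | h | h | h | h | h | h | h <;> simp [pow_two, Int.mul_emod, h] <;> omega
  refine ⟨u, v, w, ?_, ?_, ?_, h⟩ <;>
    rcases hsq u with hu | hu <;> rcases hsq v with hv | hv <;> rcases hsq w with hw | hw <;>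
    first | exact hu.1 | exact hv.1 | exact hw.1 | omega

theorem sum_of_at_most_ten_odd_squares (n : ℕ) (hn : 0 < n) :
    ∃ k : ℕ, 1 ≤ k ∧ k ≤ 10 ∧
      ∃ x : Fin k → ℤ, (∀ i, Odd (x i)) ∧ (n : ℤ) = ∑ i, (x i) ^ 2 := by
  by_cases h : n ≤ 2
  · exact ⟨n, hn, by omega, fun _ => 1, by simp, by simp⟩
  · obtain ⟨m, j, hj, rfl⟩ : ∃ m j, j ≤ 7 ∧ n = 8 * m + 3 + j :=
      ⟨(n - 3) / 8, (n - 3) % 8, by omega, by omega⟩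
    obtain ⟨u, v, w, hu, hv, hw, huvw⟩ :=
      eq_sum_three_odd_sq_of_mod_eight_eq_three (n := 8 * m + 3) (by omega)
    refine ⟨j + 3, by omega, by omega, Fin.cons u (Fin.cons v (Fin.cons w fun _ => 1)), ?_, ?_⟩
    · simp [Fin.forall_fin_succ, hu, hv, hw]
    · push_cast at huvw ⊢
      simp only [Fin.sum_univ_succ, Fin.cons_zero, Fin.cons_succ, one_pow, Finset.sum_const,
        Finset.card_univ, Fintype.card_fin, nsmul_eq_mul, mul_one]
      linarith
end

section
/- Every positive integer n with n ≡ 5 (mod 6) is represented by Ramanujan's ternary quadratic form x^2 + y^2 + 10z^2, i.e., the equation n = x^2 + y^2 + 10z^2 has an integer solution. -/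
/-- The Davenport–Cassels descent for three squares: an integer that is a sum of three rational
squares is a sum of three integer squares. -/
theorem sum_three_sq_of_mul_sq (m : ℤ) (t : ℕ) (ht : 0 < t) (x y z : ℤ)
    (h : m * (t : ℤ) ^ 2 = x ^ 2 + y ^ 2 + z ^ 2) :
    ∃ a b c : ℤ, m = a ^ 2 + b ^ 2 + c ^ 2 := by
  induction t using Nat.strong_induction_on generalizing x y z with
  | _ t ih =>
  have htz : (0 : ℤ) < t := by exact_mod_cast ht
  have round (u : ℤ) : ∃ a : ℤ, 4 * (u - a * t) ^ 2 ≤ (t : ℤ) ^ 2 := by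
    refine ⟨(2 * u + t) / (2 * t), ?_⟩
    have h₁ := Int.emod_add_mul_ediv (2 * u + t) (2 * t)
    have h₂ := Int.emod_nonneg (2 * u + t) (by positivity : (2 * t : ℤ) ≠ 0)
    have h₃ := Int.emod_lt_of_pos (2 * u + t) (by positivity : (0 : ℤ) < 2 * t)
    nlinarith
  obtain ⟨a, ha⟩ := round x
  obtain ⟨b, hb⟩ := round y
  obtain ⟨c, hc⟩ := round z
  set t' : ℤ := (a ^ 2 + b ^ 2 + c ^ 2 + m) * t - 2 * (a * x + b * y + c * z) with ht'
  have hprod : (x - a * t) ^ 2 + (y - b * t) ^ 2 + (z - c * t) ^ 2 = t * t' := by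
    rw [ht']
    linear_combination -h
  have hnonneg : 0 ≤ t' := by
    by_contra hneg
    nlinarith [sq_nonneg (x - a * t), sq_nonneg (y - b * t), sq_nonneg (z - c * t)]
  have hlt : t' < t := by
    by_contra hge
    nlinarith
  rcases hnonneg.eq_or_lt with hzero | hpos
  · rw [← hzero, mul_zero] at hprod
    have hx : x - a * t = 0 := by
      nlinarith [sq_nonneg (x - a * t), sq_nonneg (y - b * t), sq_nonneg (z - c * t)]
    have hy : y - b * t = 0 := by
      nlinarith [sq_nonneg (x - a * t), sq_nonneg (y - b * t), sq_nonneg (z - c * t)]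
    have hz : z - c * t = 0 := by
      nlinarith [sq_nonneg (x - a * t), sq_nonneg (y - b * t), sq_nonneg (z - c * t)]
    refine ⟨a, b, c, mul_right_cancel₀ (pow_ne_zero 2 htz.ne') ?_⟩
    rw [h, sub_eq_zero.mp hx, sub_eq_zero.mp hy, sub_eq_zero.mp hz]
    ring
  · obtain ⟨k, hk⟩ := Int.eq_ofNat_of_zero_le hnonneg
    set α : ℤ := a ^ 2 + b ^ 2 + c ^ 2 - m with hα
    set β : ℤ := 2 * (m * t - (a * x + b * y + c * z)) with hβ
    refine ih k (by omega) (by omega) (α * x + β * a) (α * y + β * b) (α * z + β * c) ?_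
    rw [← hk, ht', hα, hβ]
    linear_combination (a ^ 2 + b ^ 2 + c ^ 2 - m) ^ 2 * h

/-- For `m ≡ 2 (mod 4)` there is a prime `p ≡ 1 (mod 4)` with `p ≡ -1 (mod m)` modulo which `m` is
a square. -/
theorem exists_prime_isSquare_of_mod_four_eq_two (m : ℕ) (hm : m % 4 = 2) :
    ∃ p : ℕ, p.Prime ∧ p % 4 = 1 ∧ m ∣ p + 1 ∧ IsSquare (m : ZMod p) := by
  have hcop : (m - 1).Coprime (4 * m) := by
    obtain ⟨k, rfl⟩ : ∃ k, m = k + 1 := ⟨m - 1, by omega⟩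
    have hodd : Nat.Coprime k 2 := by
      rw [Nat.coprime_two_right, Nat.odd_iff]
      omega
    have h₄ : Nat.Coprime k (2 ^ 2) := hodd.pow_right 2
    simpa using h₄.mul_right (by simp : Nat.Coprime k (k + 1))
  obtain ⟨p, hgt, hp, hmod⟩ :=
    Nat.forall_exists_prime_gt_and_modEq (4 * m) (by omega : 4 * m ≠ 0) hcop
  obtain ⟨v, hv⟩ := (Nat.modEq_iff_dvd' (by omega)).mp hmod.symm
  have hd : p + 1 = m * (4 * v + 1) := by
    have : p = 4 * m * v + (m - 1) := by omega
    rw [this, add_assoc, Nat.sub_add_cancel (by omega)]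
    ring
  have hp₄ : p % 4 = 1 := by
    have : p + 1 = 4 * (m * v) + m := by rw [hd]; ring
    omega
  have : Fact p.Prime := ⟨hp⟩
  refine ⟨p, hp, hp₄, ⟨_, hd⟩, ?_⟩
  set d := 4 * v + 1 with hd_def
  have hd_odd : Odd d := ⟨2 * v, by omega⟩
  have hdz : (p : ℤ) + 1 = m * d := by exact_mod_cast hd
  have hjd : jacobiSym d p = 1 := by
    rw [jacobiSym.quadratic_reciprocity_one_mod_four (by omega) (hp.odd_of_ne_two (by omega)),
      jacobiSym.mod_left' (Int.modEq_iff_dvd.mpr ⟨-m, by linear_combination -hdz⟩ : p ≡ -1 [ZMOD d]),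
      jacobiSym.at_neg_one hd_odd, ZMod.χ₄_nat_one_mod_four (by omega)]
  have hmd : jacobiSym (m * d : ℤ) p = 1 := by
    rw [jacobiSym.mod_left'
      (Int.modEq_iff_dvd.mpr ⟨-1, by linear_combination hdz⟩ : (m * d : ℤ) ≡ 1 [ZMOD p]),
      jacobiSym.one_left]
  rw [jacobiSym.mul_left, hjd, mul_one] at hmd
  simpa using ZMod.isSquare_of_jacobiSym_eq_one hmd

/-- A box with more than `p * m` points contains two points whose difference lies in the lattice
`x ≡ s z (mod p)`, `x ≡ y (mod m)`. -/
theorem exists_small_lattice_vector (p m : ℕ) (hp : 0 < p) (hm : 0 < m) (s : ℤ) :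
    ∃ x y z : ℤ, (x ≠ 0 ∨ y ≠ 0 ∨ z ≠ 0) ∧ x ^ 2 ≤ p * m ∧ y ^ 2 ≤ m ∧ z ^ 2 ≤ p ∧
      (p : ℤ) ∣ x - s * z ∧ (m : ℤ) ∣ x - y := by
  have : NeZero p := ⟨hp.ne'⟩
  have : NeZero m := ⟨hm.ne'⟩
  set A := Nat.sqrt (p * m)
  set B := Nat.sqrt m
  set C := Nat.sqrt p
  let box : Finset (ℕ × ℕ × ℕ) :=
    Finset.range (A + 1) ×ˢ Finset.range (B + 1) ×ˢ Finset.range (C + 1)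
  let φ : ℕ × ℕ × ℕ → ZMod p × ZMod m := fun v =>
    ((v.1 : ZMod p) - (s : ZMod p) * (v.2.2 : ZMod p), (v.1 : ZMod m) - (v.2.1 : ZMod m))
  have hcard : (Finset.univ : Finset (ZMod p × ZMod m)).card < box.card := by
    simp only [box, Finset.card_univ, Fintype.card_prod, ZMod.card, Finset.card_product,
      Finset.card_range]
    have h₁ : p * m < (A + 1) ^ 2 := Nat.lt_succ_sqrt' _
    have h₂ : m < (B + 1) ^ 2 := Nat.lt_succ_sqrt' _
    have h₃ : p < (C + 1) ^ 2 := Nat.lt_succ_sqrt' _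
    refine lt_of_pow_lt_pow_left₀ 2 (Nat.zero_le _) ?_
    calc (p * m) ^ 2 = (p * m) * (m * p) := by ring
      _ < (A + 1) ^ 2 * ((B + 1) ^ 2 * (C + 1) ^ 2) := by gcongr
      _ = ((A + 1) * ((B + 1) * (C + 1))) ^ 2 := by ring
  obtain ⟨⟨x₁, y₁, z₁⟩, hv₁, ⟨x₂, y₂, z₂⟩, hv₂, hne, heq⟩ :=
    Finset.exists_ne_map_eq_of_card_lt_of_maps_to hcard (f := φ) (fun _ _ => Finset.mem_univ _)
  simp only [box, Finset.mem_product, Finset.mem_range, Nat.lt_succ_iff] at hv₁ hv₂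
  simp only [φ, Prod.mk.injEq] at heq
  have bound {u v R N : ℕ} (hu : u ≤ R) (hv : v ≤ R) (hR : R ^ 2 ≤ N) :
      ((u : ℤ) - v) ^ 2 ≤ N := by
    have : ((u : ℤ) - v) ^ 2 ≤ (R : ℤ) ^ 2 := sq_le_sq' (by omega) (by omega)
    exact this.trans (by exact_mod_cast hR)
  refine ⟨x₁ - x₂, y₁ - y₂, z₁ - z₂, ?_, ?_, bound hv₁.2.1 hv₂.2.1 (Nat.sqrt_le' m),
    bound hv₁.2.2 hv₂.2.2 (Nat.sqrt_le' p), ?_, ?_⟩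
  · by_contra! hzero
    apply hne
    ext <;> simp only <;> omega
  · exact_mod_cast bound hv₁.1 hv₂.1 (Nat.sqrt_le' (p * m))
  · rw [← ZMod.intCast_zmod_eq_zero_iff_dvd]
    push_cast
    linear_combination heq.1
  · rw [← ZMod.intCast_zmod_eq_zero_iff_dvd]
    push_cast
    linear_combination heq.2

/-- A case of Legendre's theorem on `x² + p y² = m t²`. -/
theorem exists_mul_sq_eq_sq_add_prime_mul_sq (p m : ℕ) (hp : p.Prime) (hm : 0 < m)
    (hdvd : m ∣ p + 1) (hsq : IsSquare (m : ZMod p)) :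
    ∃ t : ℕ, 0 < t ∧ ∃ x y : ℤ, (m : ℤ) * (t : ℤ) ^ 2 = x ^ 2 + p * y ^ 2 := by
  obtain ⟨r, hr⟩ := hsq
  obtain ⟨s, rfl⟩ := ZMod.intCast_surjective r
  have hs : (p : ℤ) ∣ m - s * s := by
    rw [← ZMod.intCast_zmod_eq_zero_iff_dvd]
    push_cast
    linear_combination hr
  obtain ⟨x, y, z, hne, hx, hy, hz, hxz, hxy⟩ := exists_small_lattice_vector p m hp.pos hm s
  have hpz : (0 : ℤ) < p := by exact_mod_cast hp.pos
  have hmz : (0 : ℤ) < m := by exact_mod_cast hm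
  have hcop : IsCoprime (p : ℤ) m := by
    obtain ⟨d, hd⟩ := hdvd
    have : (p : ℤ) + 1 = m * d := by exact_mod_cast hd
    exact ⟨-1, d, by linear_combination -this⟩
  have hprime : Prime (p : ℤ) := Nat.prime_iff_prime_int.mp hp
  have hF : (p * m : ℤ) ∣ x ^ 2 + p * y ^ 2 - m * z ^ 2 := by
    refine hcop.mul_dvd ?_ ?_
    · have : x ^ 2 + p * y ^ 2 - m * z ^ 2 =
          (x - s * z) * (x + s * z) + p * y ^ 2 - (m - s * s) * z ^ 2 := by ring
      rw [this]
      exact ((hxz.mul_right _).add (dvd_mul_right _ _)).sub (hs.mul_right _)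
    · have hdvd' : (m : ℤ) ∣ p + 1 := by exact_mod_cast hdvd
      have : x ^ 2 + p * y ^ 2 - m * z ^ 2 =
          (x - y) * (x + y) + (p + 1) * y ^ 2 - m * z ^ 2 := by ring
      rw [this]
      exact ((hxy.mul_right _).add (hdvd'.mul_right _)).sub (dvd_mul_right _ _)
  have hz_ne : z ^ 2 ≠ p := fun h => hprime.not_isSquare ⟨z, by rw [← h, sq]⟩
  have hx_ne : x ^ 2 ≠ p * m := by
    intro h
    obtain ⟨k, rfl⟩ := hprime.dvd_of_dvd_pow (Dvd.intro _ h.symm)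
    have hk : (m : ℤ) = p * k ^ 2 := by
      apply mul_left_cancel₀ hpz.ne'
      linear_combination -h
    exact hprime.not_isUnit (hcop.isUnit_of_dvd' dvd_rfl (Dvd.intro _ hk.symm))
  obtain ⟨k, hk⟩ := hF
  have hpm : (0 : ℤ) < p * m := mul_pos hpz hmz
  have hlo : -1 < k := by
    have : z ^ 2 < p := lt_of_le_of_ne hz hz_ne
    by_contra hk'
    nlinarith [sq_nonneg x, sq_nonneg y]
  have hhi : k < 2 := by
    have : x ^ 2 < p * m := lt_of_le_of_ne hx hx_ne
    by_contra hk'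
    nlinarith [sq_nonneg z]
  obtain rfl | rfl : k = 0 ∨ k = 1 := by omega
  · refine ⟨z.natAbs, ?_, x, y, ?_⟩
    · rw [Int.natAbs_pos]
      rintro rfl
      have hx0 : x = 0 := by nlinarith [sq_nonneg x, sq_nonneg y]
      have hy0 : y = 0 := by
        subst hx0
        have : (p : ℤ) * y ^ 2 = 0 := by linear_combination hk
        simpa [hp.ne_zero] using this
      simp [hx0, hy0] at hne
    · rw [Int.natCast_natAbs, sq_abs]
      linear_combination -hk
  · refine ⟨z.natAbs ^ 2 + p, by have := hp.pos; positivity, x * z + p * y, x - y * z, ?_⟩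
    push_cast
    rw [sq_abs]
    linear_combination -(z ^ 2 + p) * hk

theorem sum_three_sq_of_mod_four_eq_two (m : ℕ) (hm : m % 4 = 2) :
    ∃ a b c : ℤ, (m : ℤ) = a ^ 2 + b ^ 2 + c ^ 2 := by
  obtain ⟨p, hp, hp₄, hdvd, hsq⟩ := exists_prime_isSquare_of_mod_four_eq_two m hm
  have : Fact p.Prime := ⟨hp⟩
  obtain ⟨t, ht, x, y, h⟩ :=
    exists_mul_sq_eq_sq_add_prime_mul_sq p m hp (by omega) hdvd hsq
  obtain ⟨u, v, huv⟩ := Nat.Prime.sq_add_sq (p := p) (by omega)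
  have huv' : (u : ℤ) ^ 2 + (v : ℤ) ^ 2 = p := by exact_mod_cast huv
  refine sum_three_sq_of_mul_sq m t ht x (u * y) (v * y) ?_
  linear_combination h - y ^ 2 * huv'

/-- A nonzero value of `2y² + 2yz + 3z²` is attained at a vector not divisible by `3`. -/
theorem exists_not_three_dvd_binary (y z : ℤ) (hne : y ≠ 0 ∨ z ≠ 0) :
    ∃ u v : ℤ, ¬(3 ∣ u ∧ 3 ∣ v) ∧
      2 * u ^ 2 + 2 * u * v + 3 * v ^ 2 = 2 * y ^ 2 + 2 * y * z + 3 * z ^ 2 := by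
  induction hN : y.natAbs + z.natAbs using Nat.strong_induction_on generalizing y z with
  | _ N ih =>
  by_cases hdvd : 3 ∣ y ∧ 3 ∣ z
  · obtain ⟨⟨y, rfl⟩, ⟨z, rfl⟩⟩ := hdvd
    obtain ⟨u, v, huv, heq⟩ := ih (y.natAbs + z.natAbs) (by omega) y z (by omega) rfl
    by_cases hu : 3 ∣ u
    · exact ⟨-u - 4 * v, -2 * u + v, by omega, by linear_combination 9 * heq⟩
    · exact ⟨3 * u, -2 * u - 3 * v, by omega, by linear_combination 9 * heq⟩
  · exact ⟨y, z, hdvd, rfl⟩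

/-- On integers `≡ 5 (mod 6)`, everything represented by the second class
`2x² + 2y² + 2yz + 3z²` of the genus is represented by `x² + y² + 10z²`. -/
theorem ramanujan_rep_of_genus_mate (n x y z : ℤ) (hn : n % 6 = 5)
    (h : n = 2 * x ^ 2 + 2 * y ^ 2 + 2 * y * z + 3 * z ^ 2) :
    ∃ a b c : ℤ, n = a ^ 2 + b ^ 2 + 10 * c ^ 2 := by
  have hne : y ≠ 0 ∨ z ≠ 0 := by
    by_contra! hzero
    rw [hzero.1, hzero.2] at h
    omega
  obtain ⟨u, v, huv, heq⟩ := exists_not_three_dvd_binary y z hne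
  replace h : n = 2 * x ^ 2 + 2 * u ^ 2 + 2 * u * v + 3 * v ^ 2 := by linear_combination h - heq
  have hcong : (x - v) % 3 = 0 ∨ (x + v) % 3 = 0 := by
    have hn₃ : (2 * x ^ 2 + 2 * u ^ 2 + 2 * u * v + 3 * v ^ 2) % 3 = 2 := by omega
    have hx : x % 3 = 0 ∨ x % 3 = 1 ∨ x % 3 = 2 := by omega
    have hu : u % 3 = 0 ∨ u % 3 = 1 ∨ u % 3 = 2 := by omega
    have hv : v % 3 = 0 ∨ v % 3 = 1 ∨ v % 3 = 2 := by omega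
    rcases hx with hx | hx | hx <;> rcases hu with hu | hu | hu <;>
      rcases hv with hv | hv | hv <;> first
      | omega
      | (exfalso; simp [pow_two, Int.add_emod, Int.mul_emod, hx, hu, hv] at hn₃)
  rcases hcong with hc | hc
  · obtain ⟨k, hk⟩ := Int.dvd_of_emod_eq_zero hc
    obtain rfl : x = v + 3 * k := by linear_combination hk
    exact ⟨2 * v + 2 * k + u, v + 2 * k - u, k, by rw [h]; ring⟩
  · obtain ⟨k, hk⟩ := Int.dvd_of_emod_eq_zero hc
    obtain rfl : x = 3 * k - v := by linear_combination hk
    exact ⟨v - 2 * k - u, 2 * v - 2 * k + u, k, by rw [h]; ring⟩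

theorem five_dvd_two_mul_add_or_sub (b c : ℤ) (h : 5 ∣ b ^ 2 + c ^ 2) :
    5 ∣ c + 2 * b ∨ 5 ∣ c - 2 * b := by
  have hprime : Prime (5 : ℤ) := by norm_num
  apply hprime.dvd_or_dvd
  have : (c + 2 * b) * (c - 2 * b) = b ^ 2 + c ^ 2 - 5 * b ^ 2 := by ring
  rw [this]
  exact h.sub (dvd_mul_right _ _)

theorem ramanujan_rep_of_ten_dvd (n a b c : ℤ) (ha : a % 2 = 1) (hb : b % 2 = 1)
    (hc : c % 2 = 0) (hc₅ : 5 ∣ c) (h : 10 * n = a ^ 2 + b ^ 2 + c ^ 2) :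
    ∃ x y z : ℤ, n = x ^ 2 + y ^ 2 + 10 * z ^ 2 := by
  obtain ⟨z, rfl⟩ : 10 ∣ c := by omega
  have hab : 5 ∣ a ^ 2 + b ^ 2 := ⟨2 * n - 20 * z ^ 2, by linear_combination -h⟩
  wlog hdvd : 5 ∣ b - 2 * a generalizing a
  · exact this (-a) (by omega) (by rwa [neg_sq]) (by rwa [neg_sq])
      (by have := five_dvd_two_mul_add_or_sub a b hab; omega)
  obtain ⟨x, hx⟩ : 10 ∣ 3 * a + b := by omega
  obtain ⟨y, hy⟩ : 10 ∣ a - 3 * b := by omega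
  refine ⟨x, y, z, ?_⟩
  obtain rfl : a = 3 * x + y := by omega
  obtain rfl : b = x - 3 * y := by omega
  linarith

theorem genus_mate_rep_of_five_dvd_odd (n a b c : ℤ) (ha : a % 2 = 1) (hb : b % 2 = 1)
    (hc : c % 2 = 0) (ha₅ : 5 ∣ a) (h : 10 * n = a ^ 2 + b ^ 2 + c ^ 2) :
    ∃ x y z : ℤ, n = 2 * x ^ 2 + 2 * y ^ 2 + 2 * y * z + 3 * z ^ 2 := by
  obtain ⟨z, rfl⟩ := ha₅
  have hbc : 5 ∣ b ^ 2 + c ^ 2 := ⟨2 * n - 5 * z ^ 2, by linear_combination -h⟩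
  wlog hdvd : 5 ∣ c + 2 * b generalizing b
  · exact this (-b) (by omega) (by rwa [neg_sq]) (by rwa [neg_sq])
      (by have := five_dvd_two_mul_add_or_sub b c hbc; omega)
  obtain ⟨x, hx⟩ : 10 ∣ c + 2 * b := by omega
  obtain ⟨t, ht⟩ : 5 ∣ 2 * c - b := by omega
  obtain ⟨y, hy⟩ : 2 ∣ t - z := by omega
  refine ⟨x, y, z, ?_⟩
  obtain rfl : t = z + 2 * y := by omega
  obtain rfl : c = 2 * x + 2 * (z + 2 * y) := by omega
  obtain rfl : b = 4 * x - (z + 2 * y) := by omega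
  linarith

theorem ramanujan_rep_of_odd_odd_even (n a b c : ℤ) (hn : n % 6 = 5) (ha : a % 2 = 1)
    (hb : b % 2 = 1) (hc : c % 2 = 0) (h : 10 * n = a ^ 2 + b ^ 2 + c ^ 2) :
    ∃ x y z : ℤ, n = x ^ 2 + y ^ 2 + 10 * z ^ 2 := by
  have hfive : 5 ∣ a ∨ 5 ∣ b ∨ 5 ∣ c := by
    by_contra! hnd
    have sq_mod (u : ℤ) (hu : ¬5 ∣ u) : u ^ 2 % 5 = 1 ∨ u ^ 2 % 5 = 4 := by
      have : u % 5 = 1 ∨ u % 5 = 2 ∨ u % 5 = 3 ∨ u % 5 = 4 := by omega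
      rcases this with hu | hu | hu | hu <;> simp [pow_two, Int.mul_emod, hu]
    have := sq_mod a hnd.1
    have := sq_mod b hnd.2.1
    have := sq_mod c hnd.2.2
    omega
  rcases hfive with h₅ | h₅ | h₅
  · obtain ⟨x, y, z, hg⟩ := genus_mate_rep_of_five_dvd_odd n a b c ha hb hc h₅ h
    exact ramanujan_rep_of_genus_mate n x y z hn hg
  · obtain ⟨x, y, z, hg⟩ :=
      genus_mate_rep_of_five_dvd_odd n b a c hb ha hc h₅ (by linear_combination h)
    exact ramanujan_rep_of_genus_mate n x y z hn hg
  · exact ramanujan_rep_of_ten_dvd n a b c ha hb hc h₅ h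

theorem five_mod_six_rep_ramanujan (n : ℕ) (hn : 0 < n) (h : n % 6 = 5) :
    ∃ x y z : ℤ, (n : ℤ) = x ^ 2 + y ^ 2 + 10 * z ^ 2 := by
  obtain ⟨a, b, c, habc⟩ := sum_three_sq_of_mod_four_eq_two (10 * n) (by omega)
  push_cast at habc
  have hn₆ : (n : ℤ) % 6 = 5 := by omega
  have sq_mod (u : ℤ) : u % 2 = 0 ∧ u ^ 2 % 4 = 0 ∨ u % 2 = 1 ∧ u ^ 2 % 4 = 1 := by
    rcases Int.even_or_odd' u with ⟨k, rfl | rfl⟩ <;> ring_nf <;> omega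
  rcases sq_mod a with ha | ha <;> rcases sq_mod b with hb | hb <;>
    rcases sq_mod c with hc | hc <;> first
    | (exfalso; omega)
    | exact ramanujan_rep_of_odd_odd_even n a b c hn₆ ha.1 hb.1 hc.1 habc
    | exact ramanujan_rep_of_odd_odd_even n a c b hn₆ ha.1 hc.1 hb.1 (by linear_combination habc)
    | exact ramanujan_rep_of_odd_odd_even n b c a hn₆ hb.1 hc.1 ha.1 (by linear_combination habc)
end

section
/- For any prime p ≠ 2, 3, 5, 17 and any positive integer n represented by f = ⟨1,1,10⟩ such that p^2·n is represented by f, we have r(p^2·n, f) > r(n, f). -/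
/-- The number of representations of m by Ramanujan's ternary form x² + y² + 10z². -/
noncomputable def ramanujanRepCount (m : ℤ) : ℕ :=
  Set.ncard {v : ℤ × ℤ × ℤ | v.1 ^ 2 + v.2.1 ^ 2 + 10 * v.2.2 ^ 2 = m}

/-! ### Reduction of positive definite binary and ternary integral forms -/

/-- An integer can be translated by a multiple of `a > 0` into `[-a/2, a/2]`. -/
theorem exists_two_mul_abs_sub_mul_le (a b : ℤ) (ha : 0 < a) :
    ∃ k : ℤ, -a ≤ 2 * (b - k * a) ∧ 2 * (b - k * a) ≤ a := by
  refine ⟨(2 * b + a) / (2 * a), ?_, ?_⟩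
  · have := Int.ediv_mul_le (2 * b + a) (b := 2 * a) (by omega)
    nlinarith
  · have := Int.lt_ediv_add_one_mul_self (2 * b + a) (b := 2 * a) (by omega)
    nlinarith

/-- Gauss reduction: a positive definite binary form `A x² + 2B xy + C y²` takes a value
at most `√(4/3 (AC - B²))` at the first vector of some unimodular basis. -/
theorem exists_basis_three_mul_sq_le (A B C : ℤ) (hA : 0 < A) (hD : 0 < A * C - B ^ 2) :
    ∃ p q r s : ℤ, p * s - q * r = 1 ∧ 0 < A * p ^ 2 + 2 * B * p * q + C * q ^ 2 ∧
      3 * (A * p ^ 2 + 2 * B * p * q + C * q ^ 2) ^ 2 ≤ 4 * (A * C - B ^ 2) := by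
  induction hN : A.toNat using Nat.strong_induction_on generalizing A B C with
  | _ N ih =>
    obtain ⟨k, hk₁, hk₂⟩ := exists_two_mul_abs_sub_mul_le A B hA
    have hdisc : A * (C - 2 * k * B + k ^ 2 * A) - (B - k * A) ^ 2 = A * C - B ^ 2 := by ring
    rcases lt_or_ge (C - 2 * k * B + k ^ 2 * A) A with h | h
    · have hpos : 0 < C - 2 * k * B + k ^ 2 * A := by
        by_contra hneg
        nlinarith [sq_nonneg (B - k * A)]
      obtain ⟨p, q, r, s, hdet, hval, hle⟩ := ih _ (by omega) (C - 2 * k * B + k ^ 2 * A)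
        (-(B - k * A)) A hpos (by linarith) rfl
      refine ⟨q + k * p, -p, s + k * r, -r, by linear_combination hdet, ?_, ?_⟩
      · convert hval using 1
        ring
      · convert hle using 1 <;> ring
    · refine ⟨1, 0, 0, 1, by ring, by simpa using hA, ?_⟩
      nlinarith

/-- A positive definite ternary form of determinant one is a sum of three integral squares. -/
theorem ternary_det_one_eq_sum_three_sq (a b c d e f : ℤ) (ha : 0 < a) (hA : 0 < a * d - b ^ 2)
    (hdet : a * d * f + 2 * b * c * e - a * e ^ 2 - d * c ^ 2 - f * b ^ 2 = 1) (x y z : ℤ) :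
    ∃ u v w : ℤ, a * x ^ 2 + 2 * b * x * y + 2 * c * x * z + d * y ^ 2 + 2 * e * y * z + f * z ^ 2
      = u ^ 2 + v ^ 2 + w ^ 2 := by
  induction hN : a.toNat using Nat.strong_induction_on generalizing a b c d e f x y z with
  | _ N ih =>
    have hdisc : (a * d - b ^ 2) * (a * f - c ^ 2) - (a * e - b * c) ^ 2 = a := by
      linear_combination a * hdet
    obtain ⟨p, q, r, s, hps, hpos, hle⟩ :=
      exists_basis_three_mul_sq_le (a * d - b ^ 2) (a * e - b * c) (a * f - c ^ 2) hA (by omega)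
    rw [hdisc] at hle
    obtain ⟨k, hk₁, hk₂⟩ := exists_two_mul_abs_sub_mul_le a (b * p + c * q) ha
    obtain ⟨b', hb'⟩ : ∃ b', b' = b * p + c * q - k * a := ⟨_, rfl⟩
    obtain ⟨c', hc'⟩ : ∃ c', c' = b * r + c * s := ⟨_, rfl⟩
    obtain ⟨d', hd'⟩ : ∃ d', d' = d * p ^ 2 + 2 * e * p * q + f * q ^ 2
      - 2 * k * (b * p + c * q) + k ^ 2 * a := ⟨_, rfl⟩
    obtain ⟨e', he'⟩ : ∃ e', e' = d * p * r + e * (p * s + q * r) + f * q * s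
      - k * (b * r + c * s) := ⟨_, rfl⟩
    obtain ⟨f', hf'⟩ : ∃ f', f' = d * r ^ 2 + 2 * e * r * s + f * s ^ 2 := ⟨_, rfl⟩
    rw [← hb'] at hk₁ hk₂
    have hA' : (a * d - b ^ 2) * p ^ 2 + 2 * (a * e - b * c) * p * q + (a * f - c ^ 2) * q ^ 2
        = a * d' - b' ^ 2 := by
      rw [hb', hd']
      ring
    rw [hA'] at hpos hle
    have hdet' : a * d' * f' + 2 * b' * c' * e' - a * e' ^ 2 - d' * c' ^ 2 - f' * b' ^ 2 = 1 := by
      have : a * d' * f' + 2 * b' * c' * e' - a * e' ^ 2 - d' * c' ^ 2 - f' * b' ^ 2 =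
          (a * d * f + 2 * b * c * e - a * e ^ 2 - d * c ^ 2 - f * b ^ 2) *
            (p * s - q * r) ^ 2 := by
        rw [hb', hc', hd', he', hf']
        ring
      rw [this, hdet, hps]
      norm_num
    obtain ⟨y', hy'⟩ : ∃ y', y' = s * y - r * z := ⟨_, rfl⟩
    obtain ⟨z', hz'⟩ : ∃ z', z' = p * z - q * y := ⟨_, rfl⟩
    obtain ⟨x', hx'⟩ : ∃ x', x' = x + k * y' := ⟨_, rfl⟩
    have hy : y = p * y' + r * z' := by
      rw [hy', hz']
      linear_combination (-y) * hps
    have hz : z = q * y' + s * z' := by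
      rw [hy', hz']
      linear_combination (-z) * hps
    have hx : x = x' - k * y' := by rw [hx']; ring
    have hform : a * x ^ 2 + 2 * b * x * y + 2 * c * x * z + d * y ^ 2 + 2 * e * y * z + f * z ^ 2
        = a * x' ^ 2 + 2 * b' * x' * y' + 2 * c' * x' * z' + d' * y' ^ 2 + 2 * e' * y' * z'
          + f' * z' ^ 2 := by
      rw [hx, hy, hz, hb', hc', hd', he', hf']
      ring
    rw [hform]
    rcases lt_or_ge d' a with h | h
    · have hd'pos : 0 < d' := by
        have : 0 < a * d' := by linarith [sq_nonneg b']
        exact (mul_pos_iff_of_pos_left ha).mp this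
      obtain ⟨u, v, w, huvw⟩ := ih _ (by omega) d' b' e' a c' f' hd'pos (by linarith)
        (by linarith) y' x' z' rfl
      exact ⟨u, v, w, by linarith⟩
    · have h₁ : 3 * a ^ 2 ≤ 4 * (a * d' - b' ^ 2) := by
        have hb : (2 * b') ^ 2 ≤ a ^ 2 := sq_le_sq' hk₁ hk₂
        have had : a * a ≤ a * d' := mul_le_mul_of_nonneg_left h ha.le
        linarith
      have ha1 : a = 1 := by
        by_contra hne
        have h2 : 2 ≤ a := by omega
        have h3 : (3 * a ^ 2) ^ 2 ≤ (4 * (a * d' - b' ^ 2)) ^ 2 :=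
          pow_le_pow_left₀ (by positivity) h₁ 2
        have h4 : 2 ^ 3 * a ≤ a ^ 3 * a :=
          mul_le_mul_of_nonneg_right (pow_le_pow_left₀ (by norm_num) h2 3) ha.le
        linarith
      subst ha1
      have hb0 : b' = 0 := by omega
      subst hb0
      have hd1 : d' = 1 := by
        have : d' < 2 := by
          by_contra hge
          nlinarith only [hle, hge]
        omega
      subst hd1
      exact ⟨x' + c' * z', y' + e' * z', z', by linear_combination z' ^ 2 * hdet'⟩

/-! ### Sums of three squares -/

theorem exists_eq_sum_three_sq_of_dvd (n b x : ℤ) (hb : 0 < b) (hbn : 1 < b * n)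
    (hx : b * n - 1 ∣ x ^ 2 + b) : ∃ u v w : ℤ, n = u ^ 2 + v ^ 2 + w ^ 2 := by
  obtain ⟨a, ha⟩ := hx
  have hapos : 0 < a := by
    by_contra hneg
    nlinarith [sq_nonneg x]
  obtain ⟨u, v, w, h⟩ := ternary_det_one_eq_sum_three_sq a x 1 (b * n - 1) 0 n hapos
    (by linarith) (by linear_combination (-n) * ha) 0 0 1
  exact ⟨u, v, w, by linarith⟩

open NumberTheorySymbols in
theorem exists_prime_dvd_sq_add_of_jacobiSym_eq_one (q b : ℕ) (hq : q.Prime)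
    (h : J(-(b : ℤ) | q) = 1) : ∃ x : ℤ, (q : ℤ) ∣ x ^ 2 + b := by
  have := Fact.mk hq
  obtain ⟨y, hy⟩ := ZMod.isSquare_of_jacobiSym_eq_one h
  obtain ⟨x, rfl⟩ := ZMod.intCast_surjective y
  refine ⟨x, (ZMod.intCast_zmod_eq_zero_iff_dvd _ _).mp ?_⟩
  push_cast at hy ⊢
  linear_combination -hy

open NumberTheorySymbols in
theorem exists_eq_sum_three_sq_of_mod_four_eq_two (n : ℕ) (hn : n % 4 = 2) :
    ∃ u v w : ℤ, (n : ℤ) = u ^ 2 + v ^ 2 + w ^ 2 := by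
  have hcop : (n - 1).Coprime (4 * n) := by
    refine Nat.Coprime.mul_right ?_ ?_
    · have : (n - 1).Coprime (2 ^ 2) :=
        Nat.Coprime.pow_right 2 (Nat.coprime_two_right.mpr (by rw [Nat.odd_iff]; omega))
      simpa using this
    · exact (Nat.coprime_self_sub_left (by omega)).mpr (Nat.coprime_one_left n)
  obtain ⟨q, hqn, hq, hmod⟩ := Nat.forall_exists_prime_gt_and_modEq n (by omega) hcop
  obtain ⟨v, hv⟩ := (Nat.modEq_iff_dvd' (by omega)).mp hmod.symm
  obtain ⟨b, hb⟩ : ∃ b, b = 4 * v + 1 := ⟨_, rfl⟩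
  have hqb : q + 1 = b * n := by
    have : q = n - 1 + 4 * n * v := by omega
    rw [this, hb]
    zify [show 1 ≤ n by omega]
    ring
  have hq4 : q % 4 = 1 := by
    have : q = n - 1 + 4 * (n * v) := by rw [← mul_assoc]; omega
    omega
  have hbodd : Odd b := by rw [Nat.odd_iff]; omega
  have hJ : J(-(b : ℤ) | q) = 1 := by
    rw [jacobiSym.neg _ (hq.odd_of_ne_two (by omega)), ZMod.χ₄_nat_one_mod_four hq4, one_mul,
      jacobiSym.quadratic_reciprocity_one_mod_four' hbodd hq4,
      jacobiSym.mod_left' (a₂ := -1), jacobiSym.at_neg_one hbodd,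
      ZMod.χ₄_nat_one_mod_four (by omega)]
    refine Int.ModEq.symm ((Int.modEq_iff_dvd).mpr ⟨n, ?_⟩)
    zify at hqb
    linarith
  obtain ⟨x, hx⟩ := exists_prime_dvd_sq_add_of_jacobiSym_eq_one q b hq hJ
  have hqz : (b : ℤ) * n - 1 = q := by zify at hqb; linarith
  refine exists_eq_sum_three_sq_of_dvd n b x (by omega) ?_ (hqz ▸ hx)
  have := hq.two_le
  omega

open NumberTheorySymbols in
theorem exists_eq_sum_three_sq_of_odd (n : ℕ) (hodd : n % 2 = 1) (hn : n % 8 ≠ 7) :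
    ∃ u v w : ℤ, (n : ℤ) = u ^ 2 + v ^ 2 + w ^ 2 := by
  rcases Nat.lt_or_ge n 2 with h1 | h1
  · exact ⟨1, 0, 0, by norm_num; omega⟩
  obtain ⟨c, hc⟩ : ∃ c : ℕ, n % 8 = 3 ∧ c = 1 ∨ n % 4 = 1 ∧ c = 3 := by
    rcases (by omega : n % 8 = 3 ∨ n % 4 = 1) with h | h
    exacts [⟨1, Or.inl ⟨h, rfl⟩⟩, ⟨3, Or.inr ⟨h, rfl⟩⟩]
  obtain ⟨m, hm⟩ : ∃ m, c * n = 2 * m + 1 := by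
    rcases hc with ⟨h, rfl⟩ | ⟨h, rfl⟩
    exacts [⟨n / 2, by omega⟩, ⟨3 * n / 2, by omega⟩]
  have hmodd : m % 2 = 1 := by rcases hc with ⟨h, rfl⟩ | ⟨h, rfl⟩ <;> omega
  have hcop : m.Coprime (4 * n) := by
    refine Nat.Coprime.mul_right ?_ ?_
    · have : m.Coprime (2 ^ 2) :=
        Nat.Coprime.pow_right 2 (Nat.coprime_two_right.mpr (Nat.odd_iff.mpr hmodd))
      simpa using this
    · rw [← Nat.isCoprime_iff_coprime]
      refine ⟨-2, c, ?_⟩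
      zify at hm
      linarith
  obtain ⟨q, hqn, hq, hmod⟩ := Nat.forall_exists_prime_gt_and_modEq (n + m) (by omega) hcop
  obtain ⟨v, hv⟩ := (Nat.modEq_iff_dvd' (by omega)).mp hmod.symm
  obtain ⟨b, hb⟩ : ∃ b, b = 8 * v + c := ⟨_, rfl⟩
  have hqv : q = m + 4 * (n * v) := by rw [← mul_assoc]; omega
  have hqb : 2 * q + 1 = b * n := by
    rw [hqv, hb]
    linear_combination -hm
  have hbodd : Odd b := by rw [Nat.odd_iff]; omega
  have hqodd : Odd q := by rw [Nat.odd_iff]; omega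
  have hprod : J(2 | b) * J(q | b) = J(-1 | b) := by
    rw [← jacobiSym.mul_left]
    refine jacobiSym.mod_left' (Int.ModEq.symm ((Int.modEq_iff_dvd).mpr ⟨n, ?_⟩))
    zify at hqb
    linarith
  rw [jacobiSym.at_two hbodd, jacobiSym.at_neg_one hbodd, ZMod.χ₈_nat_eq_if_mod_eight,
    ZMod.χ₄_nat_eq_if_mod_four] at hprod
  have hJ : J(-(b : ℤ) | q) = 1 := by
    rw [jacobiSym.neg _ hqodd]
    rcases hc with ⟨h, rfl⟩ | ⟨h, rfl⟩
    · have hq4 : q % 4 = 1 := by omega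
      have hb8 : b % 8 = 1 := by omega
      have hb4 : b % 4 = 1 := by omega
      rw [ZMod.χ₄_nat_one_mod_four hq4, one_mul,
        jacobiSym.quadratic_reciprocity_one_mod_four' hbodd hq4]
      simpa [hb8, hb4, Nat.odd_iff.mp hbodd] using hprod
    · have hb8 : b % 8 = 3 := by omega
      have hb4 : b % 4 = 3 := by omega
      have hqb1 : J(q | b) = 1 := by simpa [hb8, hb4, Nat.odd_iff.mp hbodd] using hprod
      rcases (by omega : q % 4 = 1 ∨ q % 4 = 3) with hq4 | hq4
      · rw [ZMod.χ₄_nat_one_mod_four hq4, one_mul,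
          jacobiSym.quadratic_reciprocity_one_mod_four' hbodd hq4, hqb1]
      · rw [ZMod.χ₄_nat_three_mod_four hq4,
          jacobiSym.quadratic_reciprocity_three_mod_four hb4 hq4, hqb1]
        norm_num
  obtain ⟨x, hx, hxodd⟩ : ∃ x : ℤ, (q : ℤ) ∣ x ^ 2 + b ∧ x % 2 = 1 := by
    obtain ⟨x, hx⟩ := exists_prime_dvd_sq_add_of_jacobiSym_eq_one q b hq hJ
    rcases Int.emod_two_eq_zero_or_one x with h | h
    · refine ⟨x + q, ?_, ?_⟩
      · have : (x + q) ^ 2 + b = x ^ 2 + b + q * (2 * x + q) := by ring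
        rw [this]
        exact dvd_add hx (dvd_mul_right _ _)
      · have := Nat.odd_iff.mp hqodd
        omega
    · exact ⟨x, hx, h⟩
  have h2 : (2 : ℤ) ∣ x ^ 2 + b := by
    have hbo := Nat.odd_iff.mp hbodd
    have : x ^ 2 % 2 = 1 := by rw [pow_two, Int.mul_emod, hxodd]; norm_num
    omega
  have hqz : (b : ℤ) * n - 1 = 2 * q := by zify at hqb; linarith
  refine exists_eq_sum_three_sq_of_dvd n b x (by omega) ?_ ?_
  · have := hq.two_le
    omega
  · rw [hqz]
    refine IsCoprime.mul_dvd ?_ h2 hx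
    have := Nat.isCoprime_iff_coprime.mpr (Nat.coprime_two_left.mpr hqodd)
    exact_mod_cast this

/-! ### The forms `x² + y² + 5z²` and `x² + y² + 5z² + 5w²` -/

theorem exists_sq_add_sq_add_five_mul_sq (n u v w : ℤ) (h : 5 * n = u ^ 2 + v ^ 2 + w ^ 2) :
    ∃ x y z : ℤ, n = x ^ 2 + y ^ 2 + 5 * z ^ 2 := by
  have key : ∀ u v w : ℤ, 5 * n = u ^ 2 + v ^ 2 + w ^ 2 → 5 ∣ w → 5 ∣ v - 2 * u →
      ∃ x y z : ℤ, n = x ^ 2 + y ^ 2 + 5 * z ^ 2 := by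
    rintro u v w h ⟨z, rfl⟩ ⟨t, ht⟩
    obtain rfl : v = 2 * u + 5 * t := by linarith
    exact ⟨u + 2 * t, t, z, by linarith⟩
  have key' : ∀ u v w : ℤ, 5 * n = u ^ 2 + v ^ 2 + w ^ 2 → 5 ∣ w →
      ∃ x y z : ℤ, n = x ^ 2 + y ^ 2 + 5 * z ^ 2 := by
    intro u v w h hw
    have hprod : (5 : ℤ) ∣ (v - 2 * u) * (v + 2 * u) := by
      obtain ⟨z, rfl⟩ := hw
      exact ⟨n - 5 * z ^ 2 - u ^ 2, by linarith⟩
    rcases (Int.prime_iff_natAbs_prime.mpr (by norm_num)).dvd_or_dvd hprod with h' | h'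
    · exact key u v w h hw h'
    · exact key (-u) v w (by linarith) hw (by simpa using h')
  have hres : 5 ∣ u ∨ 5 ∣ v ∨ 5 ∣ w := by
    have h0 : (u ^ 2 + v ^ 2 + w ^ 2 : ZMod 5) = 0 := by
      have : ((5 * n : ℤ) : ZMod 5) = ((u ^ 2 + v ^ 2 + w ^ 2 : ℤ) : ZMod 5) := by rw [h]
      push_cast at this
      rw [← this, show (5 : ZMod 5) = 0 from rfl, zero_mul]
    have hdec : ∀ a b c : ZMod 5, a ^ 2 + b ^ 2 + c ^ 2 = 0 → a = 0 ∨ b = 0 ∨ c = 0 := by decide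
    simpa [ZMod.intCast_zmod_eq_zero_iff_dvd] using hdec _ _ _ h0
  rcases hres with h' | h' | h'
  · exact key' v w u (by linarith) h'
  · exact key' u w v (by linarith) h'
  · exact key' u v w h h'

theorem exists_sq_add_sq_add_five_mul_sq_add_sq (p : ℕ) (hp : p.Prime)
    (hp2 : p ≠ 2) (hp3 : p ≠ 3) (hp5 : p ≠ 5) (hp17 : p ≠ 17) :
    ∃ x y z w : ℤ, (p : ℤ) = x ^ 2 + y ^ 2 + 5 * (z ^ 2 + w ^ 2) ∧ 0 < z ^ 2 + w ^ 2 := by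
  have h2 := hp.two_le
  have hodd : p % 2 = 1 := Nat.odd_iff.mp (hp.odd_of_ne_two hp2)
  have hne : ∀ m, 2 ≤ m → m < p → p % m ≠ 0 := fun m hm hlt h0 =>
    absurd ((Nat.dvd_prime hp).mp (Nat.dvd_of_mod_eq_zero h0)) (by omega)
  rcases (by omega : p % 8 = 7 ∨ p % 8 = 3 ∨ p % 4 = 1) with h | h | h
  · obtain ⟨u, v, w, huvw⟩ := exists_eq_sum_three_sq_of_odd (5 * p) (by omega) (by omega)
    obtain ⟨x, y, z, hxyz⟩ := exists_sq_add_sq_add_five_mul_sq p u v w (by exact_mod_cast huvw)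
    refine ⟨x, y, z, 0, by linarith, ?_⟩
    have : z ≠ 0 := by
      rintro rfl
      have h4 : ((p : ℤ) : ZMod 4) = (x : ZMod 4) ^ 2 + (y : ZMod 4) ^ 2 := by
        rw [hxyz]
        push_cast
        ring
      have h3 : ((p : ℤ) : ZMod 4) = 3 := by
        have : ((p : ℕ) : ZMod 4) = ((3 : ℕ) : ZMod 4) :=
          (ZMod.natCast_eq_natCast_iff' _ _ _).mpr (by omega)
        exact_mod_cast this
      have hdec : ∀ a b : ZMod 4, (3 : ZMod 4) ≠ a ^ 2 + b ^ 2 := by decide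
      exact hdec _ _ (h3 ▸ h4)
    positivity
  · obtain ⟨m, rfl⟩ : ∃ m, p = m + 5 := ⟨p - 5, by omega⟩
    obtain ⟨u, v, w, huvw⟩ := exists_eq_sum_three_sq_of_mod_four_eq_two (5 * m) (by omega)
    obtain ⟨x, y, z, hxyz⟩ := exists_sq_add_sq_add_five_mul_sq m u v w (by exact_mod_cast huvw)
    exact ⟨x, y, z, 1, by push_cast; linarith, by positivity⟩
  · rcases Nat.lt_or_ge p 20 with hlt | hge
    · have h13 : p = 13 := by
        have := hne 3
        omega
      exact ⟨2, 2, 1, 0, by rw [h13]; norm_num, by norm_num⟩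
    · obtain ⟨m, rfl⟩ : ∃ m, p = m + 20 := ⟨p - 20, by omega⟩
      obtain ⟨u, v, w, huvw⟩ := exists_eq_sum_three_sq_of_odd (5 * m) (by omega) (by omega)
      obtain ⟨x, y, z, hxyz⟩ := exists_sq_add_sq_add_five_mul_sq m u v w (by exact_mod_cast huvw)
      exact ⟨x, y, z, 2, by push_cast; linarith, by positivity⟩

/-- Primes other than `2, 3, 5, 17` are represented by `x² + y² + 10z² + 10w²` or
`2x² + 2y² + 5z² + 5w²` with neither `(x, y)` nor `(z, w)` zero. -/
theorem exists_quaternary_rep (p : ℕ) (hp : p.Prime)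
    (hp2 : p ≠ 2) (hp3 : p ≠ 3) (hp5 : p ≠ 5) (hp17 : p ≠ 17) :
    ∃ m₁ m₂ a b c d : ℤ, (m₁ = 1 ∧ m₂ = 10 ∨ m₁ = 2 ∧ m₂ = 5) ∧
      (p : ℤ) = m₁ * (a ^ 2 + b ^ 2) + m₂ * (c ^ 2 + d ^ 2) ∧
      0 < a ^ 2 + b ^ 2 ∧ 0 < c ^ 2 + d ^ 2 := by
  obtain ⟨x, y, z, w, h, hpos⟩ :=
    exists_sq_add_sq_add_five_mul_sq_add_sq p hp hp2 hp3 hp5 hp17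
  have hodd : p % 2 = 1 := Nat.odd_iff.mp (hp.odd_of_ne_two hp2)
  have hpos' : 0 < x ^ 2 + y ^ 2 := by
    refine lt_of_le_of_ne (by positivity) fun h0 => hp5 ?_
    have h5 : (5 : ℤ) ∣ p := ⟨z ^ 2 + w ^ 2, by linarith⟩
    exact ((Nat.prime_dvd_prime_iff_eq Nat.prime_five hp).mp (by exact_mod_cast h5)).symm
  have half : ∀ s t : ℤ, (s ^ 2 + t ^ 2) % 2 = 0 →
      ∃ e f : ℤ, s ^ 2 + t ^ 2 = 2 * (e ^ 2 + f ^ 2) := by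
    intro s t hst
    have : (s + t) % 2 = 0 := by
      rw [← Int.even_iff] at hst ⊢
      simpa [parity_simps] using hst
    obtain ⟨e, he⟩ := Int.dvd_of_emod_eq_zero this
    obtain rfl : t = 2 * e - s := by linarith
    exact ⟨e, s - e, by ring⟩
  rcases Int.emod_two_eq_zero_or_one (z ^ 2 + w ^ 2) with h0 | h1
  · obtain ⟨e, f, hef⟩ := half z w h0
    exact ⟨1, 10, x, y, e, f, Or.inl ⟨rfl, rfl⟩, by linarith, hpos', by linarith⟩
  · obtain ⟨e, f, hef⟩ := half x y (by omega)
    exact ⟨2, 5, e, f, z, w, Or.inr ⟨rfl, rfl⟩, by linarith, by linarith, hpos⟩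

/-! ### Similitudes of `x² + y² + 10z²` with multiplier `p²` -/

/-- A quaternion of norm `p` attached to a representation `p = m₁(a² + b²) + m₂(c² + d²)`,
`m₁m₂ = 10`, acts on `ℤ³` as a similitude of `x² + y² + 10z²` with multiplier `p²`. -/
def ramanujanSimilitude (m₁ m₂ a b c d : ℤ) (v : ℤ × ℤ × ℤ) : ℤ × ℤ × ℤ :=
  (m₁ * ((a ^ 2 - b ^ 2) * v.1 - 2 * a * b * v.2.1)
      - m₂ * ((c ^ 2 - d ^ 2) * v.1 - 2 * c * d * v.2.1) - 20 * (a * c + b * d) * v.2.2,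
    m₁ * ((a ^ 2 - b ^ 2) * v.2.1 + 2 * a * b * v.1)
      + m₂ * ((c ^ 2 - d ^ 2) * v.2.1 + 2 * c * d * v.1) - 20 * (b * c - a * d) * v.2.2,
    (m₁ * (a ^ 2 + b ^ 2) - m₂ * (c ^ 2 + d ^ 2)) * v.2.2
      + 2 * ((a * c - b * d) * v.1 - (a * d + b * c) * v.2.1))

/-- The quadratic form `x² + y² + 10z²`. -/
def ramanujanForm (v : ℤ × ℤ × ℤ) : ℤ := v.1 ^ 2 + v.2.1 ^ 2 + 10 * v.2.2 ^ 2

/-- All three coordinates of the vector are divisible by `p`. -/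
def CoordsDvd (p : ℤ) (v : ℤ × ℤ × ℤ) : Prop := p ∣ v.1 ∧ p ∣ v.2.1 ∧ p ∣ v.2.2

theorem ramanujanForm_similitude (m₁ m₂ a b c d : ℤ) (hm : m₁ = 1 ∧ m₂ = 10 ∨ m₁ = 2 ∧ m₂ = 5)
    (v : ℤ × ℤ × ℤ) :
    ramanujanForm (ramanujanSimilitude m₁ m₂ a b c d v) =
      (m₁ * (a ^ 2 + b ^ 2) + m₂ * (c ^ 2 + d ^ 2)) ^ 2 * ramanujanForm v := by
  simp only [ramanujanForm, ramanujanSimilitude]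
  rcases hm with ⟨rfl, rfl⟩ | ⟨rfl, rfl⟩ <;> ring

theorem exists_ramanujanForm_eq_sq_mul_of_not_coordsDvd (p : ℕ) (hp : p.Prime)
    (hp2 : p ≠ 2) (hp3 : p ≠ 3) (hp5 : p ≠ 5) (hp17 : p ≠ 17)
    (v : ℤ × ℤ × ℤ) (hv : ¬ CoordsDvd p v) :
    ∃ w, ¬ CoordsDvd p w ∧ ramanujanForm w = (p : ℤ) ^ 2 * ramanujanForm v := by
  obtain ⟨m₁, m₂, a, b, c, d, hm, hpe, hs, ht⟩ :=
    exists_quaternary_rep p hp hp2 hp3 hp5 hp17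
  have hpZ : Prime (p : ℤ) := Nat.prime_iff_prime_int.mp hp
  by_contra hall
  push Not at hall
  have hz' : ∀ c' d' : ℤ, c' ^ 2 + d' ^ 2 = c ^ 2 + d ^ 2 → (p : ℤ) ∣
      (m₁ * (a ^ 2 + b ^ 2) - m₂ * (c ^ 2 + d ^ 2)) * v.2.2
        + 2 * ((a * c' - b * d') * v.1 - (a * d' + b * c') * v.2.1) := by
    intro c' d' hcd
    by_contra hnot
    refine hall (ramanujanSimilitude m₁ m₂ a b c' d' v) (fun h => hnot ?_) ?_
    · simpa only [ramanujanSimilitude, hcd] using h.2.2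
    · rw [ramanujanForm_similitude _ _ _ _ _ _ hm, hcd, ← hpe]
  have h2 : ¬ (p : ℤ) ∣ 2 := fun h =>
    hp2 ((Nat.prime_dvd_prime_iff_eq hp Nat.prime_two).mp (by exact_mod_cast h))
  have hm₁ : ¬ (p : ℤ) ∣ m₁ := by
    rcases hm with ⟨rfl, -⟩ | ⟨rfl, -⟩
    · exact hpZ.not_dvd_one
    · exact h2
  have hsp : ¬ (p : ℤ) ∣ a ^ 2 + b ^ 2 := fun h => by
    have := Int.le_of_dvd hs h
    rcases hm with ⟨rfl, rfl⟩ | ⟨rfl, rfl⟩ <;> linarith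
  have htp : ¬ (p : ℤ) ∣ c ^ 2 + d ^ 2 := fun h => by
    have := Int.le_of_dvd ht h
    rcases hm with ⟨rfl, rfl⟩ | ⟨rfl, rfl⟩ <;> linarith
  have e₁ := hz' c d rfl
  have e₂ := hz' (-c) (-d) (by ring)
  have e₃ := hz' (-d) c (by ring)
  have hz : (p : ℤ) ∣ v.2.2 := by
    have h4 : (p : ℤ) ∣ 2 * (2 * (m₁ * ((a ^ 2 + b ^ 2) * v.2.2))) := by
      refine (dvd_add (dvd_add e₁ e₂) (dvd_mul_right (p : ℤ) (2 * v.2.2))).trans (dvd_of_eq ?_)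
      linear_combination (2 * v.2.2) * hpe
    simpa [hpZ.dvd_mul, h2, hm₁, hsp] using h4
  have eRe : (p : ℤ) ∣ (a * c - b * d) * v.1 - (a * d + b * c) * v.2.1 := by
    have := (dvd_add_right (hz.mul_left _)).mp e₁
    exact (hpZ.dvd_or_dvd this).resolve_left h2
  have eIm : (p : ℤ) ∣ (a * -d - b * c) * v.1 - (a * c + b * -d) * v.2.1 := by
    have := (dvd_add_right (hz.mul_left _)).mp e₃
    exact (hpZ.dvd_or_dvd this).resolve_left h2
  have hx : (p : ℤ) ∣ v.1 := by
    have : (p : ℤ) ∣ (a ^ 2 + b ^ 2) * ((c ^ 2 + d ^ 2) * v.1) := by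
      refine (dvd_sub (eRe.mul_left (a * c - b * d)) (eIm.mul_left (a * d + b * c))).trans
        (dvd_of_eq ?_)
      ring
    simpa [hpZ.dvd_mul, hsp, htp] using this
  have hy : (p : ℤ) ∣ v.2.1 := by
    have : (p : ℤ) ∣ (a ^ 2 + b ^ 2) * ((c ^ 2 + d ^ 2) * v.2.1) := by
      refine (dvd_neg.mpr
        (dvd_add (eRe.mul_left (a * d + b * c)) (eIm.mul_left (a * c - b * d)))).trans
        (dvd_of_eq ?_)
      ring
    simpa [hpZ.dvd_mul, hsp, htp] using this
  exact hv ⟨hx, hy, hz⟩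

theorem exists_ramanujanForm_eq_sq_mul (p : ℕ) (hp : p.Prime)
    (hp2 : p ≠ 2) (hp3 : p ≠ 3) (hp5 : p ≠ 5) (hp17 : p ≠ 17)
    (v : ℤ × ℤ × ℤ) (hv : 0 < ramanujanForm v) :
    ∃ w, ¬ CoordsDvd p w ∧ ramanujanForm w = (p : ℤ) ^ 2 * ramanujanForm v := by
  induction hN : (ramanujanForm v).toNat using Nat.strong_induction_on generalizing v with
  | _ N ih =>
    by_cases hdvd : CoordsDvd p v
    · obtain ⟨⟨x, hx⟩, ⟨y, hy⟩, ⟨z, hz⟩⟩ := hdvd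
      have hscale : ramanujanForm v = (p : ℤ) ^ 2 * ramanujanForm (x, y, z) := by
        simp only [ramanujanForm, hx, hy, hz]
        ring
      have hp' : (2 : ℤ) ≤ p := by exact_mod_cast hp.two_le
      have hpos : 0 < ramanujanForm (x, y, z) := by
        by_contra hneg
        nlinarith [sq_nonneg (p : ℤ)]
      have hlt : ramanujanForm (x, y, z) < ramanujanForm v := by
        rw [hscale]
        exact lt_mul_of_one_lt_left hpos (by nlinarith)
      obtain ⟨w, hw, hwf⟩ := ih _ (by omega) (x, y, z) hpos rfl
      rw [← hscale] at hwf
      rw [← hwf]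
      exact exists_ramanujanForm_eq_sq_mul_of_not_coordsDvd p hp hp2 hp3 hp5 hp17 w hw
    · exact exists_ramanujanForm_eq_sq_mul_of_not_coordsDvd p hp hp2 hp3 hp5 hp17 v hdvd

theorem finite_setOf_ramanujanForm_eq (m : ℤ) :
    {v : ℤ × ℤ × ℤ | v.1 ^ 2 + v.2.1 ^ 2 + 10 * v.2.2 ^ 2 = m}.Finite := by
  refine ((Set.finite_Icc (-m) m).prod
    ((Set.finite_Icc (-m) m).prod (Set.finite_Icc (-m) m))).subset ?_
  rintro ⟨x, y, z⟩ (h : x ^ 2 + y ^ 2 + 10 * z ^ 2 = m)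
  simp only [Set.mem_prod, Set.mem_Icc]
  have hx := Int.le_self_sq x
  have hy := Int.le_self_sq y
  have hz := Int.le_self_sq z
  have hx' := Int.le_self_sq (-x)
  have hy' := Int.le_self_sq (-y)
  have hz' := Int.le_self_sq (-z)
  rw [neg_sq] at hx' hy' hz'
  have := sq_nonneg x
  have := sq_nonneg y
  have := sq_nonneg z
  refine ⟨⟨?_, ?_⟩, ⟨?_, ?_⟩, ?_, ?_⟩ <;> linarith

theorem ramanujan_rep_growth (p : ℕ) (hp : p.Prime)
    (hp2 : p ≠ 2) (hp3 : p ≠ 3) (hp5 : p ≠ 5) (hp17 : p ≠ 17)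
    (n : ℤ) (hn : 0 < n)
    (hrep : ∃ x y z : ℤ, x ^ 2 + y ^ 2 + 10 * z ^ 2 = n)
    (hrep2 : ∃ x y z : ℤ, x ^ 2 + y ^ 2 + 10 * z ^ 2 = (p : ℤ) ^ 2 * n) :
    ramanujanRepCount n < ramanujanRepCount ((p : ℤ) ^ 2 * n) := by
  obtain ⟨x, y, z, hxyz⟩ := hrep
  obtain ⟨w, hw, hwf⟩ := exists_ramanujanForm_eq_sq_mul p hp hp2 hp3 hp5 hp17 (x, y, z)
    (by simpa only [ramanujanForm, hxyz] using hn)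
  have hinj : Function.Injective
      (fun v : ℤ × ℤ × ℤ => ((p : ℤ) * v.1, (p : ℤ) * v.2.1, (p : ℤ) * v.2.2)) := by
    rintro ⟨a, b, c⟩ ⟨a', b', c'⟩ h
    simpa [hp.ne_zero] using h
  unfold ramanujanRepCount
  rw [← Set.ncard_image_of_injective _ hinj]
  refine Set.ncard_lt_ncard ?_ (finite_setOf_ramanujanForm_eq _)
  refine (Set.ssubset_iff_of_subset ?_).mpr ⟨w, ?_, ?_⟩
  · rintro _ ⟨v, hv, rfl⟩
    simp only [Set.mem_ofPred_eq] at hv ⊢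
    rw [← hv]
    ring
  · simpa only [ramanujanForm, hxyz, Set.mem_ofPred_eq] using hwf
  · rintro ⟨v, -, rfl⟩
    exact hw ⟨dvd_mul_right _ _, dvd_mul_right _ _, dvd_mul_right _ _⟩
end

section
/- Let p > 3 be a prime with p ≡ 3 (mod 4) and let n be a positive integer divisible by p. Then n is a sum of k squares of integers none divisible by p, for some k ∈ {3, 4}. -/
theorem exists_four_mul_add_mul_sq_le (a b : ℤ) (ha : 0 < a) :
    ∃ k : ℤ, 4 * (b + k * a) ^ 2 ≤ a ^ 2 := by
  have h1 := Int.mul_ediv_self_le (x := 2 * b + a) (k := 2 * a) (by lia)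
  have h2 := Int.lt_mul_ediv_self_add (x := 2 * b + a) (k := 2 * a) (by lia)
  refine ⟨-((2 * b + a) / (2 * a)), ?_⟩
  have := sq_le_sq' (a := 2 * (b + -((2 * b + a) / (2 * a)) * a)) (b := a)
    (by linarith) (by linarith)
  linarith

/-- Gauss reduction of a positive definite binary form. -/
theorem exists_unimodular_binary_le (a b c D : ℤ) (ha : 0 < a) (hD : 0 < D)
    (h : a * c - b ^ 2 = D) :
    ∃ α β γ δ : ℤ, α * δ - β * γ = 1 ∧ 0 < a * α ^ 2 + 2 * b * α * γ + c * γ ^ 2 ∧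
      3 * (a * α ^ 2 + 2 * b * α * γ + c * γ ^ 2) ^ 2 ≤ 4 * D := by
  induction hN : a.toNat using Nat.strong_induction_on generalizing a b c with
  | _ N ih =>
    obtain ⟨k, hk⟩ := exists_four_mul_add_mul_sq_le a b ha
    set b' := b + k * a with hb'
    set c' := c + 2 * k * b + k ^ 2 * a with hc'
    have h' : a * c' - b' ^ 2 = D := by rw [← h, hb', hc']; ring
    have hb2 : 4 * b' ^ 2 ≤ a ^ 2 := hk
    by_cases hac : a ≤ c'
    · exact ⟨1, 0, 0, 1, by norm_num, by simpa using ha, by nlinarith⟩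
    · have hc0 : 0 < c' := by
        by_contra hc
        nlinarith
      obtain ⟨α, β, γ, δ, hdet, hpos, hle⟩ := ih c'.toNat (by lia) c' (-b') a hc0
        (by rw [← h']; ring) rfl
      have key : a * (k * α - γ) ^ 2 + 2 * b * (k * α - γ) * α + c * α ^ 2
          = c' * α ^ 2 + 2 * (-b') * α * γ + a * γ ^ 2 := by
        rw [hb', hc']; ring
      exact ⟨k * α - γ, k * β - δ, α, β, by linear_combination hdet,
        by rw [key]; exact hpos, by rw [key]; exact hle⟩

/-- Integer vectors of `ℤ³` with prescribed Gram matrix. -/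
def HasGram (a b c d e f : ℤ) : Prop :=
  ∃ u v w : Fin 3 → ℤ, u ⬝ᵥ u = a ∧ u ⬝ᵥ v = b ∧ u ⬝ᵥ w = c ∧ v ⬝ᵥ v = d ∧ v ⬝ᵥ w = e ∧
    w ⬝ᵥ w = f

theorem HasGram.of_shear {a b c d e f : ℤ} (k l : ℤ)
    (h : HasGram a (b + k * a) (c + l * a) (d + 2 * k * b + k ^ 2 * a)
      (e + k * c + l * b + k * l * a) (f + 2 * l * c + l ^ 2 * a)) : HasGram a b c d e f := by
  obtain ⟨u, v, w, h1, h2, h3, h4, h5, h6⟩ := h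
  refine ⟨u, v - k • u, w - l • u, h1, ?_, ?_, ?_, ?_, ?_⟩ <;>
    simp only [dotProduct_sub, sub_dotProduct, dotProduct_smul, smul_dotProduct, smul_eq_mul,
      dotProduct_comm v u, dotProduct_comm w u, h1, h2, h3, h4, h5, h6] <;> ring

theorem HasGram.of_unimodular {a b c d e f α β γ δ : ℤ} (hdet : α * δ - β * γ = 1)
    (h : HasGram a (α * b + γ * c) (β * b + δ * c) (α ^ 2 * d + 2 * α * γ * e + γ ^ 2 * f)
      (α * β * d + (α * δ + β * γ) * e + γ * δ * f)
      (β ^ 2 * d + 2 * β * δ * e + δ ^ 2 * f)) : HasGram a b c d e f := by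
  obtain ⟨u, v, w, h1, h2, h3, h4, h5, h6⟩ := h
  have hdet' : (α * δ - β * γ) ^ 2 = 1 := by rw [hdet, one_pow]
  refine ⟨u, δ • v - γ • w, α • w - β • v, h1, ?_, ?_, ?_, ?_, ?_⟩ <;>
    simp only [dotProduct_sub, sub_dotProduct, dotProduct_smul, smul_dotProduct, smul_eq_mul,
      dotProduct_comm w v, h2, h3, h4, h5, h6]
  · linear_combination b * hdet
  · linear_combination c * hdet
  · linear_combination d * hdet'
  · linear_combination e * hdet'
  · linear_combination f * hdet'

theorem HasGram.of_swap {a b c d e f : ℤ} (h : HasGram d b e a c f) : HasGram a b c d e f := by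
  obtain ⟨u, v, w, h1, h2, h3, h4, h5, h6⟩ := h
  exact ⟨v, u, w, h4, by rw [dotProduct_comm, h2], h5, h1, h3, h6⟩

theorem hasGram_one (d e f : ℤ) (hd : 0 < d) (hdet : d * f - e ^ 2 = 1) :
    HasGram 1 0 0 d e f := by
  obtain ⟨α, β, γ, δ, h1, hpos, hle⟩ := exists_unimodular_binary_le d e f 1 hd one_pos hdet
  refine HasGram.of_unimodular h1 ?_
  set d' := d * α ^ 2 + 2 * e * α * γ + f * γ ^ 2 with hd'
  set e' := α * β * d + (α * δ + β * γ) * e + γ * δ * f with he'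
  set f' := β ^ 2 * d + 2 * β * δ * e + δ ^ 2 * f with hf'
  have hd1 : d' = 1 := by nlinarith
  have hdet' : d' * f' - e' ^ 2 = 1 := by
    have : (α * δ - β * γ) ^ 2 = 1 := by rw [h1, one_pow]
    rw [hd', he', hf']
    linear_combination this * (d * f - e ^ 2) + hdet
  rw [hd1] at hdet'
  refine ⟨![1, 0, 0], ![0, 1, 0], ![0, e', 1], ?_⟩
  simp only [Matrix.vec3_dotProduct, Matrix.cons_val]
  refine ⟨by ring, by ring, by ring, ?_, by ring, by linear_combination -hdet'⟩
  rw [← hd1, hd']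
  nlinarith

/-- A positive definite integral ternary form of determinant one is a sum of three squares. -/
theorem hasGram_of_det_eq_one (a b c d e f : ℤ) (ha : 0 < a) (hab : 0 < a * d - b ^ 2)
    (hdet : a * (d * f - e ^ 2) - b * (b * f - e * c) + c * (b * e - d * c) = 1) :
    HasGram a b c d e f := by
  induction hN : a.toNat using Nat.strong_induction_on generalizing a b c d e f with
  | _ N ih =>
    by_cases ha1 : a = 1
    · subst ha1
      refine HasGram.of_shear (-b) (-c) ?_
      convert hasGram_one (d - b ^ 2) (e - b * c) (f - c ^ 2) (by lia)
        (by linear_combination hdet) using 1 <;> ring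
    have hD : (a * d - b ^ 2) * (a * f - c ^ 2) - (a * e - b * c) ^ 2 = a := by
      linear_combination a * hdet
    obtain ⟨α, β, γ, δ, h1, hpos, hle⟩ := exists_unimodular_binary_le _ _ _ a hab ha hD
    refine HasGram.of_unimodular h1 ?_
    have h1' : (α * δ - β * γ) ^ 2 = 1 := by rw [h1, one_pow]
    generalize hb₁ : α * b + γ * c = b₁
    generalize hc₁ : β * b + δ * c = c₁
    generalize hd₁ : α ^ 2 * d + 2 * α * γ * e + γ ^ 2 * f = d₁
    generalize he₁ : α * β * d + (α * δ + β * γ) * e + γ * δ * f = e₁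
    generalize hf₁ : β ^ 2 * d + 2 * β * δ * e + δ ^ 2 * f = f₁
    have hg : (a * d - b ^ 2) * α ^ 2 + 2 * (a * e - b * c) * α * γ + (a * f - c ^ 2) * γ ^ 2
        = a * d₁ - b₁ ^ 2 := by rw [← hb₁, ← hd₁]; ring
    rw [hg] at hpos hle
    have hdet₁ : a * (d₁ * f₁ - e₁ ^ 2) - b₁ * (b₁ * f₁ - e₁ * c₁)
        + c₁ * (b₁ * e₁ - d₁ * c₁) = 1 := by
      rw [← hb₁, ← hc₁, ← hd₁, ← he₁, ← hf₁]
      linear_combination hdet +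
        (a * (d * f - e ^ 2) - b * (b * f - e * c) + c * (b * e - d * c)) * h1'
    obtain ⟨k, hk⟩ := exists_four_mul_add_mul_sq_le a b₁ ha
    refine HasGram.of_shear k 0 (HasGram.of_swap ?_)
    generalize hb₂ : b₁ + k * a = b₂ at hk ⊢
    generalize hd₂ : d₁ + 2 * k * b₁ + k ^ 2 * a = d₂
    have hg₂ : a * d₂ - b₂ ^ 2 = a * d₁ - b₁ ^ 2 := by rw [← hb₂, ← hd₂]; ring
    rw [← hg₂] at hpos hle
    have hd₂0 : 0 < d₂ :=
      pos_of_mul_pos_right (by linarith [sq_nonneg b₂] : 0 < a * d₂) ha.le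
    have hlt : d₂ < a := by
      by_contra! hc
      have h2 : 2 ≤ a := by lia
      have h3 : a * a ≤ a * d₂ := by gcongr
      have h4 : 3 * a ^ 2 ≤ 4 * (a * d₂ - b₂ ^ 2) := by linarith
      have h5 : (3 * a ^ 2) ^ 2 ≤ (4 * (a * d₂ - b₂ ^ 2)) ^ 2 := by gcongr
      have h6 : 2 ^ 3 * a ≤ a ^ 3 * a := by gcongr
      linarith
    refine ih d₂.toNat (by lia) _ _ _ _ _ _ hd₂0 (by linarith) ?_ rfl
    rw [← hb₂, ← hd₂]
    linear_combination hdet₁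

open scoped NumberTheorySymbols

/-- `m` is a sum of three squares of coprime integers. -/
def IsPrimitiveSumThreeSq (m : ℤ) : Prop :=
  ∃ x y z r s t : ℤ, x ^ 2 + y ^ 2 + z ^ 2 = m ∧ r * x + s * y + t * z = 1

theorem isPrimitiveSumThreeSq_of_dvd {m d b : ℤ} (hd : 0 < d) (hdm : 1 < d * m)
    (h : d * m - 1 ∣ b ^ 2 + d) : IsPrimitiveSumThreeSq m := by
  obtain ⟨a, ha⟩ := h
  have ha0 : 0 < a :=
    pos_of_mul_pos_right (by rw [← ha]; positivity : 0 < (d * m - 1) * a) (by lia)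
  obtain ⟨u, v, w, -, -, huw, -, -, hww⟩ := hasGram_of_det_eq_one a b 1 (d * m - 1) 0 m ha0
    (by linarith) (by linear_combination -m * ha)
  simp only [dotProduct, Fin.sum_univ_three] at huw hww
  exact ⟨w 0, w 1, w 2, u 0, u 1, u 2, by linear_combination hww, huw⟩

theorem exists_dvd_sq_add_of_jacobiSym {q : ℕ} (hq : q.Prime) {d : ℤ} (h : J(-d | q) = 1) :
    ∃ b : ℤ, (q : ℤ) ∣ b ^ 2 + d := by
  have : Fact q.Prime := ⟨hq⟩
  obtain ⟨r, hr⟩ := ZMod.isSquare_of_jacobiSym_eq_one h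
  refine ⟨r.valMinAbs, ?_⟩
  rw [← ZMod.intCast_zmod_eq_zero_iff_dvd]
  push_cast
  rw [Int.cast_neg] at hr
  linear_combination -hr

theorem isPrimitiveSumThreeSq_of_mod_four_eq_two {m : ℕ} (hm : m % 4 = 2) :
    IsPrimitiveSumThreeSq m := by
  have hcop : (m - 1).Coprime (4 * m) := by
    refine Nat.Coprime.mul_right ?_ ?_
    · exact Nat.Coprime.pow_right 2 (Nat.coprime_two_right.2 (Nat.odd_iff.2 (by lia)))
    · exact (Nat.coprime_self_sub_left (by lia)).2 (Nat.coprime_one_left m)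
  obtain ⟨q, hqgt, hq, hqm⟩ := Nat.forall_exists_prime_gt_and_modEq (m - 1) (by lia) hcop
  obtain ⟨j, hj⟩ := (Nat.modEq_iff_dvd' hqgt.le).1 hqm.symm
  have hqd : q + 1 = (4 * j + 1) * m := by
    have : q = 4 * m * j + (m - 1) := by lia
    rw [this, add_assoc, Nat.sub_add_cancel (by lia)]; ring
  have hq4 : q % 4 = 1 := by
    have : q = 4 * (m * j) + (m - 1) := by rw [← mul_assoc]; lia
    lia
  have hqd' : ((4 * j + 1 : ℕ) : ℤ) * m = q + 1 := by exact_mod_cast hqd.symm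
  have hJ : J(-((4 * j + 1 : ℕ) : ℤ) | q) = 1 := by
    have hd : Odd (4 * j + 1) := Nat.odd_iff.2 (by lia)
    rw [jacobiSym.neg _ (Nat.odd_iff.2 (by lia)), ZMod.χ₄_nat_one_mod_four hq4, one_mul,
      jacobiSym.quadratic_reciprocity_one_mod_four' hd hq4,
      jacobiSym.mod_left' (a₂ := -1), jacobiSym.at_neg_one hd,
      ZMod.χ₄_nat_one_mod_four (by lia)]
    exact Int.modEq_iff_dvd.2 ⟨-m, by linarith⟩
  obtain ⟨b, hb⟩ := exists_dvd_sq_add_of_jacobiSym hq hJ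
  refine isPrimitiveSumThreeSq_of_dvd (d := (4 * j + 1 : ℕ)) (b := b) (by lia) ?_ ?_
  · rw [hqd']; have := hq.pos; lia
  · rw [hqd', add_sub_cancel_right]; exact hb

theorem isPrimitiveSumThreeSq_of_odd {m : ℕ} (hm1 : 1 < m)
    (hm : m % 8 = 1 ∨ m % 8 = 3 ∨ m % 8 = 5) : IsPrimitiveSumThreeSq m := by
  obtain ⟨c, hc, hc8, hcm⟩ : ∃ c : ℕ, (c = 1 ∨ c = 3) ∧ (c = 1 → m % 8 = 3) ∧
      (c = 3 → m % 8 = 1 ∨ m % 8 = 5) := by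
    rcases hm with h | h | h
    · exact ⟨3, by lia⟩
    · exact ⟨1, by lia⟩
    · exact ⟨3, by lia⟩
  obtain ⟨l, hl⟩ : ∃ l, c * m = 2 * l + 1 := by
    have hco : Odd (c * m) :=
      (Nat.odd_iff.2 (by lia)).mul (Nat.odd_iff.2 (by lia))
    exact hco
  have hlodd : l % 2 = 1 := by rcases hc with rfl | rfl <;> lia
  have hcop : l.Coprime (4 * m) := by
    refine Nat.Coprime.mul_right ?_ ?_
    · exact Nat.Coprime.pow_right 2 (Nat.coprime_two_right.2 (Nat.odd_iff.2 hlodd))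
    · have : IsCoprime (l : ℤ) (m : ℤ) := ⟨-2, c, by
        have : (c : ℤ) * m = 2 * l + 1 := by exact_mod_cast hl
        linarith⟩
      exact Nat.isCoprime_iff_coprime.1 this
  obtain ⟨q, hqgt, hq, hqm⟩ := Nat.forall_exists_prime_gt_and_modEq l (by lia) hcop
  obtain ⟨j, hj⟩ := (Nat.modEq_iff_dvd' hqgt.le).1 hqm.symm
  have hq' : q = 4 * (m * j) + l := by rw [← mul_assoc]; lia
  have hqd : 2 * q + 1 = (8 * j + c) * m := by
    rw [add_mul, hl, hq']; ring
  have hqodd : Odd q := Nat.odd_iff.2 (by lia)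
  have hdodd : Odd (8 * j + c) := Nat.odd_iff.2 (by lia)
  have hqd' : ((8 * j + c : ℕ) : ℤ) * m = 2 * q + 1 := by exact_mod_cast hqd.symm
  have hJd : J((q : ℤ) | 8 * j + c) = 1 := by
    have h2 : J(-2 * (q : ℤ) | 8 * j + c) = 1 := by
      rw [jacobiSym.mod_left' (a₂ := 1), jacobiSym.one_left]
      exact Int.modEq_iff_dvd.2 ⟨m, by linarith⟩
    have h3 : J(-2 | 8 * j + c) = 1 := by
      rw [jacobiSym.at_neg_two hdodd, ZMod.χ₈'_nat_eq_if_mod_eight]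
      have : (8 * j + c) % 8 = 1 ∨ (8 * j + c) % 8 = 3 := by lia
      grind
    rwa [jacobiSym.mul_left, h3, one_mul] at h2
  have hJ : J(-((8 * j + c : ℕ) : ℤ) | q) = 1 := by
    rw [jacobiSym.neg _ hqodd]
    rcases Nat.odd_mod_four_iff.1 (Nat.odd_iff.1 hqodd) with h | h
    · rw [ZMod.χ₄_nat_one_mod_four h, one_mul,
        jacobiSym.quadratic_reciprocity_one_mod_four' hdodd h, hJd]
    · have : (8 * j + c) % 4 = 3 := by rcases hc with rfl | rfl <;> lia
      rw [ZMod.χ₄_nat_three_mod_four h,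
        jacobiSym.quadratic_reciprocity_three_mod_four this h, hJd]
      norm_num
  obtain ⟨b₀, hb₀⟩ := exists_dvd_sq_add_of_jacobiSym hq hJ
  obtain ⟨b, hb, hbodd⟩ : ∃ b : ℤ, (q : ℤ) ∣ b ^ 2 + (8 * j + c : ℕ) ∧ b % 2 = 1 := by
    rcases Int.emod_two_eq_zero_or_one b₀ with h | h
    · refine ⟨b₀ + q, ?_, by have := Nat.odd_iff.1 hqodd; lia⟩
      have := dvd_add hb₀ (dvd_mul_right (q : ℤ) (2 * b₀ + q))
      rwa [(by ring : (b₀ + q) ^ 2 + ((8 * j + c : ℕ) : ℤ) =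
        b₀ ^ 2 + (8 * j + c : ℕ) + q * (2 * b₀ + q))]
    · exact ⟨b₀, hb₀, h⟩
  refine isPrimitiveSumThreeSq_of_dvd (d := (8 * j + c : ℕ)) (b := b) (by lia) ?_ ?_
  · rw [hqd']; have := hq.pos; lia
  · rw [hqd', add_sub_cancel_right]
    refine IsCoprime.mul_dvd ?_ ?_ hb
    · exact Nat.isCoprime_iff_coprime.2 (Nat.coprime_two_left.2 hqodd)
    · have h1 : Odd (b ^ 2) := (Int.odd_iff.2 hbodd).pow
      have h2 : Odd ((8 * j + c : ℕ) : ℤ) := by exact_mod_cast hdodd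
      exact (h1.add_odd h2).two_dvd

theorem IsPrimitiveSumThreeSq.exists_ne_zero {m : ℤ} (h : IsPrimitiveSumThreeSq m) (p : ℕ)
    [Fact p.Prime] : ∃ x y z : ℤ, x ^ 2 + y ^ 2 + z ^ 2 = m ∧
      ¬((x : ZMod p) = 0 ∧ (y : ZMod p) = 0 ∧ (z : ZMod p) = 0) := by
  obtain ⟨x, y, z, r, s, t, h, h1⟩ := h
  refine ⟨x, y, z, h, fun ⟨hx, hy, hz⟩ ↦ one_ne_zero (α := ZMod p) ?_⟩
  have := congrArg (Int.cast : ℤ → ZMod p) h1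
  push_cast at this
  rw [← this, hx, hy, hz]
  ring

theorem Int.not_sum_three_sq_emod_eight_eq_seven (x y z : ℤ) :
    (x ^ 2 + y ^ 2 + z ^ 2) % 8 ≠ 7 := by
  have key : ∀ x y z : ZMod 8, x ^ 2 + y ^ 2 + z ^ 2 ≠ 7 := by decide
  intro h
  refine key x y z ?_
  have := (ZMod.intCast_eq_intCast_iff' (x ^ 2 + y ^ 2 + z ^ 2) 7 8).2 h
  exact_mod_cast this

theorem FiniteField.isSquare_mul_of_not_isSquare {F : Type*} [Field F] [Finite F] {a b : F}
    (ha : ¬IsSquare a) (hb : ¬IsSquare b) : IsSquare (a * b) := by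
  classical
  have := Fintype.ofFinite F
  by_contra h
  rw [← quadraticChar_neg_one_iff_not_isSquare] at ha hb h
  rw [map_mul, ha, hb] at h
  norm_num at h

section ThreeModFour

variable {p : ℕ} [Fact p.Prime]

theorem ZMod.sq_add_sq_eq_zero (hp : p % 4 = 3) {x y : ZMod p} (h : x ^ 2 + y ^ 2 = 0) :
    x = 0 ∧ y = 0 := by
  have hy : y = 0 := by
    by_contra hy
    exact ZMod.mod_four_ne_three_of_sq_eq_neg_one (y := x / y)
      (by field_simp; linear_combination h) hp
  subst hy
  simpa using h

theorem ZMod.sq_add_mul_sq_eq_zero (hp : p % 4 = 3) {d x y : ZMod p} (hd : IsSquare d)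
    (hd0 : d ≠ 0) (h : x ^ 2 + d * y ^ 2 = 0) : x = 0 ∧ y = 0 := by
  obtain ⟨r, rfl⟩ := hd
  obtain ⟨hx, hy⟩ := ZMod.sq_add_sq_eq_zero hp (x := x) (y := r * y) (by linear_combination h)
  exact ⟨hx, (mul_eq_zero.1 hy).resolve_left (left_ne_zero_of_mul hd0)⟩

/-- `n` is a sum of four squares of integers prime to `p`. -/
def IsSumFourSqUnits (p n : ℕ) : Prop :=
  ∃ a b c d : ℤ, a ^ 2 + b ^ 2 + c ^ 2 + d ^ 2 = n ∧
    (a : ZMod p) ≠ 0 ∧ (b : ZMod p) ≠ 0 ∧ (c : ZMod p) ≠ 0 ∧ (d : ZMod p) ≠ 0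

theorem isSumFourSqUnits_of_isSquare_two (hp : p % 4 = 3) (h2 : IsSquare (2 : ZMod p))
    (h20 : (2 : ZMod p) ≠ 0) {n : ℕ} (hn : n % 8 = 7) (hpn : (n : ZMod p) = 0) :
    IsSumFourSqUnits p n := by
  obtain ⟨x, y, z, hxyz, hprim⟩ :=
    (isPrimitiveSumThreeSq_of_mod_four_eq_two (m := 2 * n) (by lia)).exists_ne_zero p
  obtain ⟨t, a, b, h, hprim⟩ : ∃ t a b : ℤ, t ^ 2 + t ^ 2 + a ^ 2 + b ^ 2 = n ∧
      ¬((t : ZMod p) = 0 ∧ (a : ZMod p) = 0 ∧ (b : ZMod p) = 0) := by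
    have key (x y z : ℤ) (h : x ^ 2 + y ^ 2 + z ^ 2 = (2 * n : ℕ))
        (hprim : ¬((x : ZMod p) = 0 ∧ (y : ZMod p) = 0 ∧ (z : ZMod p) = 0))
        (hx : 2 ∣ x) (hyz : 2 ∣ y - z) :
        ∃ t a b : ℤ, t ^ 2 + t ^ 2 + a ^ 2 + b ^ 2 = n ∧
        ¬((t : ZMod p) = 0 ∧ (a : ZMod p) = 0 ∧ (b : ZMod p) = 0) := by
      obtain ⟨t, rfl⟩ := hx
      obtain ⟨b, hb⟩ := hyz
      obtain rfl : y = z + 2 * b := by linarith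
      refine ⟨t, z + b, b, ?_, fun ⟨ht, ha, hb⟩ ↦ hprim ?_⟩
      · push_cast at h
        linarith
      · push_cast at ha ⊢
        exact ⟨by rw [ht, mul_zero], by linear_combination ha + hb, by linear_combination ha - hb⟩
    have hpar : Even (x ^ 2 + y ^ 2 + z ^ 2) := by rw [hxyz]; simp
    simp only [Int.even_add, Int.even_pow, ne_eq, two_ne_zero, not_false_eq_true, and_true]
      at hpar
    simp only [Int.even_iff] at hpar
    by_cases hx : x % 2 = 0
    · exact key x y z hxyz hprim (by lia) (by lia)
    by_cases hy : y % 2 = 0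
    · exact key y x z (by linarith) (by tauto) (by lia) (by lia)
    · exact key z x y (by linarith) (by tauto) (by lia) (by lia)
  have h0 := congrArg (Int.cast : ℤ → ZMod p) h
  push_cast at h0
  rw [hpn] at h0
  have ht : (t : ZMod p) ≠ 0 := fun ht ↦ hprim
    ⟨ht, ZMod.sq_add_sq_eq_zero hp (by linear_combination h0 - 2 * t * ht)⟩
  refine ⟨t, t, a, b, h, ht, ht, fun ha ↦ ht ?_, fun hb ↦ ht ?_⟩
  · exact (ZMod.sq_add_mul_sq_eq_zero hp (x := b) h2 h20 (by linear_combination h0 - a * ha)).2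
  · exact (ZMod.sq_add_mul_sq_eq_zero hp (x := a) h2 h20 (by linear_combination h0 - b * hb)).2

theorem isSumFourSqUnits_of_lt_sq {n : ℕ} (hn : n % 8 = 7) (hlt : n < p ^ 2) :
    IsSumFourSqUnits p n := by
  obtain ⟨a, b, c, d, h⟩ := Nat.sum_four_squares n
  have key (x y z w : ℕ) (h : x ^ 2 + y ^ 2 + z ^ 2 + w ^ 2 = n) : ((x : ℤ) : ZMod p) ≠ 0 := by
    intro hx
    have hdvd : p ∣ x := by
      rw [← ZMod.natCast_eq_zero_iff]
      exact_mod_cast hx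
    have hxp : x < p := lt_of_pow_lt_pow_left₀ 2 (Nat.zero_le p) (by lia)
    obtain rfl := Nat.eq_zero_of_dvd_of_lt hdvd hxp
    refine Int.not_sum_three_sq_emod_eight_eq_seven y z w ?_
    have : (y : ℤ) ^ 2 + z ^ 2 + w ^ 2 = n := by rw [← h]; push_cast; ring
    rw [this]
    lia
  exact ⟨a, b, c, d, by exact_mod_cast h, key a b c d h, key b a c d (by linarith),
    key c a b d (by linarith), key d a b c (by linarith)⟩

theorem isSumFourSqUnits_of_isSquare_three (hp : p % 4 = 3) (h3 : IsSquare (3 : ZMod p))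
    (h20 : (2 : ZMod p) ≠ 0) (h30 : (3 : ZMod p) ≠ 0) {n : ℕ} (hn : n % 8 = 7)
    (hpn : (n : ZMod p) = 0) : IsSumFourSqUnits p n := by
  rcases lt_or_ge n (p ^ 2) with hlt | hge
  · exact isSumFourSqUnits_of_lt_sq hn hlt
  have hp8 : p ^ 2 % 8 = 1 := by
    rcases (by lia : p % 8 = 3 ∨ p % 8 = 7) with h | h <;> simp [Nat.pow_mod, h]
  have hpp : 0 < p ^ 2 := by lia
  obtain ⟨x, y, z, hxyz, hprim⟩ :=
    (isPrimitiveSumThreeSq_of_odd (m := 4 * n - p ^ 2) (by lia) (by lia)).exists_ne_zero p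
  rw [Nat.cast_sub (by lia)] at hxyz
  push_cast at hxyz
  have hodd : x % 2 = 1 ∧ y % 2 = 1 ∧ z % 2 = 1 := by
    have key : ∀ x y z : ZMod 4, x ^ 2 + y ^ 2 + z ^ 2 = 3 → 2 * x = 2 ∧ 2 * y = 2 ∧ 2 * z = 2 := by
      decide
    have h4 : ((x ^ 2 + y ^ 2 + z ^ 2 : ℤ) : ZMod 4) = (3 : ℤ) := by
      rw [ZMod.intCast_eq_intCast_iff', hxyz]
      have : ((p : ℤ) ^ 2) % 8 = 1 := by exact_mod_cast hp8
      lia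
    have h2 (x : ℤ) (hx : 2 * (x : ZMod 4) = 2) : x % 2 = 1 := by
      have : ((2 * x : ℤ) : ZMod 4) = (2 : ℤ) := by exact_mod_cast hx
      rw [ZMod.intCast_eq_intCast_iff'] at this
      lia
    obtain ⟨hx, hy, hz⟩ := key x y z (by exact_mod_cast h4)
    exact ⟨h2 x hx, h2 y hy, h2 z hz⟩
  obtain ⟨hxo, hyo, hzo⟩ := hodd
  obtain ⟨x, hxyz, hprim, hxo, hsum⟩ : ∃ x : ℤ, x ^ 2 + y ^ 2 + z ^ 2 = 4 * n - p ^ 2 ∧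
      ¬((x : ZMod p) = 0 ∧ (y : ZMod p) = 0 ∧ (z : ZMod p) = 0) ∧ x % 2 = 1 ∧
      (p + x + y + z) % 4 = 0 := by
    rcases (by lia : (p + x + y + z) % 4 = 0 ∨ (p + -x + y + z) % 4 = 0) with h | h
    · exact ⟨x, hxyz, hprim, hxo, h⟩
    · exact ⟨-x, by linarith, by simpa using hprim, by lia, h⟩
  obtain ⟨a, ha⟩ := Int.dvd_of_emod_eq_zero hsum
  obtain ⟨b, hb⟩ : 4 ∣ p + x - y - z := by lia
  obtain ⟨c, hc⟩ : 4 ∣ p - x + y - z := by lia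
  obtain ⟨d, hd⟩ : 4 ∣ p - x - y + z := by lia
  have hx : x = a + b - c - d := by lia
  have hy : y = a - b + c - d := by lia
  have hz : z = a - b - c + d := by lia
  have hp' : (p : ℤ) = a + b + c + d := by lia
  have hn' : a ^ 2 + b ^ 2 + c ^ 2 + d ^ 2 = n := by
    rw [hx, hy, hz, hp'] at hxyz
    linarith
  have h0 := congrArg (Int.cast : ℤ → ZMod p) hn'
  have hs := congrArg (Int.cast : ℤ → ZMod p) hp'
  push_cast at h0 hs
  rw [hpn] at h0
  rw [ZMod.natCast_self] at hs
  rw [hx, hy, hz] at hprim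
  push_cast at hprim
  have key {a b c d : ZMod p} (hs : 0 = a + b + c + d) (h : a ^ 2 + b ^ 2 + c ^ 2 + d ^ 2 = 0)
      (ha : a = 0) : b = 0 ∧ c = 0 ∧ d = 0 := by
    obtain ⟨h1, hc⟩ := ZMod.sq_add_mul_sq_eq_zero hp (x := 2 * b + c) (y := c) h3 h30 (by
      subst ha
      obtain rfl : d = -b - c := by linear_combination -hs
      linear_combination 2 * h)
    have hb : b = 0 := by
      refine (mul_eq_zero.1 (?_ : 2 * b = 0)).resolve_left h20
      linear_combination h1 - hc
    exact ⟨hb, hc, by linear_combination -hs - ha - hb - hc⟩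
  refine ⟨a, b, c, d, hn', fun h ↦ hprim ?_, fun h ↦ hprim ?_, fun h ↦ hprim ?_,
    fun h ↦ hprim ?_⟩
  · obtain ⟨h1, h2, h3⟩ := key hs h0 h
    simp [h, h1, h2, h3]
  · obtain ⟨h1, h2, h3⟩ := key (a := b) (b := a) (c := c) (d := d) (by linear_combination hs)
      (by linear_combination h0) h
    simp [h, h1, h2, h3]
  · obtain ⟨h1, h2, h3⟩ := key (a := c) (b := a) (c := b) (d := d) (by linear_combination hs)
      (by linear_combination h0) h
    simp [h, h1, h2, h3]
  · obtain ⟨h1, h2, h3⟩ := key (a := d) (b := a) (c := b) (d := c) (by linear_combination hs)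
      (by linear_combination h0) h
    simp [h, h1, h2, h3]

theorem IsPrimitiveSumThreeSq.exists_sq_add_sq_add_five_mul_sq {m : ℤ}
    (h : IsPrimitiveSumThreeSq (5 * m)) (p : ℕ) [Fact p.Prime] :
    ∃ a b t : ℤ, a ^ 2 + b ^ 2 + 5 * t ^ 2 = m ∧
      ¬((a : ZMod p) = 0 ∧ (b : ZMod p) = 0 ∧ (t : ZMod p) = 0) := by
  obtain ⟨x, y, z, hxyz, hprim⟩ := h.exists_ne_zero p
  have key (x y z : ℤ) (h : x ^ 2 + y ^ 2 + z ^ 2 = 5 * m)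
      (hprim : ¬((x : ZMod p) = 0 ∧ (y : ZMod p) = 0 ∧ (z : ZMod p) = 0))
      (hz : (z : ZMod 5) = 0 ∧ ((y : ZMod 5) = 2 * x ∨ (y : ZMod 5) = 2 * (-x))) :
      ∃ a b t : ℤ, a ^ 2 + b ^ 2 + 5 * t ^ 2 = m ∧
      ¬((a : ZMod p) = 0 ∧ (b : ZMod p) = 0 ∧ (t : ZMod p) = 0) := by
    obtain ⟨hz, hxy⟩ := hz
    obtain ⟨t, rfl⟩ := (ZMod.intCast_zmod_eq_zero_iff_dvd z 5).1 hz
    obtain ⟨x', hx', hxx⟩ : ∃ x' : ℤ, (y : ZMod 5) = 2 * x' ∧ (x' = x ∨ x' = -x) := by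
      rcases hxy with h | h
      · exact ⟨x, h, .inl rfl⟩
      · exact ⟨-x, by simpa using h, .inr rfl⟩
    have hdvd : ((5 : ℕ) : ℤ) ∣ y - 2 * x' := by
      rw [← ZMod.intCast_zmod_eq_zero_iff_dvd]
      push_cast
      linear_combination hx'
    obtain ⟨w, hw⟩ := hdvd
    obtain rfl : y = 2 * x' + 5 * w := by push_cast at hw; linarith
    have hsq : x ^ 2 = x' ^ 2 := by rcases hxx with rfl | rfl <;> ring
    refine ⟨x' + 2 * w, w, t, ?_, fun ⟨ha, hb, ht⟩ ↦ hprim ?_⟩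
    · push_cast at h
      linarith
    · push_cast at ha ⊢
      have hx0 : (x' : ZMod p) = 0 := by linear_combination ha - 2 * hb
      refine ⟨?_, by rw [hx0, hb]; ring, by rw [ht]; ring⟩
      rcases hxx with rfl | rfl
      · exact hx0
      · simpa using hx0
  have hmod : ∀ x y z : ZMod 5, x ^ 2 + y ^ 2 + z ^ 2 = 0 →
      (z = 0 ∧ (y = 2 * x ∨ y = 2 * (-x))) ∨ (y = 0 ∧ (z = 2 * x ∨ z = 2 * (-x))) ∨
      (x = 0 ∧ (z = 2 * y ∨ z = 2 * (-y))) := by decide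
  have h5 : (x : ZMod 5) ^ 2 + (y : ZMod 5) ^ 2 + (z : ZMod 5) ^ 2 = 0 := by
    have := (ZMod.intCast_zmod_eq_zero_iff_dvd (x ^ 2 + y ^ 2 + z ^ 2) 5).2 ⟨m, hxyz⟩
    exact_mod_cast this
  rcases hmod x y z h5 with h | h | h
  · exact key x y z hxyz hprim h
  · exact key x z y (by linarith) (by tauto) h
  · exact key y z x (by linarith) (by tauto) h

theorem isSumFourSqUnits_of_isSquare_five (hp : p % 4 = 3) (h5 : IsSquare (5 : ZMod p))
    (h20 : (2 : ZMod p) ≠ 0) (h50 : (5 : ZMod p) ≠ 0) {n : ℕ} (hn : n % 8 = 7)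
    (hpn : (n : ZMod p) = 0) : IsSumFourSqUnits p n := by
  have h5n := isPrimitiveSumThreeSq_of_odd (m := 5 * n) (by lia) (by lia)
  rw [Nat.cast_mul] at h5n
  obtain ⟨a, b, t, h, hprim⟩ := h5n.exists_sq_add_sq_add_five_mul_sq p
  have h0 := congrArg (Int.cast : ℤ → ZMod p) h
  push_cast at h0
  rw [hpn] at h0
  have ht : (t : ZMod p) ≠ 0 := fun ht ↦ hprim <| by
    obtain ⟨ha, hb⟩ := ZMod.sq_add_sq_eq_zero hp (x := (a : ZMod p)) (y := b)
      (by linear_combination h0 - 5 * t * ht)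
    exact ⟨ha, hb, ht⟩
  refine ⟨a, b, t, 2 * t, by linarith, fun ha ↦ ht ?_, fun hb ↦ ht ?_, ht, ?_⟩
  · exact (ZMod.sq_add_mul_sq_eq_zero hp (x := b) h5 h50 (by linear_combination h0 - a * ha)).2
  · exact (ZMod.sq_add_mul_sq_eq_zero hp (x := a) h5 h50 (by linear_combination h0 - b * hb)).2
  · push_cast
    exact mul_ne_zero h20 ht

theorem isSumFourSqUnits_of_isSquare_six_ten (hp : p % 4 = 3) (h6 : IsSquare (6 : ZMod p))
    (h10 : IsSquare (10 : ZMod p)) (h20 : (2 : ZMod p) ≠ 0) (h30 : (3 : ZMod p) ≠ 0)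
    (h50 : (5 : ZMod p) ≠ 0) {n : ℕ} (hn : n % 8 = 7) (hpn : (n : ZMod p) = 0) :
    IsSumFourSqUnits p n := by
  have h60 : (6 : ZMod p) ≠ 0 := by
    have := mul_ne_zero h20 h30
    norm_num at this
    exact this
  have h100 : (10 : ZMod p) ≠ 0 := by
    have := mul_ne_zero h20 h50
    norm_num at this
    exact this
  have h10n := isPrimitiveSumThreeSq_of_mod_four_eq_two (m := 5 * (2 * n)) (by lia)
  rw [Nat.cast_mul] at h10n
  obtain ⟨a, b, t, h, hprim⟩ := h10n.exists_sq_add_sq_add_five_mul_sq p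
  push_cast at h
  have of_even_third (a b t : ℤ) (h : a ^ 2 + b ^ 2 + 5 * t ^ 2 = 2 * n)
      (hprim : ¬((a : ZMod p) = 0 ∧ (b : ZMod p) = 0 ∧ (t : ZMod p) = 0))
      (ht : 2 ∣ t) (hab : 2 ∣ a - b) : IsSumFourSqUnits p n := by
    obtain ⟨s, rfl⟩ := ht
    obtain ⟨g, hg⟩ := hab
    obtain rfl : a = b + 2 * g := by linarith
    have hn' : (b + g) ^ 2 + g ^ 2 + s ^ 2 + (3 * s) ^ 2 = n := by linarith
    have h0 := congrArg (Int.cast : ℤ → ZMod p) hn'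
    push_cast at h0 hprim
    rw [hpn] at h0
    have hs : (s : ZMod p) ≠ 0 := fun hs ↦ hprim <| by
      obtain ⟨h1, h2⟩ := ZMod.sq_add_sq_eq_zero hp (x := (b + g : ZMod p)) (y := g)
        (by linear_combination h0 - 10 * s * hs)
      exact ⟨by linear_combination h1 + h2, by linear_combination h1 - h2, by rw [hs, mul_zero]⟩
    refine ⟨b + g, g, s, 3 * s, hn', fun h1 ↦ hs ?_, fun h1 ↦ hs ?_, hs, ?_⟩
    · push_cast at h1
      exact (ZMod.sq_add_mul_sq_eq_zero hp (x := g) h10 h100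
        (by linear_combination h0 - (b + g) * h1)).2
    · exact (ZMod.sq_add_mul_sq_eq_zero hp (x := b + g) h10 h100
        (by linear_combination h0 - g * h1)).2
    · push_cast
      exact mul_ne_zero h30 hs
  have of_even_first (a b t : ℤ) (h : a ^ 2 + b ^ 2 + 5 * t ^ 2 = 2 * n)
      (hprim : ¬((a : ZMod p) = 0 ∧ (b : ZMod p) = 0 ∧ (t : ZMod p) = 0))
      (ha : 2 ∣ a) (hbt : 2 ∣ b - t) : IsSumFourSqUnits p n := by
    obtain ⟨r, rfl⟩ := ha
    obtain ⟨g, hg⟩ := hbt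
    obtain rfl : b = t + 2 * g := by linarith
    have hn' : (t + g) ^ 2 + g ^ 2 + (r + t) ^ 2 + (r - t) ^ 2 = n := by linarith
    have h0 := congrArg (Int.cast : ℤ → ZMod p) hn'
    push_cast at h0 hprim
    rw [hpn] at h0
    have of_six (h1 : (2 * r : ZMod p) ^ 2 + 6 * t ^ 2 = 0) (h2 : (g : ZMod p) * (t + g) = 0) :
        False := by
      obtain ⟨hr, ht⟩ := ZMod.sq_add_mul_sq_eq_zero hp h6 h60 h1
      have hg : (g : ZMod p) = 0 := by simpa [ht] using h2
      exact hprim ⟨hr, by rw [ht, hg]; ring, ht⟩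
    have of_nine (h1 : (r + t : ZMod p) * (r - t) = 0) : False := by
      obtain ⟨hb, ht⟩ := ZMod.sq_add_sq_eq_zero hp (x := (t + 2 * g : ZMod p)) (y := 3 * t)
        (by linear_combination 2 * h0 - 4 * h1)
      have ht := (mul_eq_zero.1 ht).resolve_left h30
      have hr : (r : ZMod p) = 0 := by simpa [ht] using h1
      exact hprim ⟨by rw [hr, mul_zero], hb, ht⟩
    refine ⟨t + g, g, r + t, r - t, hn', fun h1 ↦ ?_, fun h1 ↦ ?_, fun h1 ↦ ?_, fun h1 ↦ ?_⟩ <;>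
      push_cast at h1
    · exact of_six (by linear_combination 2 * h0 - 4 * g * h1) (by rw [h1, mul_zero])
    · exact of_six (by linear_combination 2 * h0 - 4 * (t + g) * h1) (by rw [h1, zero_mul])
    · exact of_nine (by rw [h1, zero_mul])
    · exact of_nine (by rw [h1, mul_zero])
  have hpar : Even (a ^ 2 + b ^ 2 + 5 * t ^ 2) := by rw [h]; simp
  simp only [Int.even_add, Int.even_pow, Int.even_mul, ne_eq, two_ne_zero, not_false_eq_true,
    and_true, (by decide : ¬Even (5 : ℤ)), false_or] at hpar
  simp only [Int.even_iff] at hpar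
  by_cases ht : t % 2 = 0
  · exact of_even_third a b t h hprim (by lia) (by lia)
  by_cases ha : a % 2 = 0
  · exact of_even_first a b t h hprim (by lia) (by lia)
  · exact of_even_first b a t (by linarith) (by tauto) (by lia) (by lia)

theorem isSumFourSqUnits_of_mod_eight_eq_seven (hp : p % 4 = 3) (hp3 : 3 < p) {n : ℕ}
    (hn : n % 8 = 7) (hpn : (n : ZMod p) = 0) : IsSumFourSqUnits p n := by
  have hne (m : ℕ) (hm : ¬p ∣ m) : (m : ZMod p) ≠ 0 := by
    rwa [ne_eq, ZMod.natCast_eq_zero_iff]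
  have h20 : (2 : ZMod p) ≠ 0 := hne 2 (Nat.not_dvd_of_pos_of_lt (by lia) (by lia))
  have h30 : (3 : ZMod p) ≠ 0 := hne 3 (Nat.not_dvd_of_pos_of_lt (by lia) (by lia))
  have h50 : (5 : ZMod p) ≠ 0 := hne 5 (Nat.not_dvd_of_pos_of_lt (by lia) (by lia))
  by_cases h2 : IsSquare (2 : ZMod p)
  · exact isSumFourSqUnits_of_isSquare_two hp h2 h20 hn hpn
  by_cases h3 : IsSquare (3 : ZMod p)
  · exact isSumFourSqUnits_of_isSquare_three hp h3 h20 h30 hn hpn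
  by_cases h5 : IsSquare (5 : ZMod p)
  · exact isSumFourSqUnits_of_isSquare_five hp h5 h20 h50 hn hpn
  have h6 := FiniteField.isSquare_mul_of_not_isSquare h2 h3
  have h10 := FiniteField.isSquare_mul_of_not_isSquare h2 h5
  norm_num at h6 h10
  exact isSumFourSqUnits_of_isSquare_six_ten hp h6 h10 h20 h30 h50 hn hpn

end ThreeModFour

theorem divisible_case_three_mod_four (p : ℕ) (hp : p.Prime) (hp3 : p % 4 = 3)
    (hpgt : 3 < p) (n : ℕ) (hn : 0 < n) (hpn : p ∣ n) :
    ∃ k : ℕ, (k = 3 ∨ k = 4) ∧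
      ∃ x : Fin k → ℤ, (∀ i, ¬ (p : ℤ) ∣ x i) ∧ (n : ℤ) = ∑ i, (x i) ^ 2 := by
  have : Fact p.Prime := ⟨hp⟩
  induction n using Nat.strong_induction_on with
  | _ n ih =>
    by_cases h4 : 4 ∣ n
    · obtain ⟨m, rfl⟩ := h4
      have hpm : p ∣ m := by
        refine (Nat.Coprime.dvd_of_dvd_mul_left ?_ hpn)
        exact Nat.Coprime.pow_right 2 (Nat.coprime_two_right.2 (Nat.odd_iff.2 (by lia)))
      obtain ⟨k, hk, x, hx, hm⟩ := ih m (by lia) (by lia) hpm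
      refine ⟨k, hk, fun i ↦ 2 * x i, fun i hi ↦ ?_, ?_⟩
      · rcases Int.Prime.dvd_mul' hp hi with h | h
        · have := Int.le_of_dvd (by norm_num) h
          lia
        · exact hx i h
      · simp only [mul_pow, ← Finset.mul_sum, ← hm]
        push_cast
        ring
    have hpn' : (n : ZMod p) = 0 := (ZMod.natCast_eq_zero_iff n p).2 hpn
    by_cases h7 : n % 8 = 7
    · obtain ⟨a, b, c, d, h, ha, hb, hc, hd⟩ :=
        isSumFourSqUnits_of_mod_eight_eq_seven hp3 hpgt h7 hpn'
      simp only [ne_eq, ZMod.intCast_zmod_eq_zero_iff_dvd] at ha hb hc hd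
      refine ⟨4, .inr rfl, ![a, b, c, d], ?_, by simp [Fin.sum_univ_four, h]⟩
      simp [Fin.forall_fin_succ, ha, hb, hc, hd]
    have hprim : IsPrimitiveSumThreeSq n := by
      by_cases h2 : n % 4 = 2
      · exact isPrimitiveSumThreeSq_of_mod_four_eq_two h2
      · exact isPrimitiveSumThreeSq_of_odd (hp.one_lt.trans_le (Nat.le_of_dvd hn hpn)) (by lia)
    obtain ⟨x, y, z, h, hprim⟩ := hprim.exists_ne_zero p
    have h0 := congrArg (Int.cast : ℤ → ZMod p) h
    push_cast at h0
    rw [hpn'] at h0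
    have hx : (x : ZMod p) ≠ 0 := fun hx ↦ hprim
      ⟨hx, ZMod.sq_add_sq_eq_zero hp3 (by linear_combination h0 - x * hx)⟩
    have hy : (y : ZMod p) ≠ 0 := fun hy ↦
      hx (ZMod.sq_add_sq_eq_zero hp3 (y := (z : ZMod p)) (by linear_combination h0 - y * hy)).1
    have hz : (z : ZMod p) ≠ 0 := fun hz ↦
      hx (ZMod.sq_add_sq_eq_zero hp3 (y := (y : ZMod p)) (by linear_combination h0 - z * hz)).1
    simp only [ne_eq, ZMod.intCast_zmod_eq_zero_iff_dvd] at hx hy hz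
    refine ⟨3, .inl rfl, ![x, y, z], ?_, by simp [Fin.sum_univ_three, h]⟩
    simp [Fin.forall_fin_succ, hx, hy, hz]
end

section
/- For every prime p ≥ 7, every positive integer n can be written as a sum of at most 4 squares of integers none of which is divisible by p. Moreover, for p = 5 the same holds for all positive integers n except n = 79. -/
/-- The integer `n` is a sum of three integer squares. -/
def IsSumThreeSquares (n : ℤ) : Prop := ∃ x y z : ℤ, n = x ^ 2 + y ^ 2 + z ^ 2

/-- The ternary quadratic form with symmetric matrix `[[a, f, e], [f, b, d], [e, d, c]]`. -/
def ternaryForm (a b c d e f x y z : ℤ) : ℤ :=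
  a * x ^ 2 + b * y ^ 2 + c * z ^ 2 + 2 * d * (y * z) + 2 * e * (x * z) + 2 * f * (x * y)

lemma exists_abs_two_mul_add_mul_le (u : ℤ) {v : ℤ} (hv : 0 < v) :
    ∃ k : ℤ, 2 * (u + k * v) ≤ v ∧ -v ≤ 2 * (u + k * v) := by
  refine ⟨-((2 * u + v) / (2 * v)), ?_⟩
  have h1 := Int.emod_add_mul_ediv (2 * u + v) (2 * v)
  have h2 := Int.emod_nonneg (2 * u + v) (by omega : 2 * v ≠ 0)
  have h3 := Int.emod_lt_of_pos (2 * u + v) (by omega : 0 < 2 * v)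
  constructor <;> nlinarith

lemma isSumThreeSquares_ternaryForm_of_bounds {a b c d e f : ℤ} (ha : 0 < a)
    (hdet : a * b * c + 2 * d * e * f - a * d ^ 2 - b * e ^ 2 - c * f ^ 2 = 1)
    (hA : 0 < a * b - f ^ 2) (hAa : 3 * (a * b - f ^ 2) ^ 2 ≤ 4 * a)
    (hf : 2 * f ≤ a) (hf' : -a ≤ 2 * f) (hab : a ≤ b) (x y z : ℤ) :
    IsSumThreeSquares (ternaryForm a b c d e f x y z) := by
  have h1 : 3 * a ^ 2 ≤ 4 * (a * b - f ^ 2) := by nlinarith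
  obtain ⟨A, hAdef⟩ : ∃ A, A = a * b - f ^ 2 := ⟨_, rfl⟩
  rw [← hAdef] at h1 hA hAa
  have hA2 : A < 2 := by
    by_contra! h
    have : 2 * a < 3 * A := by
      nlinarith
    nlinarith
  have hA1 : A = 1 := by omega
  subst hA1
  have ha1 : a = 1 := by nlinarith
  subst ha1
  have hf0 : f = 0 := by omega
  subst hf0
  have hb : b = 1 := by linarith
  subst hb
  refine ⟨x + e * z, y + d * z, z, ?_⟩
  have hc : c = 1 + d ^ 2 + e ^ 2 := by linarith
  subst hc
  unfold ternaryForm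
  ring

theorem isSumThreeSquares_ternaryForm {a b c d e f : ℤ} (ha : 0 < a) (hA : 0 < a * b - f ^ 2)
    (hdet : a * b * c + 2 * d * e * f - a * d ^ 2 - b * e ^ 2 - c * f ^ 2 = 1) (x y z : ℤ) :
    IsSumThreeSquares (ternaryForm a b c d e f x y z) := by
  obtain ⟨k, hk⟩ : ∃ k : ℕ, a.toNat = k := ⟨_, rfl⟩
  obtain ⟨l, hl⟩ : ∃ l : ℕ, (a * b - f ^ 2).toNat = l := ⟨_, rfl⟩
  induction k using Nat.strong_induction_on generalizing a b c d e f x y z l with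
  | _ k ihk =>
  induction l using Nat.strong_induction_on generalizing b c d e f x y z with
  | _ l ihl =>
  obtain ⟨s, hs1, hs2⟩ := exists_abs_two_mul_add_mul_le (a * d - e * f) hA
  have hform : ternaryForm a b c d e f x y z =
      ternaryForm a b (c + 2 * s * d + s ^ 2 * b) (d + s * b) (e + s * f) f x (y - s * z) z := by
    unfold ternaryForm; ring
  rw [hform]
  clear hform
  generalize y - s * z = y
  have hdet' : a * b * (c + 2 * s * d + s ^ 2 * b) + 2 * (d + s * b) * (e + s * f) * f
      - a * (d + s * b) ^ 2 - b * (e + s * f) ^ 2 - (c + 2 * s * d + s ^ 2 * b) * f ^ 2 = 1 := by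
    linear_combination hdet
  have hB1 : 2 * (a * (d + s * b) - (e + s * f) * f) ≤ a * b - f ^ 2 := by
    linarith
  have hB2 : -(a * b - f ^ 2) ≤ 2 * (a * (d + s * b) - (e + s * f) * f) := by
    linarith
  clear hdet hs1 hs2
  generalize (c + 2 * s * d + s ^ 2 * b) = c at *
  generalize (d + s * b) = d at *
  generalize (e + s * f) = e at *
  have hminor : (a * b - f ^ 2) * (a * c - e ^ 2) = a + (a * d - e * f) ^ 2 := by
    linear_combination a * hdet'
  have hC : 0 < a * c - e ^ 2 := by
    by_contra! h
    nlinarith [sq_nonneg (a * d - e * f)]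
  by_cases hCA : a * c - e ^ 2 < a * b - f ^ 2
  · have := ihl (a * c - e ^ 2).toNat (by omega) (b := c) (c := b) (d := d) (e := f) (f := e)
      hC (by linear_combination hdet') x z y rfl
    convert this using 1
    unfold ternaryForm; ring
  have hAa : 3 * (a * b - f ^ 2) ^ 2 ≤ 4 * a := by
    push Not at hCA
    nlinarith
  clear hCA hB1 hB2 hminor hC ihl
  obtain ⟨s, hs1, hs2⟩ := exists_abs_two_mul_add_mul_le f ha
  have hform : ternaryForm a b c d e f x y z =
      ternaryForm a (b + 2 * s * f + s ^ 2 * a) c (d + s * e) e (f + s * a) (x - s * y) y z := by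
    unfold ternaryForm; ring
  rw [hform]
  clear hform
  generalize x - s * y = x
  have hdet : a * (b + 2 * s * f + s ^ 2 * a) * c + 2 * (d + s * e) * e * (f + s * a)
      - a * (d + s * e) ^ 2 - (b + 2 * s * f + s ^ 2 * a) * e ^ 2 - c * (f + s * a) ^ 2 = 1 := by
    linear_combination hdet'
  have hAeq : a * b - f ^ 2 = a * (b + 2 * s * f + s ^ 2 * a) - (f + s * a) ^ 2 := by ring
  rw [hAeq] at hA hAa hl
  clear hdet' hAeq
  generalize (b + 2 * s * f + s ^ 2 * a) = b at *
  generalize (d + s * e) = d at *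
  generalize (f + s * a) = f at *
  by_cases hab : a ≤ b
  · exact isSumThreeSquares_ternaryForm_of_bounds ha hdet hA hAa hs1 hs2 hab x y z
  · push Not at hab
    have hb : 0 < b := by
      by_contra! h
      nlinarith [sq_nonneg f]
    have := ihk b.toNat (by omega) (a := b) (b := a) (c := c) (d := e) (e := d) (f := f) hb
      (by linarith) (by linear_combination hdet) y x z rfl _ rfl
    convert this using 1
    unfold ternaryForm; ring

lemma isSumThreeSquares_of_dvd {N d r : ℤ} (hd : 0 < d) (hN : 0 < d * N - 1)
    (h : d * N - 1 ∣ r ^ 2 + d) : IsSumThreeSquares N := by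
  obtain ⟨a, ha⟩ := h
  have hapos : 0 < a := by
    by_contra! h
    nlinarith [sq_nonneg r]
  have := isSumThreeSquares_ternaryForm (a := a) (b := d * N - 1) (c := N) (d := 0) (e := 1)
    (f := r) hapos (by linarith) (by linear_combination - N * ha) 0 0 1
  simpa [ternaryForm] using this

open NumberTheorySymbols in
lemma exists_dvd_sq_add_of_jacobiSym_eq_one {d q : ℕ} (hq : q.Prime) (h : J(-d | q) = 1) :
    ∃ r : ℤ, (q : ℤ) ∣ r ^ 2 + d := by
  have := Fact.mk hq
  obtain ⟨r, hr⟩ := ZMod.isSquare_of_jacobiSym_eq_one h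
  obtain ⟨r, rfl⟩ := ZMod.intCast_surjective r
  refine ⟨r, ?_⟩
  rw [← ZMod.intCast_zmod_eq_zero_iff_dvd]
  push_cast at hr ⊢
  rw [sq, ← hr]
  ring

lemma exists_prime_eq_mul_add {k c : ℕ} (hk : k ≠ 0) (h : c.Coprime k) :
    ∃ q m : ℕ, q.Prime ∧ q = k * m + c := by
  obtain ⟨q, hgt, hq, hmod⟩ := Nat.forall_exists_prime_gt_and_modEq c hk h
  obtain ⟨m, hm⟩ := (Nat.modEq_iff_dvd' hgt.le).1 hmod.symm
  exact ⟨q, m, hq, by omega⟩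

open NumberTheorySymbols in
lemma isSumThreeSquares_of_mod_four_eq_two {N : ℕ} (hN : N % 4 = 2) :
    IsSumThreeSquares N := by
  have hcop : (N - 1).Coprime (4 * N) := by
    refine Nat.Coprime.mul_right ?_ ?_
    · have : (N - 1).Coprime 2 := (Nat.coprime_two_right).2 (Nat.odd_iff.2 (by omega))
      exact Nat.Coprime.pow_right 2 this
    · exact ((Nat.coprime_self_sub_right (by omega : 1 ≤ N)).2 (by simp)).symm
  obtain ⟨q, m, hq, hqm⟩ := exists_prime_eq_mul_add (by omega : 4 * N ≠ 0) hcop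
  have hqd : q + 1 = (4 * m + 1) * N := by
    have : (4 * m + 1) * N = 4 * N * m + N := by ring
    omega
  have hq4 : q % 4 = 1 := by
    have : 4 * N * m = 4 * (N * m) := by ring
    omega
  have hd4 : (4 * m + 1) % 4 = 1 := by omega
  have hmod : ((q : ℤ)) % ((4 * m + 1 : ℕ) : ℤ) = (-1) % ((4 * m + 1 : ℕ) : ℤ) := by
    exact (Int.modEq_iff_dvd).2 ⟨-N, by push_cast; zify at hqd; linarith⟩
  have hqodd : Odd q := Nat.odd_iff.2 (by omega)
  have hJ : J(-(4 * m + 1 : ℕ) | q) = 1 := by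
    rw [jacobiSym.neg _ hqodd, ZMod.χ₄_nat_one_mod_four hq4, one_mul,
      jacobiSym.quadratic_reciprocity_one_mod_four hd4 hqodd, jacobiSym.mod_left' hmod,
      jacobiSym.at_neg_one (Nat.odd_iff.2 (by omega)), ZMod.χ₄_nat_one_mod_four hd4]
  obtain ⟨r, hr⟩ := exists_dvd_sq_add_of_jacobiSym_eq_one hq hJ
  have hqz : ((4 * m + 1 : ℕ) : ℤ) * N - 1 = q := by
    zify at hqd; push_cast; linarith
  refine isSumThreeSquares_of_dvd (d := (4 * m + 1 : ℕ)) (r := r) (by positivity) ?_ ?_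
  · rw [hqz]; exact_mod_cast hq.pos
  · rwa [hqz]

open NumberTheorySymbols in
lemma isSumThreeSquares_of_mod_four_eq_one {N : ℕ} (hN : N % 4 = 1) :
    IsSumThreeSquares N := by
  obtain ⟨t, rfl⟩ : ∃ t, N = 4 * t + 1 := ⟨N / 4, by omega⟩
  rcases Nat.eq_zero_or_pos t with rfl | ht
  · exact ⟨1, 0, 0, by norm_num⟩
  have hcop : (6 * t + 1).Coprime (4 * (4 * t + 1)) := by
    refine Nat.Coprime.mul_right ?_ ?_
    · have : (6 * t + 1).Coprime 2 := (Nat.coprime_two_right).2 (Nat.odd_iff.2 (by omega))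
      exact Nat.Coprime.pow_right 2 this
    · rw [← Nat.isCoprime_iff_coprime]
      exact ⟨-2, 3, by push_cast; ring⟩
  obtain ⟨q, m, hq, hqm⟩ := exists_prime_eq_mul_add (by omega : 4 * (4 * t + 1) ≠ 0) hcop
  have hqd : 2 * q + 1 = (8 * m + 3) * (4 * t + 1) := by
    rw [hqm]; ring
  have hq4 : q % 4 = (2 * t + 1) % 4 := by
    have : 4 * (4 * t + 1) * m = 4 * ((4 * t + 1) * m) := by ring
    omega
  have hd8 : (8 * m + 3) % 8 = 3 := by omega
  have hmod : ((-2 * q : ℤ)) % ((8 * m + 3 : ℕ) : ℤ) = 1 % ((8 * m + 3 : ℕ) : ℤ) :=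
    (Int.modEq_iff_dvd).2 ⟨4 * t + 1, by push_cast; zify at hqd; linarith⟩
  have hqodd : Odd q := Nat.odd_iff.2 (by omega)
  have hdodd : Odd (8 * m + 3) := Nat.odd_iff.2 (by omega)
  have hqJ : J(q | 8 * m + 3) = 1 := by
    have h := jacobiSym.mod_left' hmod
    rw [jacobiSym.mul_left, jacobiSym.at_neg_two hdodd, ZMod.χ₈'_nat_eq_if_mod_eight,
      jacobiSym.one_left] at h
    simpa [hd8, show (8 * m + 3) % 2 = 1 by omega] using h
  have hJ : J(-(8 * m + 3 : ℕ) | q) = 1 := by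
    rw [jacobiSym.neg _ hqodd]
    rcases (by omega : q % 4 = 1 ∨ q % 4 = 3) with h | h
    · rw [ZMod.χ₄_nat_one_mod_four h, one_mul,
        jacobiSym.quadratic_reciprocity_one_mod_four' hdodd h, hqJ]
    · rw [ZMod.χ₄_nat_three_mod_four h,
        jacobiSym.quadratic_reciprocity_three_mod_four (by omega) h, hqJ]
      norm_num
  obtain ⟨r, hr⟩ := exists_dvd_sq_add_of_jacobiSym_eq_one hq hJ
  have hqz : ((8 * m + 3 : ℕ) : ℤ) * ((4 * t + 1 : ℕ) : ℤ) - 1 = 2 * q := by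
    zify at hqd; push_cast; linarith
  obtain ⟨r, hr, hodd⟩ : ∃ r : ℤ, (q : ℤ) ∣ r ^ 2 + (8 * m + 3 : ℕ) ∧ Odd r := by
    rcases Int.even_or_odd r with he | ho
    · refine ⟨r + q, ?_, he.add_odd (by exact_mod_cast hqodd)⟩
      have : (r + q) ^ 2 + ((8 * m + 3 : ℕ) : ℤ) = r ^ 2 + (8 * m + 3 : ℕ) + q * (2 * r + q) := by
        ring
      rw [this]
      exact dvd_add hr (dvd_mul_right _ _)
    · exact ⟨r, hr, ho⟩
  refine isSumThreeSquares_of_dvd (d := (8 * m + 3 : ℕ)) (r := r) (by positivity) ?_ ?_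
  · rw [hqz]; exact_mod_cast (by have := hq.pos; omega : 0 < 2 * q)
  · rw [hqz]
    refine IsCoprime.mul_dvd ?_ ?_ hr
    · rw [Int.isCoprime_iff_gcd_eq_one]
      exact_mod_cast (Nat.coprime_two_left).2 hqodd
    · have : Even (r ^ 2 + ((8 * m + 3 : ℕ) : ℤ)) :=
        (hodd.pow).add_odd (by exact_mod_cast hdodd)
      exact this.two_dvd

theorem isSumThreeSquares_of_mod_four {N : ℤ} (hN : 0 < N) (h : N % 4 = 1 ∨ N % 4 = 2) :
    IsSumThreeSquares N := by
  lift N to ℕ using hN.le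
  rcases h with h | h
  · exact isSumThreeSquares_of_mod_four_eq_one (by omega)
  · exact isSumThreeSquares_of_mod_four_eq_two (by omega)

lemma three_dvd_sub_or_add {u v : ℤ} (hu : ¬ 3 ∣ u) (hv : ¬ 3 ∣ v) : 3 ∣ u - v ∨ 3 ∣ u + v := by
  rcases (by omega : u % 3 = 1 ∨ u % 3 = 2) with h | h <;>
    rcases (by omega : v % 3 = 1 ∨ v % 3 = 2) with h' | h' <;> omega

/-- The integer `n` is a sum of four squares of integers each of which is zero or prime to `p`. -/
def IsSumFourSquaresAvoiding (p : ℕ) (n : ℤ) : Prop :=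
  ∃ a b c d : ℤ, a ^ 2 + b ^ 2 + c ^ 2 + d ^ 2 = n ∧
    (a = 0 ∨ (a : ZMod p) ≠ 0) ∧ (b = 0 ∨ (b : ZMod p) ≠ 0) ∧
    (c = 0 ∨ (c : ZMod p) ≠ 0) ∧ (d = 0 ∨ (d : ZMod p) ≠ 0)

namespace IsSumFourSquaresAvoiding

variable {p : ℕ} {n : ℤ}

lemma of_ne {a b c d : ℤ} (hn : a ^ 2 + b ^ 2 + c ^ 2 + d ^ 2 = n) (ha : (a : ZMod p) ≠ 0)
    (hb : (b : ZMod p) ≠ 0) (hc : (c : ZMod p) ≠ 0) (hd : (d : ZMod p) ≠ 0) :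
    IsSumFourSquaresAvoiding p n :=
  ⟨a, b, c, d, hn, .inr ha, .inr hb, .inr hc, .inr hd⟩

/-- Reflection in the vector `(1, -1, 1, 0)`. -/
lemma reflect {a b c d t : ℤ} (hn : a ^ 2 + b ^ 2 + c ^ 2 + d ^ 2 = n) (ht : a - b + c = 3 * t)
    (h₁ : (a + 2 * b - 2 * c : ZMod p) ≠ 0) (h₂ : (2 * a + b + 2 * c : ZMod p) ≠ 0)
    (h₃ : (2 * b + c - 2 * a : ZMod p) ≠ 0) (hd : (d : ZMod p) ≠ 0) :
    IsSumFourSquaresAvoiding p n := by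
  have hF := congrArg (Int.cast : ℤ → ZMod p) ht
  push_cast at hF
  refine of_ne (a := a - 2 * t) (b := b + 2 * t) (c := c - 2 * t) (d := d) ?_ ?_ ?_ ?_ hd
  · linear_combination hn - 4 * t * ht
  · intro h; push_cast at h; exact h₁ (by linear_combination 3 * h - 2 * hF)
  · intro h; push_cast at h; exact h₂ (by linear_combination 3 * h + 2 * hF)
  · intro h; push_cast at h; exact h₃ (by linear_combination 3 * h - 2 * hF)

variable [Fact p.Prime]

lemma of_one_zero {a b c d : ℤ} (h2 : (2 : ZMod p) ≠ 0)
    (hn : a ^ 2 + b ^ 2 + c ^ 2 + d ^ 2 = n)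
    (hab : 3 ∣ a - b) (hc3 : 3 ∣ c) (ha : (a : ZMod p) = 0) (hb : (b : ZMod p) ≠ 0)
    (hc : (c : ZMod p) ≠ 0) (hd : (d : ZMod p) ≠ 0)
    (h5 : (5 : ZMod p) ≠ 0 ∨ (b ^ 2 + c ^ 2 : ZMod p) ≠ 0) :
    IsSumFourSquaresAvoiding p n := by
  obtain ⟨s, hs⟩ := hab
  obtain ⟨r, hr⟩ := hc3
  by_contra hW
  have hplus : (b : ZMod p) = c ∨ (b : ZMod p) = -2 * c ∨ (c : ZMod p) = -2 * b := by
    by_contra! h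
    refine hW (reflect (t := s + r) hn (by linarith) ?_ ?_ ?_ hd)
    · intro h0
      exact h.1 (mul_left_cancel₀ h2 (by linear_combination h0 - ha))
    · intro h0
      exact h.2.1 (by linear_combination h0 - 2 * ha)
    · intro h0
      exact h.2.2 (by linear_combination h0 + 2 * ha)
  have hminus : (b : ZMod p) = -c ∨ (b : ZMod p) = 2 * c ∨ (c : ZMod p) = 2 * b := by
    by_contra! h
    refine hW (reflect (a := a) (b := b) (c := -c) (d := d) (t := s - r)
      (by linear_combination hn) (by linarith) ?_ ?_ ?_ hd) <;> push_cast
    · intro h0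
      exact h.1 (mul_left_cancel₀ h2 (by linear_combination h0 - ha))
    · intro h0
      exact h.2.1 (by linear_combination h0 - 2 * ha)
    · intro h0
      exact h.2.2 (by linear_combination - h0 - 2 * ha)
  have h5' : (5 * b : ZMod p) ≠ 0 ∨ (b ^ 2 + c ^ 2 : ZMod p) ≠ 0 := by
    rcases h5 with h | h
    · exact .inl (mul_ne_zero h hb)
    · exact .inr h
  have h2b := mul_ne_zero h2 hb
  have h2c := mul_ne_zero h2 hc
  have h4c := mul_ne_zero h2 h2c
  rcases hplus with h | h | h <;> rcases hminus with h' | h' | h'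
  · exact h2b (by linear_combination h + h')
  · exact hc (by linear_combination h - h')
  · exact hb (by linear_combination -h - h')
  · exact hc (by linear_combination h - h')
  · exact h4c (by linear_combination h - h')
  · rcases h5' with h5 | h5
    · exact h5 (by linear_combination h - 2 * h')
    · have : (5 * b : ZMod p) = 0 := by linear_combination h - 2 * h'
      exact h5 (by rw [h']; linear_combination b * this)
  · exact hb (by linear_combination h - h')
  · rcases h5' with h5 | h5
    · exact h5 (by linear_combination h' + 2 * h)
    · have : (5 * b : ZMod p) = 0 := by linear_combination h' + 2 * h
      exact h5 (by rw [h]; linear_combination b * this)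
  · exact mul_ne_zero h2 h2b (by linear_combination h - h')

lemma of_two_zeros {a b c d : ℤ} (h2 : (2 : ZMod p) ≠ 0)
    (hn : a ^ 2 + b ^ 2 + c ^ 2 + d ^ 2 = n)
    (hab : 3 ∣ a - b) (hc3 : 3 ∣ c) (ha : (a : ZMod p) = 0) (hb : (b : ZMod p) = 0)
    (hc : (c : ZMod p) ≠ 0) (hd : (d : ZMod p) ≠ 0) :
    IsSumFourSquaresAvoiding p n := by
  obtain ⟨s, hs⟩ := hab
  obtain ⟨r, hr⟩ := hc3
  have h2c := mul_ne_zero h2 hc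
  refine reflect (t := s + r) hn (by linarith) ?_ ?_ ?_ hd
  · rw [ha, hb]; intro h; exact h2c (by linear_combination -h)
  · rw [ha, hb]; intro h; exact h2c (by linear_combination h)
  · rw [ha, hb]; intro h; exact hc (by linear_combination h)

lemma of_third_zero {a b c d : ℤ} (h2 : (2 : ZMod p) ≠ 0)
    (hn : a ^ 2 + b ^ 2 + c ^ 2 + d ^ 2 = n)
    (hab : 3 ∣ a - b) (hc3 : 3 ∣ c) (hc : (c : ZMod p) = 0) (hd : (d : ZMod p) ≠ 0)
    (h₀ : (a : ZMod p) ≠ b) (h₁ : (a : ZMod p) ≠ -2 * b) (h₂ : (b : ZMod p) ≠ -2 * a) :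
    IsSumFourSquaresAvoiding p n := by
  obtain ⟨s, hs⟩ := hab
  obtain ⟨r, hr⟩ := hc3
  refine reflect (t := s + r) hn (by linarith) ?_ ?_ ?_ hd
  · rw [hc]; intro h; exact h₁ (by linear_combination h)
  · rw [hc]; intro h; exact h₂ (by linear_combination h)
  · rw [hc]; intro h; exact h₀ (mul_left_cancel₀ h2 (by linear_combination -h))

lemma of_diag_of_not_dvd_nine {a b d m : ℤ} (h2 : (2 : ZMod p) ≠ 0) (h3 : (3 : ZMod p) ≠ 0)
    (hn : a ^ 2 + b ^ 2 + m ^ 2 + d ^ 2 = n) (ha3 : ¬ 3 ∣ a) (hab3 : 3 ∣ a - b) (hd3 : 3 ∣ d)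
    (hab : (a : ZMod p) = b) (ha : (a : ZMod p) ≠ 0) (hd : (d : ZMod p) = 0)
    (hm : (m : ZMod p) ≠ 0) (h9 : ¬ 9 ∣ a - b + d) :
    IsSumFourSquaresAvoiding p n := by
  obtain ⟨t, ht⟩ := dvd_add hab3 hd3
  have htF : (t : ZMod p) = 0 := by
    have hF := congrArg (Int.cast : ℤ → ZMod p) ht
    push_cast at hF
    exact mul_left_cancel₀ h3 (by linear_combination -hF + hab + hd)
  have hsq : (a ^ 2 + a ^ 2 : ZMod p) ≠ 0 := by
    rw [← two_mul]; exact mul_ne_zero h2 (pow_ne_zero 2 ha)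
  have ht3 : ¬ 3 ∣ t := by omega
  rcases three_dvd_sub_or_add ht3 ha3 with h | h
  · refine of_one_zero (a := d - 2 * t) (b := -(a - 2 * t)) (c := b + 2 * t) (d := m) h2
      (by linear_combination hn - 4 * t * ht) (by omega) (by omega) ?_ ?_ ?_ hm (.inr ?_) <;>
    push_cast <;> rw [htF] <;> simp only [mul_zero, sub_zero, add_zero, ← hab, neg_sq] <;> simpa
  · refine of_one_zero (a := d - 2 * t) (b := b + 2 * t) (c := a - 2 * t) (d := m) h2
      (by linear_combination hn - 4 * t * ht) (by omega) (by omega) ?_ ?_ ?_ hm (.inr ?_) <;>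
    push_cast <;> rw [htF] <;> simp only [mul_zero, sub_zero, add_zero, ← hab] <;> simpa

lemma of_diag_of_not_dvd_pow (e : ℕ) {a b d m : ℤ} (h2 : (2 : ZMod p) ≠ 0) (h3 : (3 : ZMod p) ≠ 0)
    (hn : a ^ 2 + b ^ 2 + m ^ 2 + d ^ 2 = n) (ha3 : ¬ 3 ∣ a) (hab3 : 3 ∣ a - b) (hd3 : 3 ∣ d)
    (hab : (a : ZMod p) = b) (ha : (a : ZMod p) ≠ 0) (hd : (d : ZMod p) = 0)
    (hm : (m : ZMod p) ≠ 0) (he : ¬ (3 ^ (e + 2) ∣ a - b ∧ 3 ^ (e + 2) ∣ d)) :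
    IsSumFourSquaresAvoiding p n := by
  induction e generalizing a b d with
  | zero =>
    by_cases h9 : 9 ∣ a - b + d
    · exact of_diag_of_not_dvd_nine (d := -d) h2 h3 (by linear_combination hn) ha3 hab3
        (by omega) hab ha (by simpa using hd) hm (by norm_num at he; omega)
    · exact of_diag_of_not_dvd_nine h2 h3 hn ha3 hab3 hd3 hab ha hd hm h9
  | succ e ih =>
    by_cases hdvd : 3 ^ (e + 2) ∣ a - b ∧ 3 ^ (e + 2) ∣ d
    swap
    · exact ih hn ha3 hab3 hd3 hab ha hd hdvd
    obtain ⟨⟨A, hA⟩, D, hD⟩ := hdvd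
    obtain ⟨D, d, hD, hAD, hd, hn, hd3⟩ : ∃ D d' : ℤ, d' = 3 ^ (e + 2) * D ∧ ¬ 3 ∣ A + D ∧
        (d' : ZMod p) = 0 ∧ a ^ 2 + b ^ 2 + m ^ 2 + d' ^ 2 = n ∧ 3 ∣ d' := by
      by_cases hAD : 3 ∣ A + D
      · refine ⟨-D, -d, by linear_combination -hD, fun h ↦ he ?_, by simpa using hd,
          by linear_combination hn, by omega⟩
        rw [hA, hD, pow_succ _ (e + 2)]
        exact ⟨mul_dvd_mul_left _ (by omega), mul_dvd_mul_left _ (by omega)⟩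
      · exact ⟨D, d, hD, hAD, hd, hn, hd3⟩
    have ht : a - b + d = 3 * (3 ^ (e + 1) * (A + D)) := by rw [hA, hD]; ring
    have htF : ((3 ^ (e + 1) * (A + D) : ℤ) : ZMod p) = 0 := by
      have hF := congrArg (Int.cast : ℤ → ZMod p) ht
      push_cast at hF
      push_cast
      exact mul_left_cancel₀ h3 (by linear_combination -hF + hab + hd)
    have ht3 : 3 ∣ 3 ^ (e + 1) * (A + D) := by
      rw [pow_succ', mul_assoc]; exact dvd_mul_right _ _
    have hdiff : d - 2 * (3 ^ (e + 1) * (A + D)) = 3 ^ (e + 1) * (A + D) - 3 ^ (e + 2) * A := by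
      rw [hD]; ring
    have hndvd : ¬ (3 : ℤ) ^ (e + 2) ∣ d - 2 * (3 ^ (e + 1) * (A + D)) := by
      rw [hdiff]
      intro h
      have h' := (dvd_sub_left (dvd_mul_right ((3 : ℤ) ^ (e + 2)) A)).1 h
      rw [pow_succ _ (e + 1)] at h'
      exact hAD (Int.dvd_of_mul_dvd_mul_left (by positivity) h')
    generalize 3 ^ (e + 1) * (A + D) = t at *
    refine ih (a := a - 2 * t) (b := b + 2 * t) (d := d - 2 * t)
      (by linear_combination hn - 4 * t * ht) (by omega) (by omega) (by omega)
      ?_ ?_ ?_ (fun h ↦ hndvd h.2) <;> push_cast <;> rw [htF] <;> simpa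

lemma of_diag {a b d m : ℤ} (h2 : (2 : ZMod p) ≠ 0) (h3 : (3 : ZMod p) ≠ 0)
    (hn : a ^ 2 + b ^ 2 + m ^ 2 + d ^ 2 = n) (ha3 : ¬ 3 ∣ a) (hab3 : 3 ∣ a - b) (hd3 : 3 ∣ d)
    (hab : (a : ZMod p) = b) (ha : (a : ZMod p) ≠ 0) (hd : (d : ZMod p) = 0)
    (hm : (m : ZMod p) ≠ 0) :
    IsSumFourSquaresAvoiding p n := by
  by_cases h0 : a - b = 0 ∧ d = 0
  · exact ⟨a, b, m, d, hn, .inr ha, .inr (hab ▸ ha), .inr hm, .inl h0.2⟩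
  refine of_diag_of_not_dvd_pow ((a - b).natAbs + d.natAbs) h2 h3 hn ha3 hab3 hd3 hab ha hd hm ?_
  rintro ⟨h, h'⟩
  have hlt : (a - b).natAbs + d.natAbs + 2 < 3 ^ ((a - b).natAbs + d.natAbs + 2) :=
    Nat.lt_pow_self (by norm_num)
  have key : ∀ x : ℤ, (3 : ℤ) ^ ((a - b).natAbs + d.natAbs + 2) ∣ x →
      x.natAbs ≤ (a - b).natAbs + d.natAbs → x = 0 := by
    intro x hx hle
    refine Int.eq_zero_of_dvd_of_natAbs_lt_natAbs hx ?_
    rw [Int.natAbs_pow]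
    simp only [Int.reduceAbs]
    omega
  exact h0 ⟨key _ h (by omega), key _ h' (by omega)⟩

end IsSumFourSquaresAvoiding

namespace IsSumFourSquaresAvoiding

variable {p : ℕ} [Fact p.Prime] {n : ℤ}

lemma of_three_dvd {a b c m : ℤ} (h2 : (2 : ZMod p) ≠ 0)
    (hn : a ^ 2 + b ^ 2 + c ^ 2 + m ^ 2 = n) (ha3 : 3 ∣ a) (hb3 : 3 ∣ b) (hc3 : 3 ∣ c)
    (hm : (m : ZMod p) ≠ 0) (hN : (a ^ 2 + b ^ 2 + c ^ 2 : ZMod p) ≠ 0) :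
    IsSumFourSquaresAvoiding p n := by
  by_cases ha : (a : ZMod p) = 0 <;> by_cases hb : (b : ZMod p) = 0 <;>
    by_cases hc : (c : ZMod p) = 0
  · simp [ha, hb, hc] at hN
  · exact of_two_zeros h2 hn (by omega) hc3 ha hb hc hm
  · exact of_two_zeros (a := a) (b := c) (c := b) h2 (by linear_combination hn) (by omega) hb3 ha
      hc hb hm
  · exact of_one_zero h2 hn (by omega) hc3 ha hb hc hm (.inr (by simpa [ha] using hN))
  · exact of_two_zeros (a := b) (b := c) (c := a) h2 (by linear_combination hn) (by omega) ha3 hb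
      hc ha hm
  · exact of_one_zero (a := b) (b := a) (c := c) h2 (by linear_combination hn) (by omega) hc3 hb
      ha hc hm (.inr (by simpa [hb] using hN))
  · exact of_one_zero (a := c) (b := a) (c := b) h2 (by linear_combination hn) (by omega) hb3 hc
      ha hb hm (.inr (by simpa [hc] using hN))
  · exact of_ne hn ha hb hc hm

lemma of_first_eq_neg_two_mul_of_reflection {a b d m t : ℤ} (h2 : (2 : ZMod p) ≠ 0)
    (h3 : (3 : ZMod p) ≠ 0) (h5 : (5 : ZMod p) ≠ 0)
    (hn : a ^ 2 + b ^ 2 + m ^ 2 + d ^ 2 = n) (ha3 : ¬ 3 ∣ a) (hab3 : 3 ∣ a - b) (hd3 : 3 ∣ d)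
    (hab : (a : ZMod p) = -2 * b) (hb : (b : ZMod p) ≠ 0) (hd : (d : ZMod p) = 0)
    (hm : (m : ZMod p) ≠ 0) (ht : a - b + d = 3 * t) (hta : ¬ 3 ∣ t + a) :
    IsSumFourSquaresAvoiding p n := by
  have htF : (t : ZMod p) = -b := by
    have hF := congrArg (Int.cast : ℤ → ZMod p) ht
    push_cast at hF
    exact mul_left_cancel₀ h3 (by linear_combination -hF + hab + hd)
  by_cases h : 3 ∣ t
  · refine of_one_zero (a := a - 2 * t) (b := b + 2 * t) (c := d - 2 * t) (d := m) h2
      (by linear_combination hn - 4 * t * ht) (by omega) (by omega) ?_ ?_ ?_ hm (.inl h5) <;>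
      push_cast <;> rw [htF]
    · linear_combination hab
    · intro h0; exact hb (by linear_combination -h0)
    · intro h0; exact mul_ne_zero h2 hb (by linear_combination h0 - hd)
  · have h' := (three_dvd_sub_or_add h ha3).resolve_right hta
    refine of_one_zero (a := a - 2 * t) (b := -(d - 2 * t)) (c := b + 2 * t) (d := m) h2
      (by linear_combination hn - 4 * t * ht) (by omega) (by omega) ?_ ?_ ?_ hm (.inl h5) <;>
      push_cast <;> rw [htF]
    · linear_combination hab
    · intro h0; exact mul_ne_zero h2 hb (by linear_combination -h0 - hd)
    · intro h0; exact hb (by linear_combination -h0)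

lemma of_first_eq_neg_two_mul_of_reflection_third {a b d m t : ℤ} (h2 : (2 : ZMod p) ≠ 0)
    (h5 : (5 : ZMod p) ≠ 0)
    (hn : a ^ 2 + b ^ 2 + m ^ 2 + d ^ 2 = n) (hab3 : 3 ∣ a - b) (hd3 : 3 ∣ d) (hm3 : 3 ∣ m)
    (hab : (a : ZMod p) = -2 * b) (hd : (d : ZMod p) = 0)
    (hm : (m : ZMod p) ≠ 0) (ht : a - b + m = 3 * t) (hta : 3 ∣ t + a)
    (h₁ : (m : ZMod p) ≠ 9 * b) (h₂ : (4 * m : ZMod p) ≠ -9 * b) :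
    IsSumFourSquaresAvoiding p n := by
  have htF : (3 * t : ZMod p) = m - 3 * b := by
    have hF := congrArg (Int.cast : ℤ → ZMod p) ht
    push_cast at hF
    linear_combination -hF + hab
  refine of_third_zero (a := b + 2 * t) (b := m - 2 * t) (c := d) (d := a - 2 * t) h2
    (by linear_combination hn - 4 * t * ht) (by omega) hd3 hd ?_ ?_ ?_ ?_ <;> push_cast
  · intro h; exact mul_ne_zero h2 hm (by linear_combination -3 * h + 3 * hab - 2 * htF)
  · intro h; exact h₁ (by linear_combination 3 * h - 4 * htF)
  · intro h; exact h₂ (by linear_combination 3 * h + 2 * htF)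
  · intro h; exact mul_ne_zero h5 hm (by linear_combination 3 * h - 2 * htF)

lemma of_first_eq_neg_two_mul {a b d m : ℤ} (h2 : (2 : ZMod p) ≠ 0)
    (h3 : (3 : ZMod p) ≠ 0) (h5 : (5 : ZMod p) ≠ 0)
    (hn : a ^ 2 + b ^ 2 + m ^ 2 + d ^ 2 = n) (ha3 : ¬ 3 ∣ a) (hab3 : 3 ∣ a - b) (hd3 : 3 ∣ d)
    (hm9 : 9 ∣ m) (hab : (a : ZMod p) = -2 * b) (hb : (b : ZMod p) ≠ 0) (hd : (d : ZMod p) = 0)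
    (hm : (m : ZMod p) ≠ 0) :
    IsSumFourSquaresAvoiding p n := by
  obtain ⟨s, hs⟩ := hab3
  obtain ⟨r, hr⟩ := hd3
  obtain ⟨j, hj⟩ := hm9
  by_cases hplus : 3 ∣ s + r + a
  swap
  · exact of_first_eq_neg_two_mul_of_reflection (t := s + r) h2 h3 h5 hn ha3 (by omega) (by omega)
      hab hb hd hm (by omega) hplus
  by_cases hminus : 3 ∣ s - r + a
  swap
  · exact of_first_eq_neg_two_mul_of_reflection (d := -d) (t := s - r) h2 h3 h5
      (by linear_combination hn) ha3 (by omega) (by omega) hab hb (by simpa using hd) hm (by omega)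
      hminus
  by_contra hW
  have h₁ : (m : ZMod p) = 9 * b ∨ (4 * m : ZMod p) = -9 * b := by
    by_contra! h
    exact hW (of_first_eq_neg_two_mul_of_reflection_third (t := s + 3 * j) h2 h5 hn (by omega)
      (by omega) (by omega) hab hd hm (by omega) (by omega) h.1 h.2)
  have h₂ : (-m : ZMod p) = 9 * b ∨ (4 * -m : ZMod p) = -9 * b := by
    by_contra! h
    exact hW (of_first_eq_neg_two_mul_of_reflection_third (m := -m) (t := s - 3 * j) h2 h5
      (by linear_combination hn) (by omega) (by omega) (by omega) hab hd (by simpa using hm)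
      (by omega) (by omega) (by push_cast; exact h.1) (by push_cast; exact h.2))
  have h2m := mul_ne_zero h2 hm
  have h8m := mul_ne_zero h2 (mul_ne_zero h2 h2m)
  have h3m := mul_ne_zero h3 hm
  rcases h₁ with h | h <;> rcases h₂ with h' | h'
  · exact h2m (by linear_combination h - h')
  · exact h3m (by linear_combination -h - h')
  · exact h3m (by linear_combination h + h')
  · exact h8m (by linear_combination h - h')

lemma of_third_dvd {a b d m : ℤ} (h2 : (2 : ZMod p) ≠ 0)
    (h3 : (3 : ZMod p) ≠ 0) (hn : a ^ 2 + b ^ 2 + m ^ 2 + d ^ 2 = n) (ha3 : ¬ 3 ∣ a)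
    (hab3 : 3 ∣ a - b) (hd3 : 3 ∣ d) (hm9 : 9 ∣ m) (hm : (m : ZMod p) ≠ 0)
    (hN : (a ^ 2 + b ^ 2 + d ^ 2 : ZMod p) ≠ 0) :
    IsSumFourSquaresAvoiding p n := by
  by_cases hd : (d : ZMod p) = 0
  · rw [hd] at hN
    by_cases hab : (a : ZMod p) = b
    · refine of_diag h2 h3 hn ha3 hab3 hd3 hab ?_ hd hm
      rintro ha
      rw [← hab, ha] at hN
      simp at hN
    by_cases hab₁ : (a : ZMod p) = -2 * b
    · rw [hab₁] at hN
      refine of_first_eq_neg_two_mul h2 h3 ?_ hn ha3 hab3 hd3 hm9 hab₁ ?_ hd hm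
      · intro h; exact hN (by linear_combination b ^ 2 * h)
      · intro h; exact hN (by rw [h]; ring)
    by_cases hab₂ : (b : ZMod p) = -2 * a
    · rw [hab₂] at hN
      refine of_first_eq_neg_two_mul (a := b) (b := a) h2 h3 ?_ (by linear_combination hn)
        (by omega) (by omega) hd3 hm9 hab₂ ?_ hd hm
      · intro h; exact hN (by linear_combination a ^ 2 * h)
      · intro h; exact hN (by rw [h]; ring)
    exact of_third_zero h2 (by linear_combination hn) hab3 hd3 hd hm hab hab₁ hab₂
  · by_cases ha : (a : ZMod p) = 0 <;> by_cases hb : (b : ZMod p) = 0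
    · exact of_two_zeros h2 (by linear_combination hn) hab3 hd3 ha hb hd hm
    · exact of_one_zero h2 (by linear_combination hn) hab3 hd3 ha hb hd hm
        (.inr (by simpa [ha] using hN))
    · exact of_one_zero (a := b) (b := a) (c := d) (d := m) h2 (by linear_combination hn)
        (by omega) hd3 hb ha hd hm (.inr (by simpa [hb] using hN))
    · exact of_ne hn ha hb hm hd

end IsSumFourSquaresAvoiding

instance fact_prime_five : Fact (Nat.Prime 5) := ⟨by norm_num⟩

namespace IsSumFourSquaresAvoiding

section

variable {p : ℕ} [Fact p.Prime] {n : ℤ}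

lemma of_all_congr {a b c m : ℤ} (h2 : (2 : ZMod p) ≠ 0)
    (hn : a ^ 2 + b ^ 2 + c ^ 2 + m ^ 2 = n) (hab3 : 3 ∣ a - b) (hac3 : 3 ∣ a - c)
    (hm3 : 3 ∣ m) (hm : (m : ZMod p) ≠ 0) (hN : (a ^ 2 + b ^ 2 + c ^ 2 : ZMod p) ≠ 0)
    (h5 : ∀ u v w : ℤ, u ^ 2 + v ^ 2 + w ^ 2 + m ^ 2 = n → 3 ∣ u - v → 3 ∣ u - w →
      (u : ZMod p) = 0 → (v : ZMod p) ≠ 0 → (w : ZMod p) ≠ 0 → (v ^ 2 + w ^ 2 : ZMod p) ≠ 0 →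
      (5 : ZMod p) = 0 → (v ^ 2 + m ^ 2 : ZMod p) = 0 → IsSumFourSquaresAvoiding p n) :
    IsSumFourSquaresAvoiding p n := by
  have key : ∀ u v w : ℤ, u ^ 2 + v ^ 2 + w ^ 2 + m ^ 2 = n → 3 ∣ u - v → 3 ∣ u - w →
      (u ^ 2 + v ^ 2 + w ^ 2 : ZMod p) ≠ 0 → (u : ZMod p) = 0 →
      IsSumFourSquaresAvoiding p n := by
    intro u v w hn huv huw hN hu
    rw [hu] at hN
    by_cases hv : (v : ZMod p) = 0 <;> by_cases hw : (w : ZMod p) = 0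
    · simp [hv, hw] at hN
    · exact of_two_zeros (a := u) (b := v) (c := m) (d := w) h2 (by linear_combination hn) huv hm3
        hu hv hm hw
    · exact of_two_zeros (a := u) (b := w) (c := m) (d := v) h2 (by linear_combination hn) huw hm3
        hu hw hm hv
    · by_cases h : (5 : ZMod p) = 0 ∧ (v ^ 2 + m ^ 2 : ZMod p) = 0
      · exact h5 u v w hn huv huw hu hv hw (by simpa using hN) h.1 h.2
      · exact of_one_zero (a := u) (b := v) (c := m) (d := w) h2 (by linear_combination hn) huv
          hm3 hu hv hm hw (by tauto)
  by_cases ha : (a : ZMod p) = 0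
  · exact key a b c hn hab3 hac3 hN ha
  by_cases hb : (b : ZMod p) = 0
  · exact key b a c (by linear_combination hn) (by omega) (by omega)
      (by rwa [add_comm ((b : ZMod p) ^ 2)]) hb
  by_cases hc : (c : ZMod p) = 0
  · refine key c b a (by linear_combination hn) (by omega) (by omega) ?_ hc
    intro h; exact hN (by linear_combination h)
  exact of_ne hn ha hb hc hm

end

section Five

variable {n : ℤ}

lemma five_of_sub {a b c m t : ℤ} (hn : a ^ 2 + b ^ 2 + c ^ 2 + m ^ 2 = n)
    (hab3 : 3 ∣ a - b) (hac3 : 3 ∣ a - c) (hm3 : 3 ∣ m) (ha : (a : ZMod 5) = 0)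
    (hb : (b : ZMod 5) ≠ 0) (hc : (c : ZMod 5) = -b) (hm : (m : ZMod 5) = 2 * b)
    (ht : a - b - m = 3 * t) (hta : 3 ∣ t - a) : IsSumFourSquaresAvoiding 5 n := by
  have h2 : (2 : ZMod 5) ≠ 0 := by decide
  have h3 : (3 : ZMod 5) ≠ 0 := by decide
  have htF : (t : ZMod 5) = -b := by
    have hF := congrArg (Int.cast : ℤ → ZMod 5) ht
    push_cast at hF
    exact mul_left_cancel₀ h3 (by linear_combination -hF + ha - hm)
  refine of_one_zero (a := m + 2 * t) (b := -c) (c := b + 2 * t) (d := a - 2 * t) h2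
    (by linear_combination hn - 4 * t * ht) (by omega) (by omega) ?_ ?_ ?_ ?_ (.inr ?_) <;>
    push_cast <;> simp only [htF, hc, hm, ha] <;> revert hb <;> generalize (b : ZMod 5) = b <;>
    revert b <;> decide

lemma five_of_add {a b c m t : ℤ} (hn : a ^ 2 + b ^ 2 + c ^ 2 + m ^ 2 = n)
    (hab3 : 3 ∣ a - b) (hac3 : 3 ∣ a - c) (hm3 : 3 ∣ m) (ha : (a : ZMod 5) = 0)
    (hb : (b : ZMod 5) ≠ 0) (hc : (c : ZMod 5) = -b) (hm : (m : ZMod 5) = 2 * b)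
    (ht : a - b + m = 3 * t) (hta : 3 ∣ t + a) : IsSumFourSquaresAvoiding 5 n := by
  have h2 : (2 : ZMod 5) ≠ 0 := by decide
  have h3 : (3 : ZMod 5) ≠ 0 := by decide
  have h5 : (5 : ZMod 5) = 0 := by decide
  have htF : (t : ZMod 5) = 2 * b := by
    have hF := congrArg (Int.cast : ℤ → ZMod 5) ht
    push_cast at hF
    exact mul_left_cancel₀ h3 (by linear_combination -hF + ha + hm - b * h5)
  refine of_one_zero (a := b + 2 * t) (b := -c) (c := a - 2 * t) (d := m - 2 * t) h2
    (by linear_combination hn - 4 * t * ht) (by omega) (by omega) ?_ ?_ ?_ ?_ (.inr ?_) <;>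
    push_cast <;> simp only [htF, hc, hm, ha] <;> revert hb <;> generalize (b : ZMod 5) = b <;>
    revert b <;> decide

lemma exists_three_dvd_of_mod_nine {a s r j : ℤ} (ha3 : ¬ 3 ∣ a)
    (hn9 : (a ^ 2 + (a - 3 * s) ^ 2 + (a - 3 * r) ^ 2 + (3 * j) ^ 2) % 9 = 6 ∧ 3 ∣ j ∨
      (a ^ 2 + (a - 3 * s) ^ 2 + (a - 3 * r) ^ 2 + (3 * j) ^ 2) % 9 = 3 ∧ ¬ 3 ∣ j) :
    3 ∣ s - j - a ∨ 3 ∣ s + j + a ∨ 3 ∣ r + j - a ∨ 3 ∣ r - j + a := by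
  obtain ⟨ε, k, hε, rfl⟩ : ∃ ε k : ℤ, (ε = 1 ∨ ε = -1) ∧ a = 3 * k + ε := by
    rcases (by omega : a % 3 = 1 ∨ a % 3 = 2) with h | h
    · exact ⟨1, a / 3, .inl rfl, by omega⟩
    · exact ⟨-1, a / 3 + 1, .inr rfl, by omega⟩
  obtain ⟨Y, hY⟩ : ∃ Y : ℤ, (3 * k + ε) ^ 2 + (3 * k + ε - 3 * s) ^ 2 + (3 * k + ε - 3 * r) ^ 2 +
      (3 * j) ^ 2 = 3 * ε ^ 2 - 6 * (ε * (s + r)) + 9 * Y :=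
    ⟨3 * k ^ 2 + 2 * k * ε - 2 * k * (s + r) + s ^ 2 + r ^ 2 + j ^ 2, by ring⟩
  rw [hY] at hn9
  rcases hε with rfl | rfl <;>
    rcases (by omega : s % 3 = 0 ∨ s % 3 = 1 ∨ s % 3 = 2) with hs | hs | hs <;>
    rcases (by omega : j % 3 = 0 ∨ j % 3 = 1 ∨ j % 3 = 2) with hj | hj | hj <;> omega

lemma five_of_eq_two_mul {a b c m : ℤ} (hn : a ^ 2 + b ^ 2 + c ^ 2 + m ^ 2 = n) (ha3 : ¬ 3 ∣ a)
    (hab3 : 3 ∣ a - b) (hac3 : 3 ∣ a - c) (hm3 : 3 ∣ m) (ha : (a : ZMod 5) = 0)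
    (hb : (b : ZMod 5) ≠ 0) (hc : (c : ZMod 5) = -b) (hm : (m : ZMod 5) = 2 * b)
    (hn9 : n % 9 = 6 ∧ 9 ∣ m ∨ n % 9 = 3 ∧ ¬ 9 ∣ m) : IsSumFourSquaresAvoiding 5 n := by
  obtain ⟨s, hs⟩ := id hab3
  obtain ⟨r, hr⟩ := id hac3
  obtain ⟨j, hj⟩ := id hm3
  have hc0 : (c : ZMod 5) ≠ 0 := by rw [hc]; simpa using hb
  have hb' : (b : ZMod 5) = -c := by rw [hc]; ring
  have hm' : ((-m : ℤ) : ZMod 5) = 2 * c := by push_cast; rw [hc, hm]; ring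
  rcases exists_three_dvd_of_mod_nine (a := a) (s := s) (r := r) (j := j) ha3 (by
    rw [show a - 3 * s = b by omega, show a - 3 * r = c by omega, ← hj, hn]; omega)
    with h | h | h | h
  · exact five_of_sub (t := s - j) hn hab3 hac3 hm3 ha hb hc hm (by omega) h
  · exact five_of_add (t := s + j) hn hab3 hac3 hm3 ha hb hc hm (by omega) h
  · exact five_of_sub (b := c) (c := b) (m := -m) (t := r + j) (by linear_combination hn) hac3 hab3
      (by omega) ha hc0 hb' hm' (by omega) h
  · exact five_of_add (b := c) (c := b) (m := -m) (t := r - j) (by linear_combination hn) hac3 hab3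
      (by omega) ha hc0 hb' hm' (by omega) h

lemma five_of_sq_add_sq_eq_zero {a b c m : ℤ} (hn : a ^ 2 + b ^ 2 + c ^ 2 + m ^ 2 = n)
    (ha3 : ¬ 3 ∣ a) (hab3 : 3 ∣ a - b) (hac3 : 3 ∣ a - c) (hm3 : 3 ∣ m) (ha : (a : ZMod 5) = 0)
    (hb : (b : ZMod 5) ≠ 0) (hc : (c : ZMod 5) ≠ 0) (hm : (m : ZMod 5) ≠ 0)
    (hbc : (b ^ 2 + c ^ 2 : ZMod 5) ≠ 0) (hbm : (b ^ 2 + m ^ 2 : ZMod 5) = 0)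
    (hn9 : n % 9 = 6 ∧ 9 ∣ m ∨ n % 9 = 3 ∧ ¬ 9 ∣ m) : IsSumFourSquaresAvoiding 5 n := by
  have hsq : ∀ x y : ZMod 5, x ≠ 0 → y ≠ 0 → x ^ 2 + y ^ 2 ≠ 0 → y = x ∨ y = -x := by decide
  have hsq' : ∀ x y : ZMod 5, x ≠ 0 → x ^ 2 + y ^ 2 = 0 → y = 2 * x ∨ -y = 2 * x := by decide
  rcases hsq _ _ hb hc hbc with h | h
  · obtain ⟨t, ht⟩ : ∃ t, a + b + c = 3 * t := ⟨(a + b + c) / 3, by omega⟩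
    refine reflect (a := a) (b := -b) (c := c) (d := m) (t := t) (by linear_combination hn)
      (by omega) ?_ ?_ ?_ hm <;> push_cast <;> simp only [ha, h] <;> revert hb <;>
      generalize (b : ZMod 5) = b <;> revert b <;> decide
  · rcases hsq' _ _ hb hbm with h' | h'
    · exact five_of_eq_two_mul hn ha3 hab3 hac3 hm3 ha hb h h' hn9
    · exact five_of_eq_two_mul (m := -m) (by linear_combination hn) ha3 hab3 hac3 (by omega) ha hb
        h (by push_cast; exact h') (by omega)

end Five

end IsSumFourSquaresAvoiding

lemma Int.sq_emod_three (x : ℤ) : 3 ∣ x ∧ x ^ 2 % 9 = 0 ∨ ¬ 3 ∣ x ∧ x ^ 2 % 3 = 1 := by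
  obtain ⟨k, r, hr, rfl⟩ : ∃ k r : ℤ, (r = 0 ∨ r = 1 ∨ r = 2) ∧ x = 3 * k + r :=
    ⟨x / 3, x % 3, by omega, by omega⟩
  have h : (3 * k + r) ^ 2 = 3 * (3 * k ^ 2 + 2 * (k * r)) + r ^ 2 := by ring
  rcases hr with rfl | rfl | rfl
  · exact .inl ⟨by omega, by rw [h]; norm_num; omega⟩
  · exact .inr ⟨by omega, by rw [h]; omega⟩
  · exact .inr ⟨by omega, by rw [h]; omega⟩

lemma exists_sq_congr {x y : ℤ} (hx : ¬ 3 ∣ x) (hy : ¬ 3 ∣ y) : ∃ z, z ^ 2 = y ^ 2 ∧ 3 ∣ x - z := by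
  rcases three_dvd_sub_or_add hx hy with h | h
  · exact ⟨y, rfl, h⟩
  · exact ⟨-y, neg_sq y, by simpa using h⟩

namespace IsSumThreeSquares

lemma exists_congr_of_mod_three_eq_two {N : ℤ} (h : IsSumThreeSquares N) (hN : N % 3 = 2) :
    ∃ a b d : ℤ, a ^ 2 + b ^ 2 + d ^ 2 = N ∧ ¬ 3 ∣ a ∧ 3 ∣ a - b ∧ 3 ∣ d := by
  obtain ⟨x, y, z, rfl⟩ := h
  have key : ∀ u v w : ℤ, ¬ 3 ∣ u → ¬ 3 ∣ v → 3 ∣ w →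
      ∃ a b d : ℤ, a ^ 2 + b ^ 2 + d ^ 2 = u ^ 2 + v ^ 2 + w ^ 2 ∧ ¬ 3 ∣ a ∧ 3 ∣ a - b ∧ 3 ∣ d := by
    intro u v w hu hv hw
    obtain ⟨v', hv', hd⟩ := exists_sq_congr hu hv
    exact ⟨u, v', w, by rw [hv'], hu, hd, hw⟩
  rcases Int.sq_emod_three x with hx | hx <;> rcases Int.sq_emod_three y with hy | hy <;>
    rcases Int.sq_emod_three z with hz | hz <;> try omega
  · obtain ⟨a, b, d, h, h'⟩ := key y z x hy.1 hz.1 hx.1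
    exact ⟨a, b, d, by rw [h]; ring, h'⟩
  · obtain ⟨a, b, d, h, h'⟩ := key x z y hx.1 hz.1 hy.1
    exact ⟨a, b, d, by rw [h]; ring, h'⟩
  · exact key x y z hx.1 hy.1 hz.1

lemma exists_congr_of_three_dvd {N : ℤ} (h : IsSumThreeSquares N) (hN : N % 3 = 0)
    (hN9 : ¬ 9 ∣ N) :
    ∃ a b c : ℤ, a ^ 2 + b ^ 2 + c ^ 2 = N ∧ ¬ 3 ∣ a ∧ 3 ∣ a - b ∧ 3 ∣ a - c := by
  obtain ⟨x, y, z, rfl⟩ := h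
  rcases Int.sq_emod_three x with hx | hx <;> rcases Int.sq_emod_three y with hy | hy <;>
    rcases Int.sq_emod_three z with hz | hz <;> try omega
  obtain ⟨y', hy', hd⟩ := exists_sq_congr hx.1 hy.1
  obtain ⟨z', hz', hd'⟩ := exists_sq_congr hx.1 hz.1
  exact ⟨x, y', z', by rw [hy', hz'], hx.1, hd, hd'⟩

end IsSumThreeSquares

namespace IsSumFourSquaresAvoiding

variable {p : ℕ} [Fact p.Prime] {n : ℤ}

lemma exists_avoiding_of_two {x y : ℤ} (n : ZMod p) (hx : (x : ZMod p) ≠ 0)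
    (hy : (y : ZMod p) ≠ 0) (hxy : ((x ^ 2 - y ^ 2 : ℤ) : ZMod p) ≠ 0) :
    ∃ m : ℤ, (m = x ∨ m = y) ∧ (m : ZMod p) ≠ 0 ∧ n - m ^ 2 ≠ 0 := by
  by_contra! h
  exact hxy (by push_cast; linear_combination h y (.inr rfl) hy - h x (.inl rfl) hx)

lemma exists_avoiding_of_progression (n : ZMod p) (x h : ℤ)
    (hh : (6 * h ^ 3 : ZMod p) ≠ 0) :
    ∃ i : ℤ, 0 ≤ i ∧ i ≤ 3 ∧ ((x + h * i : ℤ) : ZMod p) ≠ 0 ∧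
      n - ((x + h * i : ℤ) : ZMod p) ^ 2 ≠ 0 := by
  by_contra! hcon
  have key : ∀ i : ℤ, 0 ≤ i → i ≤ 3 →
      ((x + h * i : ℤ) : ZMod p) * (n - ((x + h * i : ℤ) : ZMod p) ^ 2) = 0 := by
    intro i h0 h3
    by_cases hi : ((x + h * i : ℤ) : ZMod p) = 0
    · rw [hi, zero_mul]
    · rw [hcon i h0 h3 hi, mul_zero]
  have k0 := key 0 (by norm_num) (by norm_num)
  have k1 := key 1 (by norm_num) (by norm_num)
  have k2 := key 2 (by norm_num) (by norm_num)
  have k3 := key 3 (by norm_num) (by norm_num)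
  push_cast at k0 k1 k2 k3
  exact hh (by linear_combination k0 - 3 * k1 + 3 * k2 - k3)

lemma of_large_of_mod_three_eq_one (h2 : (2 : ZMod p) ≠ 0) (h3 : (3 : ZMod p) ≠ 0)
    (hn : 5041 < n) (hn4 : ¬ 4 ∣ n) (hn3 : n % 3 = 1) : IsSumFourSquaresAvoiding p n := by
  obtain ⟨x, hx0, hx, hx9, hx4⟩ : ∃ x : ℤ, 0 ≤ x ∧ x ≤ 17 ∧ 9 ∣ n - x ^ 2 ∧
      ((n - x ^ 2) % 4 = 1 ∨ (n - x ^ 2) % 4 = 2) := by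
    by_cases hn4' : n % 4 = 3
    · rcases (by omega : n % 9 = 1 ∨ n % 9 = 4 ∨ n % 9 = 7) with h | h | h
      · exact ⟨1, by norm_num, by norm_num, by omega, by omega⟩
      · exact ⟨11, by norm_num, by norm_num, by omega, by omega⟩
      · exact ⟨13, by norm_num, by norm_num, by omega, by omega⟩
    · rcases (by omega : n % 9 = 1 ∨ n % 9 = 4 ∨ n % 9 = 7) with h | h | h
      · exact ⟨10, by norm_num, by norm_num, by omega, by omega⟩
      · exact ⟨2, by norm_num, by norm_num, by omega, by omega⟩
      · exact ⟨4, by norm_num, by norm_num, by omega, by omega⟩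
  obtain ⟨i, hi0, hi3, hm, hN⟩ := exists_avoiding_of_progression (n : ZMod p) x 18 (by
    intro h
    exact mul_ne_zero (pow_ne_zero 4 h2) (pow_ne_zero 7 h3)
      (by push_cast at h; linear_combination h))
  obtain ⟨m, hmdef⟩ : ∃ m, m = x + 18 * i := ⟨_, rfl⟩
  have hsq : m ^ 2 = x ^ 2 + 36 * (x * i + 9 * i ^ 2) := by rw [hmdef]; ring
  rw [← hmdef] at hm hN
  have hm2 : m ^ 2 ≤ 5041 := by nlinarith
  obtain ⟨N, hN9⟩ : 9 ∣ n - m ^ 2 := by omega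
  obtain ⟨a, b, c, habc⟩ := isSumThreeSquares_of_mod_four (N := N) (by omega) (by omega)
  have hNF := congrArg (Int.cast : ℤ → ZMod p) (habc ▸ hN9)
  push_cast at hNF
  refine of_three_dvd (a := 3 * a) (b := 3 * b) (c := 3 * c) (m := m) h2 ?_ (dvd_mul_right _ _)
    (dvd_mul_right _ _) (dvd_mul_right _ _) hm ?_
  · linear_combination -hN9 - 9 * habc
  · push_cast
    intro h
    exact hN (by linear_combination hNF + h)

/-- Choice of the last coordinate as a multiple of nine. -/
lemma exists_nine_dvd_avoiding (h2 : (2 : ZMod p) ≠ 0) (h3 : (3 : ZMod p) ≠ 0)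
    (hn : 5041 < n) (hn4 : ¬ 4 ∣ n) : ∃ m : ℤ, 9 ∣ m ∧ m ^ 2 % 9 = 0 ∧ (m : ZMod p) ≠ 0 ∧
      (n - m ^ 2 : ZMod p) ≠ 0 ∧ IsSumThreeSquares (n - m ^ 2) := by
  have hpow : ∀ i j : ℕ, (2 ^ i * 3 ^ j : ZMod p) ≠ 0 := fun i j ↦
    mul_ne_zero (pow_ne_zero i h2) (pow_ne_zero j h3)
  by_cases hn4' : n % 4 = 3
  · obtain ⟨m, hm, hm0, hN⟩ := exists_avoiding_of_two (p := p) (x := 27) (y := 9) n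
      (by have := hpow 0 3; norm_num at this ⊢; exact this)
      (by have := hpow 0 2; norm_num at this ⊢; exact this)
      (by have := hpow 3 4; norm_num at this ⊢; exact this)
    rcases hm with rfl | rfl <;>
    exact ⟨_, by norm_num, by norm_num, hm0, hN,
      isSumThreeSquares_of_mod_four (by omega) (by omega)⟩
  · obtain ⟨m, hm, hm0, hN⟩ := exists_avoiding_of_two (p := p) (x := 36) (y := 18) n
      (by have := hpow 2 2; norm_num at this ⊢; exact this)
      (by have := hpow 1 2; norm_num at this ⊢; exact this)
      (by have := hpow 2 5; norm_num at this ⊢; exact this)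
    rcases hm with rfl | rfl <;>
    exact ⟨_, by norm_num, by norm_num, hm0, hN,
      isSumThreeSquares_of_mod_four (by omega) (by omega)⟩

lemma of_large_of_mod_three_eq_two (h2 : (2 : ZMod p) ≠ 0) (h3 : (3 : ZMod p) ≠ 0)
    (hn : 5041 < n) (hn4 : ¬ 4 ∣ n) (hn3 : n % 3 = 2) : IsSumFourSquaresAvoiding p n := by
  obtain ⟨m, hm9, hm9', hm, hN, hT⟩ := exists_nine_dvd_avoiding h2 h3 hn hn4
  obtain ⟨a, b, d, habd, ha3, hab3, hd3⟩ := hT.exists_congr_of_mod_three_eq_two (by omega)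
  refine of_third_dvd (a := a) (b := b) (d := d) (m := m) h2 h3 (by linear_combination habd) ha3
    hab3 hd3 hm9 hm ?_
  have hNF := congrArg (Int.cast : ℤ → ZMod p) habd
  push_cast at hNF
  rwa [hNF]

lemma of_large_of_three_dvd_of_ne_five (h2 : (2 : ZMod p) ≠ 0) (h3 : (3 : ZMod p) ≠ 0)
    (h5 : (5 : ZMod p) ≠ 0) (hn : 5041 < n) (hn4 : ¬ 4 ∣ n) (hn3 : n % 3 = 0) (hn9 : ¬ 9 ∣ n) :
    IsSumFourSquaresAvoiding p n := by
  obtain ⟨m, hm9, hm9', hm, hN, hT⟩ := exists_nine_dvd_avoiding h2 h3 hn hn4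
  obtain ⟨a, b, c, habc, -, hab3, hac3⟩ := hT.exists_congr_of_three_dvd (by omega) (by omega)
  have hNF := congrArg (Int.cast : ℤ → ZMod p) habc
  push_cast at hNF
  exact of_all_congr (a := a) (b := b) (c := c) (m := m) h2 (by linear_combination habc)
    hab3 hac3 (by omega) hm (by rwa [hNF]) (fun _ _ _ _ _ _ _ _ _ _ h ↦ absurd h h5)

/-- Choice of the last coordinate as a multiple of three but not of nine, prime to five. -/
lemma exists_three_dvd_avoiding_five (hn : 5041 < n) (hn4 : ¬ 4 ∣ n) :
    ∃ m : ℤ, 3 ∣ m ∧ ¬ 9 ∣ m ∧ m ^ 2 % 9 = 0 ∧ (m : ZMod 5) ≠ 0 ∧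
      (n - m ^ 2 : ZMod 5) ≠ 0 ∧ IsSumThreeSquares (n - m ^ 2) := by
  by_cases hn4' : n % 4 = 3
  · obtain ⟨m, hm, hm0, hN⟩ := exists_avoiding_of_two (p := 5) (x := 21) (y := 3) n
      (by decide) (by decide) (by decide)
    rcases hm with rfl | rfl <;>
    exact ⟨_, by norm_num, by norm_num, by norm_num, hm0, hN,
      isSumThreeSquares_of_mod_four (by omega) (by omega)⟩
  · obtain ⟨m, hm, hm0, hN⟩ := exists_avoiding_of_two (p := 5) (x := 12) (y := 6) n
      (by decide) (by decide) (by decide)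
    rcases hm with rfl | rfl <;>
    exact ⟨_, by norm_num, by norm_num, by norm_num, hm0, hN,
      isSumThreeSquares_of_mod_four (by omega) (by omega)⟩

lemma five_of_large_of_three_dvd (hn : 5041 < n) (hn4 : ¬ 4 ∣ n) (hn3 : n % 3 = 0)
    (hn9 : ¬ 9 ∣ n) : IsSumFourSquaresAvoiding 5 n := by
  obtain ⟨m, hm3, hm9, hm9', hm, hN, hT⟩ : ∃ m : ℤ, 3 ∣ m ∧
      (n % 9 = 6 ∧ 9 ∣ m ∨ n % 9 = 3 ∧ ¬ 9 ∣ m) ∧ m ^ 2 % 9 = 0 ∧ (m : ZMod 5) ≠ 0 ∧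
      (n - m ^ 2 : ZMod 5) ≠ 0 ∧ IsSumThreeSquares (n - m ^ 2) := by
    rcases (by omega : n % 9 = 6 ∨ n % 9 = 3) with h | h
    · obtain ⟨m, hm9, hm⟩ := exists_nine_dvd_avoiding (p := 5) (by decide) (by decide) hn hn4
      exact ⟨m, by omega, .inl ⟨h, hm9⟩, hm⟩
    · obtain ⟨m, hm3, hm9, hm⟩ := exists_three_dvd_avoiding_five hn hn4
      exact ⟨m, hm3, .inr ⟨h, hm9⟩, hm⟩
  obtain ⟨a, b, c, habc, ha3, hab3, hac3⟩ := hT.exists_congr_of_three_dvd (by omega) (by omega)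
  have hNF := congrArg (Int.cast : ℤ → ZMod 5) habc
  push_cast at hNF
  refine of_all_congr (a := a) (b := b) (c := c) (m := m) (by decide) (by linear_combination habc)
    hab3 hac3 hm3 hm (by rwa [hNF]) ?_
  intro u v w h huv huw hu hv hw hvw _ hvm
  refine five_of_sq_add_sq_eq_zero h ?_ huv huw hm3 hu hv hw hm hvw hvm hm9
  intro hu3
  have hsq : ∀ x : ℤ, 3 ∣ x → x ^ 2 % 9 = 0 := fun x hx ↦ by
    have := Int.sq_emod_three x
    tauto
  have := hsq u hu3
  have := hsq v (by omega)
  have := hsq w (by omega)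
  omega

lemma of_large (h2 : (2 : ZMod p) ≠ 0) (h3 : (3 : ZMod p) ≠ 0) (hn : 5041 < n) (hn4 : ¬ 4 ∣ n)
    (hn9 : ¬ 9 ∣ n) : IsSumFourSquaresAvoiding p n := by
  rcases (by omega : n % 3 = 0 ∨ n % 3 = 1 ∨ n % 3 = 2) with h | h | h
  · by_cases h5 : (5 : ZMod p) = 0
    · obtain rfl : p = 5 := by
        have hdvd : p ∣ 5 := (ZMod.natCast_eq_zero_iff 5 p).1 (by exact_mod_cast h5)
        exact (Nat.prime_dvd_prime_iff_eq (Fact.out) (by norm_num)).1 hdvd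
      exact five_of_large_of_three_dvd hn hn4 h hn9
    · exact of_large_of_three_dvd_of_ne_five h2 h3 h5 hn hn4 h hn9
  · exact of_large_of_mod_three_eq_one h2 h3 hn hn4 h
  · exact of_large_of_mod_three_eq_two h2 h3 hn hn4 h

lemma smul {k : ℤ} (hk : (k : ZMod p) ≠ 0) (h : IsSumFourSquaresAvoiding p n) :
    IsSumFourSquaresAvoiding p (k ^ 2 * n) := by
  obtain ⟨a, b, c, d, hn, ha, hb, hc, hd⟩ := h
  have key : ∀ x : ℤ, x = 0 ∨ (x : ZMod p) ≠ 0 → k * x = 0 ∨ ((k * x : ℤ) : ZMod p) ≠ 0 := by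
    rintro x (rfl | hx)
    · exact .inl (mul_zero k)
    · exact .inr (by push_cast; exact mul_ne_zero hk hx)
  exact ⟨k * a, k * b, k * c, k * d, by rw [← hn]; ring, key a ha, key b hb, key c hc, key d hd⟩

/-- Induction on `n` by removing the factors `4` and `9`. -/
theorem of_forall_le (h2 : (2 : ZMod p) ≠ 0) (h3 : (3 : ZMod p) ≠ 0) {s : Set ℕ} (hs : ∀ n ∈ s, n ≤ 560)
    (hsmall : ∀ n : ℕ, n ≤ 5041 → n ∉ s → IsSumFourSquaresAvoiding p n) (n : ℕ) (hn : n ∉ s) :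
    IsSumFourSquaresAvoiding p n := by
  induction n using Nat.strong_induction_on with
  | _ n ih =>
  rcases Nat.lt_or_ge 5041 n with hlarge | hle
  swap
  · exact hsmall n hle hn
  by_cases h4 : 4 ∣ n
  · obtain ⟨k, rfl⟩ := h4
    have := smul (k := 2) (by exact_mod_cast h2) (ih k (by omega) fun h ↦ by have := hs k h; omega)
    convert this using 1
    push_cast; ring
  by_cases h9 : 9 ∣ n
  · obtain ⟨k, rfl⟩ := h9
    have := smul (k := 3) (by exact_mod_cast h3) (ih k (by omega) fun h ↦ by have := hs k h; omega)
    convert this using 1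
    push_cast; ring
  exact of_large h2 h3 (by omega) (by omega) (by omega)

end IsSumFourSquaresAvoiding

/-- The bitset of all `n + s ^ 2` with `n` in the bitset `S` and `s` in the list `l`. -/
def addSquaresBitset (l : List ℕ) (S : ℕ) : ℕ :=
  l.foldr (fun s T ↦ S <<< (s * s) ||| T) 0

lemma exists_of_testBit_addSquaresBitset {l : List ℕ} {S n : ℕ}
    (h : (addSquaresBitset l S).testBit n) : ∃ s ∈ l, ∃ k, S.testBit k ∧ n = k + s ^ 2 := by
  induction l with
  | nil => simp [addSquaresBitset] at h
  | cons s l ih =>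
    have hcons : addSquaresBitset (s :: l) S = S <<< (s * s) ||| addSquaresBitset l S := rfl
    rw [hcons, Nat.testBit_or, Nat.testBit_shiftLeft, Bool.or_eq_true, Bool.and_eq_true,
      decide_eq_true_eq] at h
    rcases h with h | h
    · exact ⟨s, List.mem_cons_self, n - s * s, h.2, by rw [sq]; omega⟩
    · obtain ⟨s', hs', h'⟩ := ih h
      exact ⟨s', List.mem_cons_of_mem _ hs', h'⟩

/-- The bitset of sums of four squares of numbers below `72` that are zero or not divisible by
`p`. -/
def fourSquaresBitset (p : ℕ) : ℕ :=
  let l := (List.range 72).filter fun s ↦ s == 0 || s % p != 0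
  addSquaresBitset l (addSquaresBitset l (addSquaresBitset l (addSquaresBitset l 1)))

lemma IsSumFourSquaresAvoiding.of_testBit {p n : ℕ} (h : (fourSquaresBitset p).testBit n) :
    IsSumFourSquaresAvoiding p n := by
  have hl : ∀ s ∈ (List.range 72).filter (fun s ↦ s == 0 || s % p != 0),
      (s : ℤ) = 0 ∨ ((s : ℤ) : ZMod p) ≠ 0 := by
    intro s hs
    rw [List.mem_filter] at hs
    have := hs.2
    simp only [Bool.or_eq_true, beq_iff_eq, bne_iff_ne] at this
    rcases this with h | h
    · exact .inl (by exact_mod_cast h)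
    · right
      rw [Int.cast_natCast, Ne, ZMod.natCast_eq_zero_iff]
      exact fun hd ↦ h (Nat.mod_eq_zero_of_dvd hd)
  obtain ⟨a, ha, _, h₁, rfl⟩ := exists_of_testBit_addSquaresBitset h
  obtain ⟨b, hb, _, h₂, rfl⟩ := exists_of_testBit_addSquaresBitset h₁
  obtain ⟨c, hc, _, h₃, rfl⟩ := exists_of_testBit_addSquaresBitset h₂
  obtain ⟨d, hd, k, h₄, rfl⟩ := exists_of_testBit_addSquaresBitset h₃
  obtain rfl : k = 0 := Nat.testBit_one_eq_true_iff_self_eq_zero.1 h₄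
  exact ⟨a, b, c, d, by push_cast; ring, hl a ha, hl b hb, hl c hc, hl d hd⟩

lemma testBit_of_and_eq {S k n : ℕ} (h : S &&& (2 ^ k - 1) = 2 ^ k - 1) (hn : n < k) :
    S.testBit n := by
  have h' := congrArg (Nat.testBit · n) h
  simpa [Nat.testBit_and, Nat.testBit_two_pow_sub_one, hn] using h'

lemma fourSquaresBitset_five :
    (fourSquaresBitset 5 ||| 2 ^ 79) &&& (2 ^ 5042 - 1) = 2 ^ 5042 - 1 := by
  decide +kernel

lemma fourSquaresBitset_of_lt :
    ∀ p < 72, 7 ≤ p → p % 2 = 1 → fourSquaresBitset p &&& (2 ^ 5042 - 1) = 2 ^ 5042 - 1 := by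
  decide +kernel

lemma IsSumFourSquaresAvoiding.five_of_small {n : ℕ} (hn : n ≤ 5041) (h79 : n ≠ 79) :
    IsSumFourSquaresAvoiding 5 n := by
  refine of_testBit ?_
  have h := testBit_of_and_eq fourSquaresBitset_five (by omega : n < 5042)
  rw [Nat.testBit_or, Nat.testBit_two_pow] at h
  simpa [h79.symm] using h

lemma IsSumFourSquaresAvoiding.of_small {p n : ℕ} (hp : 7 ≤ p) (hodd : p % 2 = 1) (hn : n ≤ 5041) :
    IsSumFourSquaresAvoiding p n := by
  rcases Nat.lt_or_ge p 72 with hlt | hge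
  · exact of_testBit (testBit_of_and_eq (fourSquaresBitset_of_lt p hlt hp hodd) (by omega))
  · obtain ⟨a, b, c, d, h⟩ := Nat.sum_four_squares n
    have key : ∀ x : ℕ, x ^ 2 ≤ n → (x : ℤ) = 0 ∨ ((x : ℤ) : ZMod p) ≠ 0 := by
      intro x hx
      by_cases h0 : x = 0
      · exact .inl (by exact_mod_cast h0)
      · right
        rw [Int.cast_natCast, Ne, ZMod.natCast_eq_zero_iff]
        intro hd
        have := Nat.le_of_dvd (by omega) hd
        nlinarith
    exact ⟨a, b, c, d, by exact_mod_cast h, key a (by omega), key b (by omega), key c (by omega),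
      key d (by omega)⟩

lemma List.exists_fin_sum_sq_eq (p : ℤ) (l : List ℤ) (hl : ∀ x ∈ l, ¬ p ∣ x) :
    ∃ x : Fin l.length → ℤ, (∀ i, ¬ p ∣ x i) ∧ (l.map (· ^ 2)).sum = ∑ i, x i ^ 2 := by
  refine ⟨fun i ↦ l[i], fun i ↦ hl _ (l.get_mem i), ?_⟩
  rw [← List.sum_ofFn]
  congr 1
  apply List.ext_get <;> simp

theorem IsSumFourSquaresAvoiding.exists_sum_sq {p n : ℕ} (hn : 0 < n)
    (h : IsSumFourSquaresAvoiding p n) :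
    ∃ k : ℕ, 1 ≤ k ∧ k ≤ 4 ∧
      ∃ x : Fin k → ℤ, (∀ i, ¬ (p : ℤ) ∣ x i) ∧ (n : ℤ) = ∑ i, (x i) ^ 2 := by
  obtain ⟨a, b, c, d, hsum, ha, hb, hc, hd⟩ := h
  have hfilter : ∀ l : List ℤ, ((l.filter (· ≠ 0)).map (· ^ 2)).sum = (l.map (· ^ 2)).sum := by
    intro l
    induction l with
    | nil => rfl
    | cons x l ih =>
      by_cases hx : x = 0
      · simpa [hx] using ih
      · simpa [hx] using ih
  have hs := hfilter [a, b, c, d]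
  have hlen : ([a, b, c, d].filter (· ≠ 0)).length ≤ 4 := List.length_filter_le _ _
  have hmem : ∀ x ∈ [a, b, c, d].filter (· ≠ 0), ¬ (p : ℤ) ∣ x := by
    intro x hx hdvd
    rw [← ZMod.intCast_zmod_eq_zero_iff_dvd] at hdvd
    simp only [List.mem_filter, List.mem_cons, List.not_mem_nil, or_false, decide_eq_true_eq] at hx
    obtain ⟨rfl | rfl | rfl | rfl, h0⟩ := hx <;> tauto
  generalize [a, b, c, d].filter (· ≠ 0) = l at hs hlen hmem
  have hsum' : (l.map (· ^ 2)).sum = (n : ℤ) := by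
    rw [hs, ← hsum]; simp; ring
  obtain ⟨x, hx, hxs⟩ := List.exists_fin_sum_sq_eq p l hmem
  refine ⟨l.length, ?_, hlen, x, hx, by rw [← hsum', hxs]⟩
  rw [Nat.one_le_iff_ne_zero, Ne, List.length_eq_zero_iff]
  rintro rfl
  simp at hsum'
  omega

theorem main_theorem :
    (∀ p : ℕ, p.Prime → 7 ≤ p → ∀ n : ℕ, 0 < n →
      ∃ k : ℕ, 1 ≤ k ∧ k ≤ 4 ∧
        ∃ x : Fin k → ℤ, (∀ i, ¬ (p : ℤ) ∣ x i) ∧ (n : ℤ) = ∑ i, (x i) ^ 2) ∧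
    (∀ n : ℕ, 0 < n → n ≠ 79 →
      ∃ k : ℕ, 1 ≤ k ∧ k ≤ 4 ∧
        ∃ x : Fin k → ℤ, (∀ i, ¬ (5 : ℤ) ∣ x i) ∧ (n : ℤ) = ∑ i, (x i) ^ 2) := by
  constructor
  · intro p hp hp7 n hn
    have : Fact p.Prime := ⟨hp⟩
    have hne : ∀ k : ℕ, 0 < k → k < 7 → (k : ZMod p) ≠ 0 := by
      intro k hk hk7 h
      have := Nat.le_of_dvd hk ((ZMod.natCast_eq_zero_iff k p).1 h)
      omega
    have hodd : p % 2 = 1 := Nat.odd_iff.1 (hp.odd_of_ne_two (by omega))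
    have h2 : (2 : ZMod p) ≠ 0 := by exact_mod_cast hne 2 (by norm_num) (by norm_num)
    have h3 : (3 : ZMod p) ≠ 0 := by exact_mod_cast hne 3 (by norm_num) (by norm_num)
    exact (IsSumFourSquaresAvoiding.of_forall_le (s := ∅) h2 h3 (by simp)
      (fun n hn _ ↦ .of_small hp7 hodd hn) n (by simp)).exists_sum_sq hn
  · intro n hn h79
    exact_mod_cast (IsSumFourSquaresAvoiding.of_forall_le (p := 5) (s := {79}) (by decide) (by decide)
      (by simp) (fun n hn h ↦ .five_of_small hn (by simpa using h)) n
      (by simpa using h79)).exists_sum_sq hn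
end
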